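/- Let K and L be two algebraically closed fields (possibly of different characteristics), Q a finite quiver, and α a dimension vector. Then for every degree d ≥ 0, the K-dimension of the degree-d homogeneous component of SI_K(Q,α) = K[Rep_K(Q,α)]^{SL(α)} equals the L-dimension of the degree-d homogeneous component of SI_L(Q,α), and likewise for the invariant rings I_K(Q,α) = K[Rep_K(Q,α)]^{GL(α)} and I_L(Q,α). Equivalently, the Hilbert series of SI(Q,α) and of I(Q,α) are independent of the underlying algebraically closed field. -/

import Mathlib

open MvPolynomial Matrix

/-- Coordinate functions of a representation of a quiver with arrows `Q1`,
tail/head maps `ta ha : Q1 → Q0` and dimension vector `α`. -/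
def repCoords {K : Type} [Field K] {Q0 Q1 : Type} {ta ha : Q1 → Q0} {α : Q0 → ℕ}
    (v : (a : Q1) → Matrix (Fin (α (ha a))) (Fin (α (ta a))) K) :
    ((a : Q1) × (Fin (α (ha a)) × Fin (α (ta a)))) → K :=
  fun p => v p.1 p.2.1 p.2.2

/-- The ring of quiver invariants `I(Q,α) = K[Rep(Q,α)]^{GL(α)}`. -/
noncomputable def quiverInvariants (K : Type) [Field K] {Q0 Q1 : Type}
    (ta ha : Q1 → Q0) (α : Q0 → ℕ) :
    Subalgebra K (MvPolynomial ((a : Q1) × (Fin (α (ha a)) × Fin (α (ta a)))) K) :=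
  ⨅ (A : (i : Q0) → GeneralLinearGroup (Fin (α i)) K)
    (v : (a : Q1) → Matrix (Fin (α (ha a))) (Fin (α (ta a))) K),
      AlgHom.equalizer
        (aeval (repCoords fun a => (A (ha a)).val * v a * ((A (ta a))⁻¹).val))
        (aeval (repCoords v))

/-- The ring of quiver semi-invariants `SI(Q,α) = K[Rep(Q,α)]^{SL(α)}`. -/
noncomputable def quiverSemiInvariants (K : Type) [Field K] {Q0 Q1 : Type}
    (ta ha : Q1 → Q0) (α : Q0 → ℕ) :
    Subalgebra K (MvPolynomial ((a : Q1) × (Fin (α (ha a)) × Fin (α (ta a)))) K) :=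
  ⨅ (A : (i : Q0) → SpecialLinearGroup (Fin (α i)) K)
    (v : (a : Q1) → Matrix (Fin (α (ha a))) (Fin (α (ta a))) K),
      AlgHom.equalizer
        (aeval (repCoords fun a => (A (ha a)).val * v a * ((A (ta a))⁻¹).val))
        (aeval (repCoords v))

/-- The weight space `SI(Q,α)_σ` of semi-invariants of weight `σ : Q0 → ℤ`:
those `f` with `A · f = (∏ i, det (A i) ^ σ i) • f`, i.e.
`f(A⁻¹ · v) = (∏ i, det (A i) ^ σ i) * f(v)` for all `A ∈ GL(α)`. -/
noncomputable def quiverSemiInvariantsOfWeight (K : Type) [Field K] {Q0 Q1 : Type}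
    [Fintype Q0] (ta ha : Q1 → Q0) (α : Q0 → ℕ) (σ : Q0 → ℤ) :
    Submodule K (MvPolynomial ((a : Q1) × (Fin (α (ha a)) × Fin (α (ta a)))) K) where
  carrier := { f | ∀ (A : (i : Q0) → GeneralLinearGroup (Fin (α i)) K)
      (v : (a : Q1) → Matrix (Fin (α (ha a))) (Fin (α (ta a))) K),
      aeval (repCoords fun a => ((A (ha a))⁻¹).val * v a * (A (ta a)).val) f
        = (∏ i : Q0, ((A i).val.det) ^ (σ i)) * aeval (repCoords v) f }
  add_mem' := by
    intro f g hf hg A v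
    rw [map_add, map_add, hf A v, hg A v, mul_add]
  zero_mem' := by
    intro A v
    simp
  smul_mem' := by
    intro c f hf A v
    rw [_root_.map_smul, _root_.map_smul, hf A v, smul_eq_mul, smul_eq_mul]
    ring

/-- `IsQuiverPath ta ha x y l` : the list of arrows `l` is a directed path from
vertex `x` to vertex `y`. -/
def IsQuiverPath {Q0 Q1 : Type} (ta ha : Q1 → Q0) (x y : Q0) : List Q1 → Prop
  | [] => x = y
  | a :: l =>
      ta a = x ∧ List.Chain' (fun b c => ha b = ta c) (a :: l) ∧
        ha ((a :: l).getLast (List.cons_ne_nil a l)) = y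

/-- The number of directed paths from `x` to `y`. -/
noncomputable def numQuiverPaths {Q0 Q1 : Type} (ta ha : Q1 → Q0) (x y : Q0) : ℕ :=
  Nat.card { l : List Q1 // IsQuiverPath ta ha x y l }

/-- A quiver has no oriented cycles if there is no nonempty directed path from a
vertex to itself. -/
def HasNoOrientedCycles {Q0 Q1 : Type} (ta ha : Q1 → Q0) : Prop :=
  ∀ (x : Q0) (l : List Q1), l ≠ [] → ¬ IsQuiverPath ta ha x x l

/-!
Both dimensions are shown to equal numbers of exponent vectors whose definition does not mention the
field, only using that it is infinite.

The core case is an action of several independent special linear groups on polynomials, each acting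
on the rows of a block of variables. Invariance makes all rows of a block have the same degree, and
it forces the lexicographically leading exponent to satisfy a lattice word condition between
adjacent rows. As distinct leading exponents are linearly independent, the number of exponents
subject to these conditions bounds the dimension from above. For the lower bound, invariance is
imposed one row at a time: a polynomial invariant under the operations of the rows `j + 1, …, z` is
invariant under those of the row `j` as soon as the coefficients of its translate under one shear
vanish at certain exponents. Sweeping the excess of the last of these exponents' rows upwards, by
the combinatorial raising operators of crystals, injects these exponents into those lost by the
count at this step. So the upper bound is attained, block after block.

A quiver representation has base changes acting on both sides of the same matrices at once, which is
not of this form. Adding a loop `X i` at each vertex and substituting `adj (X (ha a)) * v a` for the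
matrix of the arrow `a` identifies the semi-invariants of a fixed multidegree with polynomials
invariant under independent base changes at the heads and at the tails of the arrows. These do form
independent blocks, namely of rows and of columns. Finally, a semi-invariant of a given multidegree
is multiplied by fixed powers of the determinants of a base change, so that the invariants of the
general linear groups are the semi-invariants in the multidegrees for which these powers cancel.
-/

namespace QuiverInvariants

section Weights

variable {σ τ Γ R : Type*}

lemma isWeightedHomogeneous_algHom [CommSemiring R] [AddCommMonoid Γ] {u : σ → Γ} {w : τ → Γ}
    {φ : MvPolynomial σ R →ₐ[R] MvPolynomial τ R}
    (hφ : ∀ s, IsWeightedHomogeneous w (φ (X s)) (u s)) {f : MvPolynomial σ R} {m : Γ}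
    (hf : IsWeightedHomogeneous u f m) : IsWeightedHomogeneous w (φ f) m := by
  induction hf using IsWeightedHomogeneous.induction_on with
  | zero => rw [map_zero]; exact isWeightedHomogeneous_zero R w m
  | add p q _ _ hp hq => rw [map_add]; exact hp.add hq
  | monomial μ r hμ =>
    rw [monomial_eq, map_mul, Finsupp.prod, map_prod, ← hμ, Finsupp.weight_apply, Finsupp.sum,
      ← algebraMap_eq, φ.commutes, algebraMap_eq]
    simp only [map_pow]
    exact (IsWeightedHomogeneous.prod _ _ _ fun s _ ↦ (hφ s).pow _).C_mul r

lemma weightedHomogeneousComponent_algHom [CommSemiring R] [AddCommMonoid Γ] {u : σ → Γ}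
    {w : τ → Γ} {φ : MvPolynomial σ R →ₐ[R] MvPolynomial τ R}
    (hφ : ∀ s, IsWeightedHomogeneous w (φ (X s)) (u s)) (f : MvPolynomial σ R) (m : Γ) :
    weightedHomogeneousComponent w m (φ f) = φ (weightedHomogeneousComponent u m f) := by
  rw [f.as_sum]
  simp only [map_sum]
  refine Finset.sum_congr rfl fun μ _ ↦ ?_
  have hμ : IsWeightedHomogeneous u (monomial μ (coeff μ f)) (Finsupp.weight u μ) :=
    isWeightedHomogeneous_monomial _ _ _ rfl
  have hφμ := isWeightedHomogeneous_algHom hφ hμ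
  by_cases hm : m = Finsupp.weight u μ
  · rw [hm, hμ.weightedHomogeneousComponent_same, hφμ.weightedHomogeneousComponent_same]
  · rw [hμ.weightedHomogeneousComponent_ne _ hm, hφμ.weightedHomogeneousComponent_ne _ hm,
      map_zero]

section Eval

variable {A : Type*} [CommSemiring R] [CommSemiring A] [Algebra R A] {f : MvPolynomial σ R}

lemma aeval_mul_of_isWeightedHomogeneous [AddCommMonoid Γ] {u : σ → Γ} {m : Γ}
    (hf : IsWeightedHomogeneous u f m) (χ : Multiplicative Γ →* A) (x : σ → A) :
    aeval (fun v ↦ χ (.ofAdd (u v)) * x v) f = χ (.ofAdd m) * aeval x f := by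
  induction hf using IsWeightedHomogeneous.induction_on with
  | zero => simp only [map_zero, mul_zero]
  | add p q _ _ hp hq => rw [map_add, hp, hq, map_add, mul_add]
  | monomial μ r hμ =>
    have hχ : χ (.ofAdd m) = ∏ v ∈ μ.support, χ (.ofAdd (u v)) ^ μ v := by
      simp only [← hμ, Finsupp.weight_apply, Finsupp.sum, ofAdd_sum, ofAdd_nsmul, map_prod, map_pow]
    simp only [aeval_monomial, Finsupp.prod, mul_pow, Finset.prod_mul_distrib, hχ]
    ring

lemma aeval_pow_mul_of_isWeightedHomogeneous {u : σ → ℕ} {m : ℕ} (hf : IsWeightedHomogeneous u f m)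
    (c : A) (x : σ → A) : aeval (fun v ↦ c ^ u v * x v) f = c ^ m * aeval x f :=
  aeval_mul_of_isWeightedHomogeneous hf (powersHom A c) x

end Eval

lemma isWeightedHomogeneous_pi_iff [CommSemiring R] {E : Type*} {Γ : E → Type*}
    [∀ e, AddCommMonoid (Γ e)] {u : σ → ∀ e, Γ e} {f : MvPolynomial σ R} {δ : ∀ e, Γ e} :
    IsWeightedHomogeneous u f δ ↔ ∀ e, IsWeightedHomogeneous (fun v ↦ u v e) f (δ e) := by
  have hweight (μ : σ →₀ ℕ) (e : E) :
      Finsupp.weight u μ e = Finsupp.weight (fun v ↦ u v e) μ := by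
    simp only [Finsupp.weight_apply, Finsupp.sum, Finset.sum_apply, Pi.smul_apply]
  refine ⟨fun h e μ hμ ↦ ?_, fun h μ hμ ↦ funext fun e ↦ ?_⟩
  · rw [← hweight, h hμ]
  · rw [hweight, h e hμ]

/-- The submodule of polynomials all of whose monomials have `w`-weight less than `m`. -/
noncomputable def weightLT (R : Type*) [CommSemiring R] (w : σ → ℕ) (m : ℕ) :
    Submodule R (MvPolynomial σ R) :=
  restrictSupport R {μ | Finsupp.weight w μ < m}

section WeightLT

variable {w : σ → ℕ} {m n l : ℕ}

lemma mem_weightLT [CommSemiring R] {f : MvPolynomial σ R} :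
    f ∈ weightLT R w m ↔ ∀ μ, coeff μ f ≠ 0 → Finsupp.weight w μ < m := by
  simp only [weightLT, mem_restrictSupport_iff, Set.subset_def, Finset.mem_coe, mem_support_iff,
    Set.mem_ofPred_eq]

lemma mem_weightLT_of_isWeightedHomogeneous [CommSemiring R] {f : MvPolynomial σ R}
    (hf : IsWeightedHomogeneous w f m) (h : m < n) : f ∈ weightLT R w n :=
  mem_weightLT.2 fun _ hμ ↦ (hf hμ).trans_lt h

lemma mul_mem_weightLT [CommSemiring R] {f g : MvPolynomial σ R} (hf : f ∈ weightLT R w m)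
    (hg : g ∈ weightLT R w n) (hl : m + n ≤ l + 1) : f * g ∈ weightLT R w l := by
  classical
  rw [mem_weightLT] at *
  intro μ hμ
  rw [coeff_mul] at hμ
  obtain ⟨p, hp, hne⟩ := Finset.exists_ne_zero_of_sum_ne_zero hμ
  rw [← Finset.HasAntidiagonal.mem_antidiagonal.1 hp, map_add]
  have := hf _ (left_ne_zero_of_mul hne)
  have := hg _ (right_ne_zero_of_mul hne)
  lia

lemma weightedHomogeneousComponent_eq_zero_of_mem_weightLT [CommSemiring R]
    {f : MvPolynomial σ R} (hf : f ∈ weightLT R w m) (h : m ≤ n) :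
    weightedHomogeneousComponent w n f = 0 :=
  weightedHomogeneousComponent_eq_zero' _ _ fun μ hμ ↦
    (((mem_weightLT.1 hf) μ (mem_support_iff.1 hμ)).trans_le h).ne

variable [CommRing R] {φ : MvPolynomial σ R →ₐ[R] MvPolynomial σ R}

lemma algHom_monomial_sub_mem_weightLT (hφ : ∀ s, φ (X s) - X s ∈ weightLT R w (w s))
    (μ : σ →₀ ℕ) : φ (monomial μ 1) - monomial μ 1 ∈ weightLT R w (Finsupp.weight w μ) := by
  have monomial_mem (μ : σ →₀ ℕ) :
      monomial μ (1 : R) ∈ weightLT R w (Finsupp.weight w μ + 1) :=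
    mem_weightLT_of_isWeightedHomogeneous (isWeightedHomogeneous_monomial _ _ _ rfl)
      (Nat.lt_succ_self _)
  have mul_step (μ ν : σ →₀ ℕ)
      (hμ : φ (monomial μ 1) - monomial μ 1 ∈ weightLT R w (Finsupp.weight w μ))
      (hν : φ (monomial ν 1) - monomial ν 1 ∈ weightLT R w (Finsupp.weight w ν)) :
      φ (monomial (μ + ν) 1) - monomial (μ + ν) 1 ∈ weightLT R w (Finsupp.weight w (μ + ν)) := by
    have hmul : monomial (μ + ν) (1 : R) = monomial μ 1 * monomial ν 1 := by
      rw [monomial_mul, one_mul]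
    have hexp : φ (monomial (μ + ν) 1) - monomial (μ + ν) (1 : R) =
        (φ (monomial μ 1) - monomial μ 1) * (φ (monomial ν 1) - monomial ν 1) +
        ((φ (monomial μ 1) - monomial μ 1) * monomial ν 1 +
        monomial μ 1 * (φ (monomial ν 1) - monomial ν 1)) := by
      rw [hmul, map_mul]; ring
    rw [hexp, map_add]
    exact add_mem (mul_mem_weightLT hμ hν (by lia))
      (add_mem (mul_mem_weightLT hμ (monomial_mem ν) (by lia))
        (mul_mem_weightLT (monomial_mem μ) hν (by lia)))
  induction μ using Finsupp.induction_linear with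
  | zero => simp
  | add μ ν hμ hν => exact mul_step μ ν hμ hν
  | single s n =>
    induction n with
    | zero => simp
    | succ n ih =>
      rw [Finsupp.single_add]
      refine mul_step _ _ ih ?_
      simpa [X, Finsupp.weight_single] using hφ s

lemma algHom_sub_mem_weightLT (hφ : ∀ s, φ (X s) - X s ∈ weightLT R w (w s))
    {f : MvPolynomial σ R} (hf : f ∈ weightLT R w (m + 1)) : φ f - f ∈ weightLT R w m := by
  rw [weightLT, restrictSupport_eq_span] at hf
  induction hf using Submodule.span_induction with
  | mem f hf =>
    obtain ⟨μ, hμ, rfl⟩ := hf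
    exact restrictSupport_mono _ (fun ν hν ↦ hν.trans_le (Nat.lt_succ_iff.1 hμ))
      (algHom_monomial_sub_mem_weightLT hφ μ)
  | zero => simp
  | add f g _ _ hf hg => rw [map_add, add_sub_add_comm]; exact add_mem hf hg
  | smul r f _ hf => rw [map_smul, ← smul_sub]; exact Submodule.smul_mem _ r hf

lemma weightedHomogeneousComponent_algHom_eq_self
    (hφ : ∀ s, φ (X s) - X s ∈ weightLT R w (w s)) {f : MvPolynomial σ R}
    (hf : f ∈ weightLT R w (m + 1)) :
    weightedHomogeneousComponent w m (φ f) = weightedHomogeneousComponent w m f := by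
  rw [← sub_eq_zero, ← map_sub]
  exact weightedHomogeneousComponent_eq_zero_of_mem_weightLT (algHom_sub_mem_weightLT hφ hf) le_rfl

end WeightLT

lemma coeff_aeval_C_mul_X [CommSemiring R] (χ : σ → R) (f : MvPolynomial σ R) (μ : σ →₀ ℕ) :
    coeff μ (aeval (fun v ↦ C (χ v) * X v : σ → MvPolynomial σ R) f) =
      coeff μ f * μ.prod fun v n ↦ χ v ^ n := by
  classical
  induction f using MvPolynomial.induction_on' with
  | add p q hp hq => rw [map_add, coeff_add, hp, hq, coeff_add, add_mul]
  | monomial ν a =>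
    have hν : (ν.prod fun v n ↦ (C (χ v) * X v : MvPolynomial σ R) ^ n) =
        C (ν.prod fun v n ↦ χ v ^ n) * monomial ν 1 := by
      rw [monomial_eq]
      simp only [Finsupp.prod, mul_pow, Finset.prod_mul_distrib, map_prod, C_1, one_mul, map_pow]
    rw [aeval_monomial, hν, algebraMap_eq, coeff_C_mul, coeff_C_mul, coeff_monomial,
      coeff_monomial]
    split_ifs with h
    · rw [h]; ring
    · simp

variable [CommRing R] [IsDomain R] [Infinite R]

lemma eq_of_forall_pow_eq_pow {m n : ℕ} (h : ∀ c : R, c ≠ 0 → c ^ m = c ^ n) :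
    m = n := by
  have hX : (Polynomial.X ^ (m + 1) : Polynomial R) = Polynomial.X ^ (n + 1) := by
    refine Polynomial.funext fun c ↦ ?_
    rcases eq_or_ne c 0 with rfl | hc
    · simp
    · simp [pow_succ, h c hc]
  simpa using congrArg Polynomial.natDegree hX

lemma prod_pow_eq_of_eval_mul_eq {f : MvPolynomial σ R} {χ : σ → R} {κ : R}
    (h : ∀ x : σ → R, eval (fun v ↦ χ v * x v) f = κ * eval x f) {μ : σ →₀ ℕ}
    (hμ : coeff μ f ≠ 0) : (μ.prod fun v n ↦ χ v ^ n) = κ := by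
  have hf : aeval (fun v ↦ C (χ v) * X v : σ → MvPolynomial σ R) f = C κ * f := by
    refine MvPolynomial.funext fun x ↦ ?_
    rw [map_mul, eval_C, ← h x, ← coe_aeval_eq_eval]
    change (aeval x) _ = _
    rw [← AlgHom.comp_apply, comp_aeval, ← coe_aeval_eq_eval]
    simp
  have hcoeff := coeff_aeval_C_mul_X χ f μ
  rw [hf, coeff_C_mul, mul_comm] at hcoeff
  exact (mul_left_cancel₀ hμ hcoeff).symm

lemma isWeightedHomogeneous_of_eval_pow_mul_eq {f : MvPolynomial σ R} {u : σ → ℕ} {m : ℕ}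
    (h : ∀ c : R, c ≠ 0 → ∀ x : σ → R, eval (fun v ↦ c ^ u v * x v) f = c ^ m * eval x f) :
    IsWeightedHomogeneous u f m := by
  intro μ hμ
  refine eq_of_forall_pow_eq_pow (R := R) fun c hc ↦ ?_
  rw [← prod_pow_eq_of_eval_mul_eq (h c hc) hμ, Finsupp.weight_apply, Finsupp.sum,
    Finsupp.prod, ← Finset.prod_pow_eq_pow_sum]
  refine Finset.prod_congr rfl fun i _ ↦ ?_
  rw [smul_eq_mul, mul_comm, pow_mul]

end Weights

lemma finrank_le_finrank_add_card {K E ι : Type*} [Field K] [AddCommGroup E] [Module K E]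
    {V V' : Submodule K E} [FiniteDimensional K V] [FiniteDimensional K V'] (S : Finset ι)
    (T : ι → E →ₗ[K] K) (h : ∀ v ∈ V, (∀ i ∈ S, T i v = 0) → v ∈ V') :
    Module.finrank K V ≤ Module.finrank K V' + S.card := by
  let T' : V →ₗ[K] S → K := LinearMap.pi fun i ↦ T i ∘ₗ V.subtype
  have hrange : Module.finrank K (LinearMap.range T') ≤ S.card := by
    simpa using Submodule.finrank_le (LinearMap.range T')
  have hker : (LinearMap.ker T').map V.subtype ≤ V' := by
    rintro _ ⟨v, hv, rfl⟩
    exact h v v.2 fun i hi ↦ congrFun (LinearMap.mem_ker.1 hv) ⟨i, hi⟩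
  have hker := Submodule.finrank_mono hker
  rw [Submodule.finrank_map_subtype_eq] at hker
  have := LinearMap.finrank_range_add_finrank_ker T'
  lia

lemma finrank_le_card_of_exists_coeff_ne_zero {σ K : Type*} [Field K]
    {W : Submodule K (MvPolynomial σ K)} {Λ : Finset (σ →₀ ℕ)}
    (h : ∀ f ∈ W, f ≠ 0 → ∃ μ ∈ Λ, coeff μ f ≠ 0) :
    FiniteDimensional K W ∧ Module.finrank K W ≤ Λ.card := by
  let coeffs : W →ₗ[K] (Λ → K) := LinearMap.pi fun μ ↦ (lcoeff K (μ : σ →₀ ℕ)).comp W.subtype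
  have hinj : Function.Injective coeffs := by
    rw [← LinearMap.ker_eq_bot, LinearMap.ker_eq_bot']
    rintro ⟨f, hf⟩ h0
    by_contra hne
    obtain ⟨μ, hμ, hc⟩ := h f hf fun h ↦ hne (by simp [h])
    exact hc (congrFun h0 ⟨μ, hμ⟩)
  refine ⟨.of_injective coeffs hinj, ?_⟩
  simpa using LinearMap.finrank_le_finrank_of_injective hinj

section Shear

variable {σ ι : Type*} [DecidableEq σ]

/-- The weight counting the variables `x c`, `c ∈ s`. When `x` lists a row or a column of an array
of variables, the weight of a monomial is its total exponent in that row or column. -/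
def content (x : ι → σ) (s : Finset ι) (v : σ) : ℕ := ∑ c ∈ s, if v = x c then 1 else 0

lemma weight_content (x : ι → σ) (s : Finset ι) (μ : σ →₀ ℕ) :
    Finsupp.weight (content x s) μ = ∑ c ∈ s, μ (x c) := by
  induction μ using Finsupp.induction_linear with
  | zero => simp
  | add f g hf hg => simp only [map_add, hf, hg, Finsupp.add_apply, Finset.sum_add_distrib]
  | single v n =>
    simp only [content, Finsupp.weight_single, Finsupp.single_apply, smul_eq_mul, Finset.mul_sum,
      mul_ite, mul_one, mul_zero]

lemma content_apply_self {x : ι → σ} (hx : x.Injective) {s : Finset ι} {c : ι} (hc : c ∈ s) :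
    content x s (x c) = 1 := by
  classical simp [content, hx.eq_iff, hc]

lemma content_eq_zero {x : ι → σ} {s : Finset ι} {v : σ} (h : ∀ c ∈ s, v ≠ x c) :
    content x s v = 0 :=
  Finset.sum_eq_zero fun c hc ↦ if_neg (h c hc)

variable (R : Type*) [CommRing R]

/-- The substitution `x c ↦ x c + y c` for `c ∈ s`, fixing the other variables. When `x` and `y`
list two rows or columns of an array of variables, this is the action of a transvection. -/
noncomputable def shear (x y : ι → σ) (s : Finset ι) : MvPolynomial σ R →ₐ[R] MvPolynomial σ R :=
  aeval fun v ↦ X v + ∑ c ∈ s, if v = x c then X (y c) else 0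

variable {R} {x y : ι → σ} {s : Finset ι}

lemma shear_X (x y : ι → σ) (s : Finset ι) (v : σ) :
    shear R x y s (X v) = X v + ∑ c ∈ s, if v = x c then X (y c) else 0 := by
  simp [shear]

lemma shear_X_apply (hx : x.Injective) {c : ι} (hc : c ∈ s) :
    shear R x y s (X (x c)) = X (x c) + X (y c) := by
  classical simp [shear_X, hx.eq_iff, hc]

lemma shear_X_of_ne {v : σ} (h : ∀ c ∈ s, v ≠ x c) : shear R x y s (X v) = X v := by
  rw [shear_X, Finset.sum_eq_zero fun c hc ↦ if_neg (h c hc), add_zero]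

lemma eval_shear (x y : ι → σ) (s : Finset ι) (w : σ → R) (f : MvPolynomial σ R) :
    eval w (shear R x y s f) = eval (fun v ↦ w v + ∑ c ∈ s, if v = x c then w (y c) else 0) f := by
  rw [shear, ← coe_aeval_eq_eval, ← coe_aeval_eq_eval]
  change aeval w (aeval _ f) = aeval _ f
  rw [← AlgHom.comp_apply, comp_aeval]
  congr 2
  funext v
  simp [apply_ite (eval w)]

lemma isWeightedHomogeneous_shear_X {Γ : Type*} [AddCommMonoid Γ] {u : σ → Γ}
    (h : ∀ c ∈ s, u (x c) = u (y c)) (v : σ) :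
    IsWeightedHomogeneous u (shear R x y s (X v)) (u v) := by
  rw [shear_X]
  refine (isWeightedHomogeneous_X _ _ _).add (IsWeightedHomogeneous.sum _ _ _ fun c hc ↦ ?_)
  split_ifs with hv
  · rw [hv, h c hc]; exact isWeightedHomogeneous_X _ _ _
  · exact isWeightedHomogeneous_zero _ _ _

lemma shear_X_sub_mem_weightLT {u : σ → ℕ} (h : ∀ c ∈ s, u (y c) < u (x c)) (v : σ) :
    shear R x y s (X v) - X v ∈ weightLT R u (u v) := by
  rw [shear_X, add_sub_cancel_left]
  refine Submodule.sum_mem _ fun c hc ↦ ?_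
  split_ifs with hv
  · rw [hv]; exact mem_weightLT_of_isWeightedHomogeneous (isWeightedHomogeneous_X _ _ _) (h c hc)
  · exact zero_mem _

/-- The point `w` moved by the one-parameter transvection `y c ↦ y c + T • x c`, `c ∈ s`,
opposite to `shear R x y s`, as a family of polynomials in the parameter `T`. -/
noncomputable def oppositeShearOrbit (x y : ι → σ) (s : Finset ι) (w : σ → R) (v : σ) :
    Polynomial R :=
  Polynomial.C (w v) + Polynomial.X * ∑ c ∈ s, if v = y c then Polynomial.C (w (x c)) else 0

lemma oppositeShearOrbit_apply (hy : y.Injective) {c : ι} (hc : c ∈ s) (w : σ → R) :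
    oppositeShearOrbit x y s w (y c) =
      Polynomial.C (w (x c)) * Polynomial.X + Polynomial.C (w (y c)) := by
  classical
  simp only [oppositeShearOrbit, hy.eq_iff, Finset.sum_ite_eq, if_pos hc]
  ring

lemma oppositeShearOrbit_of_ne {v : σ} (h : ∀ c ∈ s, v ≠ y c) (w : σ → R) :
    oppositeShearOrbit x y s w v = Polynomial.C (w v) := by
  rw [oppositeShearOrbit, Finset.sum_eq_zero fun c hc ↦ if_neg (h c hc), mul_zero, add_zero]

lemma eval_aeval_oppositeShearOrbit (x y : ι → σ) (s : Finset ι) (w : σ → R)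
    (f : MvPolynomial σ R) (t : R) :
    Polynomial.eval t (aeval (oppositeShearOrbit x y s w) f) =
      eval (fun v ↦ w v + t * ∑ c ∈ s, if v = y c then w (x c) else 0) f := by
  have hcomp : Polynomial.eval t (aeval (oppositeShearOrbit x y s w) f) =
      (Polynomial.aeval t).comp (aeval (oppositeShearOrbit x y s w)) f := by
    rw [AlgHom.comp_apply, Polynomial.coe_aeval_eq_eval]
  rw [hcomp, comp_aeval, ← coe_aeval_eq_eval]
  change aeval _ f = aeval _ f
  congr 2
  funext v
  simp [oppositeShearOrbit, Polynomial.eval_finsetSum, apply_ite (Polynomial.eval t)]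

omit [DecidableEq σ] in
lemma natDegree_aeval_le_of_isWeightedHomogeneous {Θ : σ → Polynomial R} {u : σ → ℕ}
    (hΘ : ∀ v, (Θ v).natDegree ≤ u v) {f : MvPolynomial σ R} {B : ℕ}
    (hf : IsWeightedHomogeneous u f B) : (aeval Θ f).natDegree ≤ B := by
  rw [aeval_def, eval₂_eq]
  refine Polynomial.natDegree_sum_le_of_forall_le _ _ fun μ hμ ↦ ?_
  refine (Polynomial.natDegree_C_mul_le _ _).trans ((Polynomial.natDegree_prod_le _ _).trans ?_)
  rw [← hf (mem_support_iff.1 hμ), Finsupp.weight_apply, Finsupp.sum]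
  exact Finset.sum_le_sum fun i _ ↦
    Polynomial.natDegree_pow_le.trans (Nat.mul_le_mul_left _ (hΘ i))

/- On a pair `(x c, y c)` with values `(a, b)` the scaled orbit is `(-T a, b + T a)`: the sum of the
two coordinates no longer involves `T`. -/
lemma natDegree_aeval_shear_X_le (hx : x.Injective) (hy : y.Injective) (hxy : ∀ i j, x i ≠ y j)
    (w : σ → R) (v : σ) :
    (aeval (fun v ↦ (-Polynomial.X) ^ content x s v * oppositeShearOrbit x y s w v)
      (shear R x y s (X v))).natDegree ≤ content y s v := by
  have content_y (c : ι) : content x s (y c) = 0 := content_eq_zero fun i _ ↦ (hxy i c).symm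
  by_cases hvx : ∃ c ∈ s, v = x c
  · obtain ⟨c, hc, rfl⟩ := hvx
    rw [shear_X_apply hx hc, map_add, aeval_X, aeval_X, content_apply_self hx hc, content_y,
      oppositeShearOrbit_of_ne (fun i _ ↦ hxy c i), oppositeShearOrbit_apply hy hc, pow_one,
      pow_zero, one_mul]
    have hcancel : -Polynomial.X * Polynomial.C (w (x c)) +
        (Polynomial.C (w (x c)) * Polynomial.X + Polynomial.C (w (y c))) =
        Polynomial.C (w (y c)) := by ring
    rw [hcancel, Polynomial.natDegree_C]
    exact Nat.zero_le _
  push Not at hvx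
  rw [shear_X_of_ne hvx, aeval_X, content_eq_zero hvx, pow_zero, one_mul]
  by_cases hvy : ∃ c ∈ s, v = y c
  · obtain ⟨c, hc, rfl⟩ := hvy
    rw [oppositeShearOrbit_apply hy hc, content_apply_self hy hc]
    exact Polynomial.natDegree_linear_le
  · push Not at hvy
    rw [oppositeShearOrbit_of_ne hvy, Polynomial.natDegree_C]
    exact Nat.zero_le _

lemma natDegree_pow_mul_aeval_oppositeShearOrbit_le (hx : x.Injective) (hy : y.Injective)
    (hxy : ∀ i j, x i ≠ y j) {f : MvPolynomial σ R} {A B : ℕ} (hf : shear R x y s f = f)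
    (hA : IsWeightedHomogeneous (content x s) f A) (hB : IsWeightedHomogeneous (content y s) f B)
    (w : σ → R) :
    ((-Polynomial.X) ^ A * aeval (oppositeShearOrbit x y s w) f).natDegree ≤ B := by
  rw [← aeval_pow_mul_of_isWeightedHomogeneous hA]
  conv_lhs => rw [← hf]
  rw [shear, ← AlgHom.comp_apply, comp_aeval]
  refine natDegree_aeval_le_of_isWeightedHomogeneous (fun v ↦ ?_) hB
  rw [← shear_X]
  exact natDegree_aeval_shear_X_le hx hy hxy w v

variable [IsDomain R]

lemma add_natDegree_aeval_oppositeShearOrbit_le (hx : x.Injective) (hy : y.Injective)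
    (hxy : ∀ i j, x i ≠ y j) {f : MvPolynomial σ R} {A B : ℕ} (hf : shear R x y s f = f)
    (hA : IsWeightedHomogeneous (content x s) f A) (hB : IsWeightedHomogeneous (content y s) f B)
    {w : σ → R} (h0 : aeval (oppositeShearOrbit x y s w) f ≠ 0) :
    A + (aeval (oppositeShearOrbit x y s w) f).natDegree ≤ B := by
  have hdeg := natDegree_pow_mul_aeval_oppositeShearOrbit_le hx hy hxy hf hA hB w
  rwa [Polynomial.natDegree_mul (pow_ne_zero _ (neg_ne_zero.2 Polynomial.X_ne_zero)) h0,
    Polynomial.natDegree_pow, Polynomial.natDegree_neg, Polynomial.natDegree_X, mul_one] at hdeg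

variable [Infinite R]

lemma shear_swap_eq_self (hx : x.Injective) (hy : y.Injective) (hxy : ∀ i j, x i ≠ y j)
    {f : MvPolynomial σ R} {A : ℕ} (hf : shear R x y s f = f)
    (hA : IsWeightedHomogeneous (content x s) f A) (hB : IsWeightedHomogeneous (content y s) f A) :
    shear R y x s f = f := by
  refine MvPolynomial.funext fun w ↦ ?_
  have hconst : (aeval (oppositeShearOrbit x y s w) f).natDegree ≤ 0 := by
    by_cases h0 : aeval (oppositeShearOrbit x y s w) f = 0
    · simp [h0]
    · have := add_natDegree_aeval_oppositeShearOrbit_le hx hy hxy hf hA hB h0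
      lia
  have at_one := eval_aeval_oppositeShearOrbit x y s w f 1
  have at_zero := eval_aeval_oppositeShearOrbit x y s w f 0
  rw [Polynomial.eq_C_of_natDegree_le_zero hconst, Polynomial.eval_C] at at_one at_zero
  simp only [one_mul, zero_mul, add_zero] at at_one at_zero
  rw [eval_shear, ← at_one, at_zero]

lemma add_le_of_X_pow_dvd (hx : x.Injective) (hy : y.Injective) (hxy : ∀ i j, x i ≠ y j)
    {f : MvPolynomial σ R} {A B e : ℕ} (hf : shear R x y s f = f)
    (hA : IsWeightedHomogeneous (content x s) f A) (hB : IsWeightedHomogeneous (content y s) f B)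
    (h0 : f ≠ 0) {c : ι} (hc : c ∈ s) (hdvd : X (y c) ^ e ∣ f) : A + e ≤ B := by
  obtain ⟨g, rfl⟩ := hdvd
  obtain ⟨w, hw⟩ : ∃ w, eval w (g * X (x c)) ≠ 0 := by
    by_contra! hzero
    exact mul_ne_zero (right_ne_zero_of_mul h0) (X_ne_zero (x c))
      (MvPolynomial.funext fun w ↦ by rw [hzero w, map_zero])
  rw [map_mul, eval_X] at hw
  have hg : aeval (oppositeShearOrbit x y s w) g ≠ 0 := fun hg ↦ hw <| by
    have := eval_aeval_oppositeShearOrbit x y s w g 0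
    simp only [hg, zero_mul, add_zero, Polynomial.eval_zero] at this
    rw [← this, zero_mul]
  have hdeg : (oppositeShearOrbit x y s w (y c)).natDegree = 1 := by
    rw [oppositeShearOrbit_apply hy hc, Polynomial.natDegree_linear (right_ne_zero_of_mul hw)]
  have hyc : oppositeShearOrbit x y s w (y c) ≠ 0 := fun h ↦ by simp [h] at hdeg
  have hfactor : aeval (oppositeShearOrbit x y s w) (X (y c) ^ e * g) =
      oppositeShearOrbit x y s w (y c) ^ e * aeval (oppositeShearOrbit x y s w) g := by
    rw [map_mul, map_pow, aeval_X]
  have hle := add_natDegree_aeval_oppositeShearOrbit_le hx hy hxy hf hA hB (w := w) <| by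
    rw [hfactor]; exact mul_ne_zero (pow_ne_zero _ hyc) hg
  rw [hfactor, Polynomial.natDegree_mul (pow_ne_zero _ hyc) hg, Polynomial.natDegree_pow, hdeg]
    at hle
  lia

end Shear

section LeadingExponents

variable {σ : Type*} [LinearOrder σ] {R : Type*}

/-- `l` is the lexicographically largest exponent of `f`, smaller variables weighing more.
(`MonomialOrder.lex` would need `σ` to be well-founded for `>`.) -/
def IsLeadExponent [CommSemiring R] (f : MvPolynomial σ R) (l : σ →₀ ℕ) : Prop :=
  coeff l f ≠ 0 ∧ ∀ μ, coeff μ f ≠ 0 → toLex μ ≤ toLex l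

lemma exists_isLeadExponent [CommSemiring R] {f : MvPolynomial σ R} (hf : f ≠ 0) :
    ∃ l, IsLeadExponent f l := by
  obtain ⟨l, hl, hmax⟩ := f.support.exists_max_image toLex (support_nonempty.2 hf)
  exact ⟨l, mem_support_iff.1 hl, fun μ hμ ↦ hmax μ (mem_support_iff.2 hμ)⟩

omit [LinearOrder σ] in
lemma X_pow_dvd_of_forall_le [CommSemiring R] {a : σ} {e : ℕ} {f : MvPolynomial σ R}
    (h : ∀ μ, coeff μ f ≠ 0 → e ≤ μ a) : X a ^ e ∣ f := by
  rw [f.as_sum]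
  refine Finset.dvd_sum fun μ hμ ↦ ⟨monomial (μ - Finsupp.single a e) (coeff μ f), ?_⟩
  rw [X_pow_eq_monomial, monomial_mul, one_mul,
    add_tsub_cancel_of_le (Finsupp.single_le_iff.2 (h μ (mem_support_iff.1 hμ)))]

omit [LinearOrder σ] in
lemma coeff_ne_zero_of_weightedHomogeneousComponent [CommSemiring R] {Γ : Type*} [AddCommMonoid Γ]
    {u : σ → Γ} {f : MvPolynomial σ R} {m : Γ} {μ : σ →₀ ℕ}
    (h : coeff μ (weightedHomogeneousComponent u m f) ≠ 0) :
    coeff μ f ≠ 0 ∧ Finsupp.weight u μ = m := by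
  classical
  rw [coeff_weightedHomogeneousComponent] at h
  exact (ite_ne_right_iff.1 h).symm

lemma isLeadExponent_weightedHomogeneousComponent [CommSemiring R] {Γ : Type*} [AddCommMonoid Γ]
    {f : MvPolynomial σ R} {l : σ →₀ ℕ} (h : IsLeadExponent f l) (u : σ → Γ) :
    IsLeadExponent (weightedHomogeneousComponent u (Finsupp.weight u l) f) l := by
  classical
  refine ⟨?_, fun μ hμ ↦ h.2 μ (coeff_ne_zero_of_weightedHomogeneousComponent hμ).1⟩
  rw [coeff_weightedHomogeneousComponent, if_pos rfl]
  exact h.1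

section Shear

variable {ι : Type*} [DecidableEq ι] {x y : ι → σ} {s : Finset ι} {c : ι}

lemma shear_insert [CommRing R] (hxy : ∀ i j, x i ≠ y j) (hc : c ∉ s) (f : MvPolynomial σ R) :
    shear R x y (insert c s) f = shear R x y s (shear R x y {c} f) := by
  rw [← AlgHom.comp_apply]
  congr 1
  refine MvPolynomial.algHom_ext fun v ↦ ?_
  have fix_y : shear R x y s (if v = x c then X (y c) else 0) =
      if v = x c then X (y c) else 0 := by
    split_ifs
    · exact shear_X_of_ne fun i _ ↦ (hxy i c).symm
    · rw [map_zero]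
  rw [AlgHom.comp_apply, shear_X, shear_X, map_add, Finset.sum_singleton, Finset.sum_insert hc,
    shear_X, fix_y]
  ring

lemma shear_weightedHomogeneousComponent_of_shear_insert [CommRing R] (hx : x.Injective)
    (hxy : ∀ i j, x i ≠ y j) (hc : c ∉ s) {f : MvPolynomial σ R}
    (hf : shear R x y (insert c s) f = f) {m : ℕ} (hm : ∀ μ, coeff μ f ≠ 0 → μ (x c) ≤ m) :
    shear R x y s (weightedHomogeneousComponent (content x {c}) m f) =
      weightedHomogeneousComponent (content x {c}) m f := by
  have content_y (i : ι) : content x {c} (y i) = 0 := content_eq_zero fun j _ ↦ (hxy j i).symm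
  have top_component : weightedHomogeneousComponent (content x {c}) m (shear R x y {c} f) =
      weightedHomogeneousComponent (content x {c}) m f := by
    refine weightedHomogeneousComponent_algHom_eq_self
      (shear_X_sub_mem_weightLT fun i hi ↦ ?_) (mem_weightLT.2 fun μ hμ ↦ ?_)
    · rw [content_apply_self hx hi, content_y]
      exact one_pos
    · rw [weight_content, Finset.sum_singleton]
      exact Nat.lt_succ_of_le (hm μ hμ)
  rw [← top_component, ← weightedHomogeneousComponent_algHom, ← shear_insert hxy hc, hf,
    top_component]
  refine isWeightedHomogeneous_shear_X fun i hi ↦ ?_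
  rw [content_y, content_eq_zero]
  rintro j hj h
  rw [Finset.mem_singleton.1 hj] at h
  exact hc (hx h ▸ hi)

/-- The exponents `μ` and `l` agree outside the variables `x i, y i` (`i ∈ s`), have the same sum
on each pair `{x i, y i}`, and have the same total degree in the `x i`. -/
structure SamePairContent (x y : ι → σ) (s : Finset ι) (μ l : σ →₀ ℕ) : Prop where
  apply_eq : ∀ v, (∀ i ∈ s, v ≠ x i ∧ v ≠ y i) → μ v = l v
  add_eq : ∀ i ∈ s, μ (x i) + μ (y i) = l (x i) + l (y i)
  sum_eq : ∑ i ∈ s, μ (x i) = ∑ i ∈ s, l (x i)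

namespace SamePairContent

variable {μ l : σ →₀ ℕ}

omit [LinearOrder σ] [DecidableEq ι] in
lemma sum_right_eq (h : SamePairContent x y s μ l) : ∑ i ∈ s, μ (y i) = ∑ i ∈ s, l (y i) := by
  have hadd := Finset.sum_congr rfl h.add_eq
  rw [Finset.sum_add_distrib, Finset.sum_add_distrib, h.sum_eq] at hadd
  exact Nat.add_left_cancel hadd

omit [LinearOrder σ] in
lemma of_insert (hc : c ∉ s) (h : SamePairContent x y (insert c s) μ l) (hl : μ (x c) = l (x c)) :
    SamePairContent x y s μ l where
  apply_eq v hv := by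
    have hpair := h.add_eq c (Finset.mem_insert_self c s)
    rcases eq_or_ne v (x c) with rfl | hvx
    · exact hl
    rcases eq_or_ne v (y c) with rfl | hvy
    · lia
    exact h.apply_eq v (Finset.forall_mem_insert _ _ _ |>.2 ⟨⟨hvx, hvy⟩, hv⟩)
  add_eq i hi := h.add_eq i (Finset.mem_insert_of_mem hi)
  sum_eq := by
    have := h.sum_eq
    rw [Finset.sum_insert hc, Finset.sum_insert hc] at this
    lia

end SamePairContent

end Shear

variable {x y : ℕ → σ} {M : ℕ} {l : σ →₀ ℕ}

lemma IsLeadExponent.apply_le_of_samePairContent [CommSemiring R] {f : MvPolynomial σ R}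
    (hl : IsLeadExponent f l) (hx : StrictMono x) (hlt : ∀ i j, i ≤ j → x i < y j) {c : ℕ}
    {μ : σ →₀ ℕ} (hμ : coeff μ f ≠ 0) (hpair : SamePairContent x y (Finset.Ico c M) μ l) :
    μ (x c) ≤ l (x c) := by
  by_contra! hcon
  refine absurd (hl.2 μ hμ) (not_le.2 (Finsupp.Lex.lt_iff.2 ⟨x c, fun v hv ↦ ?_, hcon⟩))
  refine (hpair.apply_eq v fun i hi ↦ ?_).symm
  have hci := (Finset.mem_Ico.1 hi).1
  exact ⟨(hv.trans_le (hx.monotone hci)).ne, (hv.trans (hlt c i hci)).ne⟩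

variable [CommRing R] [IsDomain R] [Infinite R]

lemma IsLeadExponent.sum_le_of_samePairContent {f : MvPolynomial σ R} (hl : IsLeadExponent f l)
    (hx : StrictMono x) (hy : y.Injective) (hxy : ∀ i j, x i ≠ y j)
    (hlt : ∀ i j, i ≤ j → x i < y j) {c : ℕ} (hc : c < M)
    (hf : shear R x y (Finset.Ico c M) f = f)
    (hpair : ∀ μ, coeff μ f ≠ 0 → SamePairContent x y (Finset.Ico c M) μ l) :
    ∑ i ∈ Finset.Ico c M, l (x i) ≤ ∑ i ∈ Finset.Ico (c + 1) M, l (y i) := by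
  have hcM : c ∈ Finset.Ico c M := Finset.left_mem_Ico.2 hc
  have hdvd : X (y c) ^ l (y c) ∣ f := X_pow_dvd_of_forall_le fun μ hμ ↦ by
    have := hl.apply_le_of_samePairContent hx hlt hμ (hpair μ hμ)
    have := (hpair μ hμ).add_eq c hcM
    lia
  have hle := add_le_of_X_pow_dvd hx.injective hy hxy hf
    (fun μ hμ ↦ (weight_content x _ μ).trans (hpair μ hμ).sum_eq)
    (fun μ hμ ↦ (weight_content y _ μ).trans (hpair μ hμ).sum_right_eq)
    (ne_zero_iff.2 ⟨l, hl.1⟩) hcM hdvd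
  rw [Finset.sum_eq_sum_Ico_succ_bot hc fun i ↦ l (y i)] at hle
  lia

/- The smallest variable `x c` is peeled off by passing to the top component in `x c`, which has the
same leading exponent and is invariant under the shear of the remaining pairs. -/
lemma IsLeadExponent.sum_Ico_le {c : ℕ} (hx : StrictMono x) (hy : y.Injective)
    (hxy : ∀ i j, x i ≠ y j) (hlt : ∀ i j, i ≤ j → x i < y j) {f : MvPolynomial σ R}
    (hl : IsLeadExponent f l) (hf : shear R x y (Finset.Ico c M) f = f)
    (hpair : ∀ μ, coeff μ f ≠ 0 → SamePairContent x y (Finset.Ico c M) μ l) {k : ℕ} (hck : c ≤ k)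
    (hk : k < M) : ∑ i ∈ Finset.Ico k M, l (x i) ≤ ∑ i ∈ Finset.Ico (k + 1) M, l (y i) := by
  induction hck using Nat.decreasingInduction generalizing f with
  | self => exact hl.sum_le_of_samePairContent hx hy hxy hlt hk hf hpair
  | of_succ c hck ih =>
    have hcM : Finset.Ico c M = insert c (Finset.Ico (c + 1) M) :=
      (Finset.insert_Ico_add_one_left_eq_Ico (hck.trans hk)).symm
    have hc : c ∉ Finset.Ico (c + 1) M := by simp
    have hle (μ : σ →₀ ℕ) (hμ : coeff μ f ≠ 0) : μ (x c) ≤ l (x c) :=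
      hl.apply_le_of_samePairContent hx hlt hμ (hpair μ hμ)
    have hweight (μ : σ →₀ ℕ) : Finsupp.weight (content x {c}) μ = μ (x c) := by
      rw [weight_content, Finset.sum_singleton]
    refine ih (f := weightedHomogeneousComponent (content x {c}) (l (x c)) f)
      (hweight l ▸ isLeadExponent_weightedHomogeneousComponent hl _)
      (shear_weightedHomogeneousComponent_of_shear_insert hx.injective hxy hc (hcM ▸ hf) hle)
      fun μ hμ ↦ ?_
    obtain ⟨hμf, hμc⟩ := coeff_ne_zero_of_weightedHomogeneousComponent hμ
    exact .of_insert hc (hcM ▸ hpair μ hμf) (hweight μ ▸ hμc)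

end LeadingExponents

section Low

variable {σ : Type*}

/-- The exponents of `l` along the sequence of variables `x`, summed up to (excluding) `c`. -/
def prefixSum (x : ℕ → σ) (l : σ →₀ ℕ) (c : ℕ) : ℕ := ∑ i ∈ Finset.range c, l (x i)

/-- A pair of rows with prefix sums `A` and `B` and length `M` satisfies the lattice word condition
which characterises the leading exponents of shear invariants: after every `c`, the rest
`A M - A c` of the first row is at most the rest `B M - B (c + 1)` of the second.
This is written without subtraction. -/
def IsLow (A B : ℕ → ℕ) (M : ℕ) : Prop := ∀ c < M, A M + B (c + 1) ≤ B M + A c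

/-- The multi-weight recording the degree in each finite set of variables that contains either both
or none of `x i` and `y i` for each `i ∈ s`. -/
noncomputable def saturatedContent {ι : Type*} [DecidableEq σ] (x y : ι → σ) (s : Finset ι)
    (v : σ) (B : {B : Finset σ // ∀ i ∈ s, x i ∈ B ↔ y i ∈ B}) : ℕ :=
  content id B.1 v

lemma weight_saturatedContent {ι : Type*} [DecidableEq σ] (x y : ι → σ) (s : Finset ι) (μ : σ →₀ ℕ)
    (B : {B : Finset σ // ∀ i ∈ s, x i ∈ B ↔ y i ∈ B}) :
    Finsupp.weight (saturatedContent x y s) μ B = ∑ v ∈ B.1, μ v := by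
  rw [Finsupp.weight_apply, Finsupp.sum, Finset.sum_apply]
  exact weight_content id B.1 μ

lemma samePairContent_of_weight_saturatedContent_eq {ι : Type*} [LinearOrder σ] {x y : ι → σ}
    (hx : x.Injective) (hy : y.Injective) (hxy : ∀ i j, x i ≠ y j) {s : Finset ι} {μ l : σ →₀ ℕ}
    (h : Finsupp.weight (saturatedContent x y s) μ = Finsupp.weight (saturatedContent x y s) l)
    (hsum : ∑ i ∈ s, μ (x i) = ∑ i ∈ s, l (x i)) : SamePairContent x y s μ l := by
  have hB (B : Finset σ) (hB : ∀ i ∈ s, x i ∈ B ↔ y i ∈ B) : ∑ v ∈ B, μ v = ∑ v ∈ B, l v := by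
    simpa only [weight_saturatedContent] using congrFun h ⟨B, hB⟩
  refine ⟨fun v hv ↦ ?_, fun i _ ↦ ?_, hsum⟩
  · simpa using hB {v} fun i hi ↦ by simp [(hv i hi).1.symm, (hv i hi).2.symm]
  · simpa [Finset.sum_pair (hxy i i)] using hB {x i, y i} fun j _ ↦ by
      simp [hx.eq_iff, hy.eq_iff, hxy j i, (hxy i j).symm]

lemma IsLeadExponent.isLow [LinearOrder σ] {R : Type*} [CommRing R] [IsDomain R] [Infinite R]
    {x y : ℕ → σ} {M A : ℕ} {l : σ →₀ ℕ} {f : MvPolynomial σ R} (hl : IsLeadExponent f l)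
    (hx : StrictMono x) (hy : y.Injective) (hxy : ∀ i j, x i ≠ y j)
    (hlt : ∀ i j, i ≤ j → x i < y j) (hf : shear R x y (Finset.range M) f = f)
    (hA : IsWeightedHomogeneous (content x (Finset.range M)) f A) :
    IsLow (prefixSum x l) (prefixSum y l) M := by
  intro c hc
  rw [Finset.range_eq_Ico] at hf hA
  have hle := (isLeadExponent_weightedHomogeneousComponent hl
    (saturatedContent x y (Finset.Ico 0 M))).sum_Ico_le hx hy hxy hlt
    (c := 0) (M := M) ?_ (fun μ hμ ↦ ?_) (Nat.zero_le c) hc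
  · have hx_split := Finset.sum_range_add_sum_Ico (fun i ↦ l (x i)) hc.le
    have hy_split := Finset.sum_range_add_sum_Ico (fun i ↦ l (y i)) (Nat.succ_le_of_lt hc)
    simp only [prefixSum]
    lia
  · rw [← weightedHomogeneousComponent_algHom, hf]
    refine isWeightedHomogeneous_shear_X fun i hi ↦ funext fun B ↦ ?_
    simp [saturatedContent, content, B.2 i hi]
  · obtain ⟨hμf, hμl⟩ := coeff_ne_zero_of_weightedHomogeneousComponent hμ
    refine samePairContent_of_weight_saturatedContent_eq hx.injective hy hxy hμl ?_
    rw [← weight_content, ← weight_content, hA hμf, hA hl.1]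

end Low

section Excess

variable {A B : ℕ → ℕ} {M a : ℕ}

/-- The largest amount by which `B (i + 1)` exceeds `A i`, for `i < c`. For prefix sums `A` and `B`
of two rows it is the least total that has to be moved from the second row to the first one, within
the first `c` columns, to obtain interlacing rows. -/
def maxExcess (A B : ℕ → ℕ) (c : ℕ) : ℕ := (Finset.range c).sup fun i ↦ B (i + 1) - A i

/-- The part of the excess in the first `c` columns that is moved from the second row to the first
one when only the total amount `a` is moved: the moves made first, those furthest to the left, are
dropped. -/
def truncatedExcess (A B : ℕ → ℕ) (M a c : ℕ) : ℕ := maxExcess A B c - (maxExcess A B M - a)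

lemma maxExcess_succ (A B : ℕ → ℕ) (c : ℕ) :
    maxExcess A B (c + 1) = max (maxExcess A B c) (B (c + 1) - A c) := by
  rw [maxExcess, Finset.range_add_one, Finset.sup_insert, sup_comm]
  rfl

lemma monotone_maxExcess (A B : ℕ → ℕ) : Monotone (maxExcess A B) :=
  fun _ _ h ↦ Finset.sup_mono (Finset.range_mono h)

lemma le_add_maxExcess_succ (A B : ℕ → ℕ) (c : ℕ) :
    B (c + 1) ≤ A c + maxExcess A B (c + 1) := by
  rw [maxExcess_succ]
  lia

lemma maxExcess_le_iff {c X : ℕ} : maxExcess A B c ≤ X ↔ ∀ i < c, B (i + 1) ≤ A i + X := by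
  simp only [maxExcess, Finset.sup_le_iff, Finset.mem_range, Nat.sub_le_iff_le_add']

lemma le_add_maxExcess (hA : Monotone A) (h0 : B 0 = 0) (c : ℕ) : B c ≤ A c + maxExcess A B c := by
  cases c with
  | zero => lia
  | succ c => exact (le_add_maxExcess_succ A B c).trans (by gcongr; exact hA c.le_succ)

lemma maxExcess_succ_add_le (hA : Monotone A) (hB : Monotone B) (h0 : B 0 = 0) (c : ℕ) :
    maxExcess A B (c + 1) + B c ≤ maxExcess A B c + B (c + 1) := by
  have := le_add_maxExcess hA h0 c
  have := hB c.le_succ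
  rw [maxExcess_succ]
  lia

lemma maxExcess_le (hB : Monotone B) (c : ℕ) : maxExcess A B c ≤ B c :=
  maxExcess_le_iff.2 fun _ hi ↦ (hB hi).trans (Nat.le_add_left _ _)

lemma IsLow.maxExcess_eq (h : IsLow A B M) (hA : Monotone A) (h0 : B 0 = 0) :
    maxExcess A B M = B M - A M := by
  refine le_antisymm (maxExcess_le_iff.2 fun i hi ↦ ?_) ?_
  · have := h i hi
    have := hA hi.le
    lia
  · exact Nat.sub_le_iff_le_add'.2 (le_add_maxExcess hA h0 M)

lemma truncatedExcess_zero (A B : ℕ → ℕ) (M a : ℕ) : truncatedExcess A B M a 0 = 0 :=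
  Nat.zero_sub _

lemma truncatedExcess_self (ha : a ≤ maxExcess A B M) : truncatedExcess A B M a M = a :=
  Nat.sub_sub_self ha

lemma truncatedExcess_maxExcess (A B : ℕ → ℕ) (M c : ℕ) :
    truncatedExcess A B M (maxExcess A B M) c = maxExcess A B c := by
  rw [truncatedExcess, Nat.sub_self, Nat.sub_zero]

lemma monotone_truncatedExcess (A B : ℕ → ℕ) (M a : ℕ) : Monotone (truncatedExcess A B M a) :=
  fun _ _ h ↦ Nat.sub_le_sub_right (monotone_maxExcess A B h) _

lemma truncatedExcess_succ_add_le (hA : Monotone A) (hB : Monotone B) (h0 : B 0 = 0)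
    (M a c : ℕ) :
    truncatedExcess A B M a (c + 1) + B c ≤ truncatedExcess A B M a c + B (c + 1) := by
  have := maxExcess_succ_add_le hA hB h0 c
  have := hB c.le_succ
  unfold truncatedExcess
  lia

lemma truncatedExcess_le (hB : Monotone B) (M a c : ℕ) : truncatedExcess A B M a c ≤ B c :=
  (Nat.sub_le _ _).trans (maxExcess_le hB c)

/- The part of the moved amount that lies beyond column `c` is a maximal excess, read from the
right, of the rows after the move. -/
lemma IsLow.sub_truncatedExcess_eq (h : IsLow A B M) (hA : Monotone A) (hB : Monotone B)
    (h0 : B 0 = 0) (ha : a ≤ maxExcess A B M) {c : ℕ} (hc : c < M) :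
    a - truncatedExcess A B M a c = max (a - truncatedExcess A B M a (c + 1))
      (((A M + truncatedExcess A B M a M) + (B (c + 1) - truncatedExcess A B M a (c + 1))) -
        ((A c + truncatedExcess A B M a c) + (B M - truncatedExcess A B M a M))) := by
  have := h.maxExcess_eq hA h0
  have := monotone_maxExcess A B (Nat.succ_le_of_lt hc)
  have := monotone_maxExcess A B c.le_succ
  have := maxExcess_succ A B c
  have := h c hc
  have := maxExcess_le (A := A) hB M
  have := maxExcess_le (A := A) hB (c + 1)
  have := hA hc.le
  have := hB (Nat.succ_le_of_lt hc)
  unfold truncatedExcess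
  lia

lemma IsLow.eq_of_add_truncatedExcess_eq {A' B' : ℕ → ℕ} {a' : ℕ} (hA : Monotone A)
    (hB : Monotone B) (h0 : B 0 = 0) (hA' : Monotone A') (hB' : Monotone B') (h0' : B' 0 = 0)
    (h : IsLow A B M) (ha : a ≤ maxExcess A B M) (h' : IsLow A' B' M)
    (ha' : a' ≤ maxExcess A' B' M)
    (hadd : ∀ c ≤ M, A c + truncatedExcess A B M a c = A' c + truncatedExcess A' B' M a' c)
    (hsub : ∀ c ≤ M, B c - truncatedExcess A B M a c = B' c - truncatedExcess A' B' M a' c)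
    {c : ℕ} (hc : c ≤ M) : A c = A' c ∧ B c = B' c := by
  have hM := truncatedExcess_self ha
  have hM' := truncatedExcess_self ha'
  have rest_eq {c : ℕ} (hc : c ≤ M) :
      a - truncatedExcess A B M a c = a' - truncatedExcess A' B' M a' c := by
    induction hc using Nat.decreasingInduction with
    | self => rw [hM, hM', Nat.sub_self, Nat.sub_self]
    | of_succ c hc ih =>
      rw [h.sub_truncatedExcess_eq hA hB h0 ha hc, h'.sub_truncatedExcess_eq hA' hB' h0' ha' hc,
        ih, hadd M le_rfl, hsub (c + 1) hc, hadd c hc.le, hsub M le_rfl]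
  have htotal := rest_eq M.zero_le
  rw [truncatedExcess_zero, truncatedExcess_zero] at htotal
  have := rest_eq hc
  have := hadd c hc
  have := hsub c hc
  have := truncatedExcess_le (A := A) hB M a c
  have := truncatedExcess_le (A := A') hB' M a' c
  have := hM ▸ monotone_truncatedExcess A B M a hc
  have := hM' ▸ monotone_truncatedExcess A' B' M a' hc
  lia

end Excess

section SweepStage

lemma IsLow.congr {A B A' B' : ℕ → ℕ} {M : ℕ} (h : IsLow A B M) (hA : ∀ c ≤ M, A' c = A c)
    (hB : ∀ c ≤ M, B' c = B c) : IsLow A' B' M := fun c hc ↦ by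
  rw [hA M le_rfl, hB M le_rfl, hA c hc.le, hB (c + 1) hc]
  exact h c hc

lemma IsLow.add_right {A B e : ℕ → ℕ} {M : ℕ} (h : IsLow A B M) (he : Monotone e) :
    IsLow A (fun c ↦ B c + e c) M := fun c hc ↦ by
  have := h c hc
  have := he (Nat.succ_le_of_lt hc)
  lia

/-- The rows `j, …, z` with prefix sums `P j, …, P z` of length `M` after the excess has been swept
from row `z` up to row `q`: every row has total `k`, except that row `q` carries what row `j` is
lacking, and only the lattice word condition between rows `q` and `q + 1` is suspended. -/
structure IsSweepStage (j z k M q : ℕ) (P : ℕ → ℕ → ℕ) : Prop where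
  total_eq : ∀ p, j < p → p ≤ z → p ≠ q → P p M = k
  total_add : P q M + P j M = 2 * k
  le_total : k ≤ P q M
  isLow : ∀ r, j ≤ r → r < z → r ≠ q → IsLow (P r) (P (r + 1)) M
  interlace : j < q → q < z → ∀ c < M, P (q + 1) (c + 1) ≤ P q c
  interlace_add : ∀ p, p + 1 = q → j ≤ p → q < z → ∀ c < M, ∀ i < c,
    P (q + 1) (c + 1) + P q (i + 1) + P p M ≤ P q c + P p i + k

namespace IsSweepStage

variable {j z k M r : ℕ} {P P' : ℕ → ℕ → ℕ}

lemma total_le (h : IsSweepStage j z k M (r + 1) P) (hj : j ≤ r) (hz : r + 1 ≤ z) : P r M ≤ k := by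
  have := h.total_add
  have := h.le_total
  rcases hj.eq_or_lt with rfl | hjr
  · lia
  · exact (h.total_eq r hjr (by lia) (by lia)).le

lemma maxExcess_eq (h : IsSweepStage j z k M (r + 1) P) (hP : ∀ p, Monotone (P p))
    (hP0 : ∀ p, P p 0 = 0) (hj : j ≤ r) (hz : r + 1 ≤ z) :
    maxExcess (P r) (P (r + 1)) M = P (r + 1) M - P r M :=
  (h.isLow r hj hz (by lia)).maxExcess_eq (hP r) (hP0 _)

lemma excess_le (h : IsSweepStage j z k M (r + 1) P) (hP : ∀ p, Monotone (P p))
    (hP0 : ∀ p, P p 0 = 0) (hj : j ≤ r) (hz : r + 1 ≤ z) :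
    P (r + 1) M - k ≤ maxExcess (P r) (P (r + 1)) M := by
  rw [h.maxExcess_eq hP hP0 hj hz]
  exact Nat.sub_le_sub_left (h.total_le hj hz) _

lemma isLow_below (h : IsSweepStage j z k M (r + 1) P) (hP : ∀ p, Monotone (P p))
    (hP0 : ∀ p, P p 0 = 0) (hj : j ≤ r) (hz : r + 2 ≤ z) :
    IsLow (fun c ↦ P (r + 1) c - truncatedExcess (P r) (P (r + 1)) M (P (r + 1) M - k) c)
      (P (r + 2)) M := by
  intro c hc
  have hM := truncatedExcess_self (h.excess_le hP hP0 hj (by lia))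
  have hbelow : P (r + 2) M = k := h.total_eq _ (by lia) hz (by lia)
  have hinterlace := h.interlace (by lia) hz c hc
  have hexcess : maxExcess (P r) (P (r + 1)) c ≤ P (r + 1) c - P (r + 2) (c + 1) +
      (maxExcess (P r) (P (r + 1)) M - (P (r + 1) M - k)) := by
    refine maxExcess_le_iff.2 fun i hi ↦ ?_
    have := h.interlace_add r rfl hj hz c hc i hi
    have := h.maxExcess_eq hP hP0 hj (by lia)
    have := h.le_total
    lia
  have := truncatedExcess_le (A := P r) (hP (r + 1)) M (P (r + 1) M - k) c
  have := h.le_total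
  simp only [hM]
  unfold truncatedExcess at this ⊢
  lia

lemma truncatedExcess_eq (h : IsSweepStage j z k M (r + 1) P) (hP : ∀ p, Monotone (P p))
    (hP0 : ∀ p, P p 0 = 0) (hj : j < r) (hz : r + 1 ≤ z) :
    truncatedExcess (P r) (P (r + 1)) M (P (r + 1) M - k) = maxExcess (P r) (P (r + 1)) := by
  funext c
  rw [← h.total_eq r hj (by lia) (by lia), ← h.maxExcess_eq hP hP0 hj.le hz,
    truncatedExcess_maxExcess]

lemma isLow_step (h : IsSweepStage j z k M (r + 1) P) (hP : ∀ p, Monotone (P p))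
    (hP0 : ∀ p, P p 0 = 0) (hj : j ≤ r) (hz : r + 1 ≤ z)
    (hr : ∀ c ≤ M, P' r c = P r c +
      truncatedExcess (P r) (P (r + 1)) M (P (r + 1) M - k) c)
    (hr1 : ∀ c ≤ M, P' (r + 1) c = P (r + 1) c -
      truncatedExcess (P r) (P (r + 1)) M (P (r + 1) M - k) c)
    (hP' : ∀ p, p ≠ r → p ≠ r + 1 → P' p = P p) {p : ℕ} (hjp : j ≤ p) (hpz : p < z)
    (hpr : p ≠ r) : IsLow (P' p) (P' (p + 1)) M := by
  rcases eq_or_ne p (r + 1) with rfl | hpr1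
  · exact (h.isLow_below hP hP0 hj hpz).congr hr1 fun c _ ↦ by rw [hP' _ (by lia) (by lia)]
  rcases eq_or_ne (p + 1) r with rfl | hp1r
  · exact ((h.isLow p hjp hpz hpr1).add_right (monotone_truncatedExcess _ _ _ _)).congr
      (fun c _ ↦ by rw [hP' _ hpr hpr1]) hr
  · rw [hP' _ hpr hpr1, hP' _ hp1r (by lia)]
    exact h.isLow p hjp hpz hpr1

lemma step (h : IsSweepStage j z k M (r + 1) P) (hP : ∀ p, Monotone (P p)) (hP0 : ∀ p, P p 0 = 0)
    (hj : j ≤ r) (hz : r + 1 ≤ z)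
    (hr : ∀ c ≤ M, P' r c = P r c +
      truncatedExcess (P r) (P (r + 1)) M (P (r + 1) M - k) c)
    (hr1 : ∀ c ≤ M, P' (r + 1) c = P (r + 1) c -
      truncatedExcess (P r) (P (r + 1)) M (P (r + 1) M - k) c)
    (hP' : ∀ p, p ≠ r → p ≠ r + 1 → P' p = P p) : IsSweepStage j z k M r P' := by
  have hM := truncatedExcess_self (h.excess_le hP hP0 hj hz)
  have hle := h.le_total
  have hadd := h.total_add
  have htotal (hne : j < r) : P r M = k := h.total_eq r hne (by lia) (by lia)
  refine ⟨fun p hp hpz hne ↦ ?_, ?_, ?_,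
    fun _ hjp hpz hne ↦ h.isLow_step hP hP0 hj hz hr hr1 hP' hjp hpz hne,
    fun hjr _ c hc ↦ ?_, fun p hpr hjp _ c hc i hi ↦ ?_⟩
  · rcases eq_or_ne p (r + 1) with rfl | hp1
    · rw [hr1 M le_rfl, hM, Nat.sub_sub_self hle]
    · rw [hP' p hne hp1, h.total_eq p hp hpz hp1]
  · rcases hj.eq_or_lt with rfl | hjr
    · rw [hr M le_rfl, hM]
      lia
    · rw [hr M le_rfl, hM, hP' j hjr.ne (by lia), htotal hjr]
      lia
  · rw [hr M le_rfl, hM]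
    rcases hj.eq_or_lt with rfl | hjr
    · lia
    · exact (htotal hjr).ge.trans (Nat.le_add_right _ _)
  · rw [hr1 (c + 1) hc, hr c hc.le, h.truncatedExcess_eq hP hP0 hjr hz]
    have := le_add_maxExcess_succ (P r) (P (r + 1)) c
    lia
  · subst hpr
    rw [hr1 (c + 1) hc, hr c hc.le, hr (i + 1) (by lia), hP' p (by lia) (by lia),
      h.truncatedExcess_eq hP hP0 (by lia) hz]
    have := le_add_maxExcess_succ (P (p + 1)) (P (p + 1 + 1)) c
    have := monotone_maxExcess (P (p + 1)) (P (p + 1 + 1)) (Nat.succ_le_of_lt hi)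
    have := h.isLow p hjp (by lia) (by lia) i (by lia)
    have := htotal (by lia)
    have := maxExcess_le (A := P (p + 1)) (hP (p + 1 + 1)) (c + 1)
    lia

end IsSweepStage

end SweepStage

section Raise

variable {σ : Type*}

lemma prefixSum_zero (x : ℕ → σ) (l : σ →₀ ℕ) : prefixSum x l 0 = 0 := rfl

lemma prefixSum_succ (x : ℕ → σ) (l : σ →₀ ℕ) (c : ℕ) :
    prefixSum x l (c + 1) = prefixSum x l c + l (x c) :=
  Finset.sum_range_succ _ c

lemma monotone_prefixSum (x : ℕ → σ) (l : σ →₀ ℕ) : Monotone (prefixSum x l) :=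
  monotone_nat_of_le_succ fun c ↦ (Nat.le_add_right _ _).trans (prefixSum_succ x l c).ge

lemma sum_single_apply {x : ℕ → σ} (hx : x.Injective) {M i : ℕ} (hi : i < M) (d : ℕ → ℕ) :
    (∑ i ∈ Finset.range M, Finsupp.single (x i) (d i)) (x i) = d i := by
  classical
  simp [Finsupp.finsetSum_apply, Finsupp.single_apply, hx.eq_iff, hi]

lemma sum_single_apply_of_ne {x : ℕ → σ} {M : ℕ} {v : σ} (h : ∀ i < M, v ≠ x i) (d : ℕ → ℕ) :
    (∑ i ∈ Finset.range M, Finsupp.single (x i) (d i)) v = 0 := by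
  rw [Finsupp.finsetSum_apply]
  exact Finset.sum_eq_zero fun i hi ↦ Finsupp.single_eq_of_ne (h i (Finset.mem_range.1 hi))

variable (x y : ℕ → σ) (M a : ℕ) (l : σ →₀ ℕ)

/-- The amount moved from `y i` to `x i` when a total of `a` is raised from row `y` to row `x`. -/
def raiseAmount (i : ℕ) : ℕ :=
  truncatedExcess (prefixSum x l) (prefixSum y l) M a (i + 1) -
    truncatedExcess (prefixSum x l) (prefixSum y l) M a i

/-- The combinatorial raising operator on exponents, which moves a total of `a` from row `y` to row
`x` in such a way that the first of the excess of `y` over `x` to be lost is the rightmost. -/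
noncomputable def raise : σ →₀ ℕ :=
  l + ∑ i ∈ Finset.range M, Finsupp.single (x i) (raiseAmount x y M a l i) -
    ∑ i ∈ Finset.range M, Finsupp.single (y i) (raiseAmount x y M a l i)

lemma raiseAmount_le (i : ℕ) : raiseAmount x y M a l i ≤ l (y i) := by
  have := truncatedExcess_succ_add_le (monotone_prefixSum x l) (monotone_prefixSum y l)
    (prefixSum_zero y l) M a i
  rw [prefixSum_succ] at this
  unfold raiseAmount
  lia

lemma raiseAmount_succ_le (i : ℕ) : raiseAmount x y M a l (i + 1) ≤ l (y (i + 1)) - l (x i) := by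
  have hge := le_add_maxExcess_succ (prefixSum x l) (prefixSum y l) i
  have hsucc := maxExcess_succ (prefixSum x l) (prefixSum y l) (i + 1)
  rw [prefixSum_succ y l (i + 1), prefixSum_succ x l i] at hsucc
  unfold raiseAmount truncatedExcess
  lia

variable {x y M l}

lemma raise_apply_left (hx : x.Injective) (hxy : ∀ i j, x i ≠ y j) {i : ℕ} (hi : i < M) :
    raise x y M a l (x i) = l (x i) + raiseAmount x y M a l i := by
  rw [raise, Finsupp.tsub_apply, Finsupp.add_apply, sum_single_apply hx hi,
    sum_single_apply_of_ne fun j _ ↦ hxy i j, Nat.sub_zero]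

lemma raise_apply_right (hy : y.Injective) (hxy : ∀ i j, x i ≠ y j) {i : ℕ} (hi : i < M) :
    raise x y M a l (y i) = l (y i) - raiseAmount x y M a l i := by
  rw [raise, Finsupp.tsub_apply, Finsupp.add_apply, sum_single_apply hy hi,
    sum_single_apply_of_ne fun j _ ↦ (hxy j i).symm, Nat.add_zero]

lemma raise_apply_of_ne {v : σ} (hx : ∀ i < M, v ≠ x i) (hy : ∀ i < M, v ≠ y i) :
    raise x y M a l v = l v := by
  rw [raise, Finsupp.tsub_apply, Finsupp.add_apply, sum_single_apply_of_ne hx,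
    sum_single_apply_of_ne hy, Nat.add_zero, Nat.sub_zero]

lemma prefixSum_raise_left (hx : x.Injective) (hxy : ∀ i j, x i ≠ y j) {c : ℕ} (hc : c ≤ M) :
    prefixSum x (raise x y M a l) c =
      prefixSum x l c + truncatedExcess (prefixSum x l) (prefixSum y l) M a c := by
  induction c with
  | zero => rw [prefixSum_zero, prefixSum_zero, truncatedExcess_zero]
  | succ c ih =>
    rw [prefixSum_succ, ih (by lia), prefixSum_succ, raise_apply_left a hx hxy hc]
    have := monotone_truncatedExcess (prefixSum x l) (prefixSum y l) M a c.le_succ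
    unfold raiseAmount
    lia

lemma prefixSum_raise_right (hy : y.Injective) (hxy : ∀ i j, x i ≠ y j) {c : ℕ} (hc : c ≤ M) :
    prefixSum y (raise x y M a l) c =
      prefixSum y l c - truncatedExcess (prefixSum x l) (prefixSum y l) M a c := by
  induction c with
  | zero => rw [prefixSum_zero, prefixSum_zero, Nat.zero_sub]
  | succ c ih =>
    have := monotone_truncatedExcess (prefixSum x l) (prefixSum y l) M a c.le_succ
    have := truncatedExcess_le (A := prefixSum x l) (monotone_prefixSum y l) M a c
    have := raiseAmount_le x y M a l c
    rw [prefixSum_succ, ih (by lia), raise_apply_right a hy hxy hc, prefixSum_succ]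
    unfold raiseAmount at *
    lia

lemma prefixSum_raise_of_ne {w : ℕ → σ} (hx : ∀ i j, w i ≠ x j) (hy : ∀ i j, w i ≠ y j) :
    prefixSum w (raise x y M a l) = prefixSum w l :=
  funext fun _ ↦ Finset.sum_congr rfl fun i _ ↦
    raise_apply_of_ne a (fun j _ ↦ hx i j) fun j _ ↦ hy i j

lemma eq_of_raise_eq (hx : x.Injective) (hy : y.Injective) (hxy : ∀ i j, x i ≠ y j) {a' : ℕ}
    {l' : σ →₀ ℕ} (h : IsLow (prefixSum x l) (prefixSum y l) M)
    (h' : IsLow (prefixSum x l') (prefixSum y l') M) (ha : a ≤ prefixSum y l M - prefixSum x l M)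
    (ha' : a' ≤ prefixSum y l' M - prefixSum x l' M)
    (heq : raise x y M a l = raise x y M a' l') : l = l' := by
  have hprefix {c : ℕ} (hc : c ≤ M) : prefixSum x l c = prefixSum x l' c ∧
      prefixSum y l c = prefixSum y l' c := by
    refine h.eq_of_add_truncatedExcess_eq (a := a) (a' := a') (monotone_prefixSum x l)
      (monotone_prefixSum y l) (prefixSum_zero y l) (monotone_prefixSum x l')
      (monotone_prefixSum y l') (prefixSum_zero y l') ?_ h' ?_ (fun c hc ↦ ?_) (fun c hc ↦ ?_) hc
    · rwa [h.maxExcess_eq (monotone_prefixSum x l) (prefixSum_zero y l)]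
    · rwa [h'.maxExcess_eq (monotone_prefixSum x l') (prefixSum_zero y l')]
    · rw [← prefixSum_raise_left a hx hxy hc, ← prefixSum_raise_left a' hx hxy hc, heq]
    · rw [← prefixSum_raise_right a hy hxy hc, ← prefixSum_raise_right a' hy hxy hc, heq]
  ext v
  by_cases hvx : ∃ i < M, v = x i
  · obtain ⟨i, hi, rfl⟩ := hvx
    have := (hprefix (Nat.succ_le_of_lt hi)).1
    rwa [prefixSum_succ, prefixSum_succ, (hprefix hi.le).1, Nat.add_left_cancel_iff] at this
  by_cases hvy : ∃ i < M, v = y i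
  · obtain ⟨i, hi, rfl⟩ := hvy
    have := (hprefix (Nat.succ_le_of_lt hi)).2
    rwa [prefixSum_succ, prefixSum_succ, (hprefix hi.le).2, Nat.add_left_cancel_iff] at this
  push Not at hvx hvy
  rw [← raise_apply_of_ne a hvx hvy, heq, raise_apply_of_ne a' hvx hvy]

lemma weight_raise {Γ : Type*} [AddCancelCommMonoid Γ] {u : σ → Γ} (hy : y.Injective)
    (hu : ∀ i < M, u (x i) = u (y i)) :
    Finsupp.weight u (raise x y M a l) = Finsupp.weight u l := by
  have hadd : raise x y M a l + ∑ i ∈ Finset.range M, Finsupp.single (y i) (raiseAmount x y M a l i)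
      = l + ∑ i ∈ Finset.range M, Finsupp.single (x i) (raiseAmount x y M a l i) := by
    refine tsub_add_cancel_of_le fun v ↦ ?_
    by_cases hv : ∃ i < M, v = y i
    · obtain ⟨i, hi, rfl⟩ := hv
      rw [sum_single_apply hy hi, Finsupp.add_apply]
      exact (raiseAmount_le x y M a l i).trans (Nat.le_add_right _ _)
    · push Not at hv
      rw [sum_single_apply_of_ne hv]
      exact Nat.zero_le _
  have hweight := congrArg (Finsupp.weight u) hadd
  simp only [map_add, map_sum, Finsupp.weight_single] at hweight
  rw [Finset.sum_congr rfl fun i hi ↦ by rw [← hu i (Finset.mem_range.1 hi)]] at hweight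
  exact add_right_cancel hweight

end Raise

/-- An infinite array of distinct variables, whose order increases along rows and along columns. The
variables of a matrix that is being acted upon are arranged in such an array; only the first few
rows and columns matter. -/
structure VariableArray (σ : Type*) [LinearOrder σ] where
  /-- The variable in the given row and column. -/
  entry : ℕ → ℕ → σ
  injective2 : Function.Injective2 entry
  strictMono : ∀ p, StrictMono (entry p)
  lt_of_lt_of_le : ∀ p q c d, p < q → c ≤ d → entry p c < entry q d

namespace VariableArray

variable {σ : Type*} [LinearOrder σ] (C : VariableArray σ)

lemma entry_ne {p q : ℕ} (h : p ≠ q) (i j : ℕ) : C.entry p i ≠ C.entry q j :=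
  fun e ↦ h (C.injective2 e).1

/-- The set of exponents `Λ` is closed under raising between any two adjacent ones of the rows
`j, …, z` of `C`, truncated to `M` columns. -/
def RaiseClosed (M j z : ℕ) (Λ : Finset (σ →₀ ℕ)) : Prop :=
  ∀ r a, ∀ l ∈ Λ, j ≤ r → r + 1 ≤ z →
    IsLow (prefixSum (C.entry r) l) (prefixSum (C.entry (r + 1)) l) M →
    a ≤ prefixSum (C.entry (r + 1)) l M - prefixSum (C.entry r) l M →
    raise (C.entry r) (C.entry (r + 1)) M a l ∈ Λ

variable {C} {M j z : ℕ} {Λ : Finset (σ →₀ ℕ)}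

open scoped Classical in
lemma RaiseClosed.card_isSweepStage_le (h : C.RaiseClosed M j z Λ) (k : ℕ) {q : ℕ} (hjq : j ≤ q)
    (hqz : q ≤ z) :
    {l ∈ Λ | IsSweepStage j z k M z fun p ↦ prefixSum (C.entry p) l}.card ≤
      {l ∈ Λ | IsSweepStage j z k M q fun p ↦ prefixSum (C.entry p) l}.card := by
  induction hqz using Nat.decreasingInduction with
  | self => exact le_rfl
  | of_succ q hqz ih =>
    refine (ih (by lia)).trans (Finset.card_le_card_of_injOn (fun l ↦ raise (C.entry q)
      (C.entry (q + 1)) M (prefixSum (C.entry (q + 1)) l M - k) l) ?_ ?_)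
    · intro l hl
      rw [Finset.mem_coe, Finset.mem_filter] at hl ⊢
      have hk := Nat.sub_le_sub_left (hl.2.total_le hjq hqz) (prefixSum (C.entry (q + 1)) l M)
      refine ⟨h _ _ l hl.1 hjq hqz (hl.2.isLow q hjq hqz (by lia)) hk, ?_⟩
      refine hl.2.step (fun p ↦ monotone_prefixSum _ l) (fun p ↦ prefixSum_zero _ l) hjq hqz
        (fun c hc ↦ ?_) (fun c hc ↦ ?_) fun p hpq hpq1 ↦ ?_
      · exact prefixSum_raise_left _ (C.strictMono q).injective (C.entry_ne (by lia)) hc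
      · exact prefixSum_raise_right _ (C.strictMono (q + 1)).injective (C.entry_ne (by lia)) hc
      · exact prefixSum_raise_of_ne _ (C.entry_ne hpq) (C.entry_ne hpq1)
    · intro l hl l' hl' heq
      rw [Finset.mem_coe, Finset.mem_filter] at hl hl'
      exact eq_of_raise_eq _ (C.strictMono q).injective (C.strictMono (q + 1)).injective
        (C.entry_ne (by lia)) (hl.2.isLow q hjq hqz (by lia)) (hl'.2.isLow q hjq hqz (by lia))
        (Nat.sub_le_sub_left (hl.2.total_le hjq hqz) _)
        (Nat.sub_le_sub_left (hl'.2.total_le hjq hqz) _) heq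

end VariableArray

lemma div_mod_succ_of_lt {i N : ℕ} (h : i % N + 1 < N) :
    (i + 1) / N = i / N ∧ (i + 1) % N = i % N + 1 :=
  (Nat.div_mod_unique (by lia)).2 ⟨by have := Nat.mod_add_div i N; lia, h⟩

lemma succ_mod_eq_zero {i N : ℕ} (h : i % N + 1 = N) : (i + 1) % N = 0 := by
  rw [← Nat.mod_add_div i N, add_right_comm, h, Nat.add_mul_mod_self_left, Nat.mod_self]

namespace VariableArray

variable {σ : Type*} [LinearOrder σ] (C D : VariableArray σ)

/-- The arrays `C` and `D` consist of `N × N` blocks, arranged from left to right, which are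
transposes of each other. -/
def IsBlockTranspose (N : ℕ) : Prop :=
  ∀ e p q, p < N → q < N → C.entry p (e * N + q) = D.entry q (e * N + p)

variable {C D} {N m M r k a : ℕ} {l : σ →₀ ℕ}

lemma IsBlockTranspose.prefixSum_raise (h : C.IsBlockTranspose D N) (hM : M = m * N)
    (hr : r + 1 < N) (hk : k < N) {i : ℕ} (hi : i ≤ M) :
    prefixSum (D.entry k) (raise (C.entry r) (C.entry (r + 1)) M a l) i =
      prefixSum (D.entry k) l i +
        if i % N = r + 1 then raiseAmount (C.entry r) (C.entry (r + 1)) M a l (i / N * N + k)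
        else 0 := by
  induction i with
  | zero => rw [prefixSum_zero, prefixSum_zero, Nat.zero_mod, if_neg (by lia)]
  | succ i ih =>
    have hmod : i % N < N := Nat.mod_lt _ (by lia)
    have hentry : D.entry k i = C.entry (i % N) (i / N * N + k) := by
      rw [h _ _ _ hmod hk, Nat.div_add_mod']
    have hcol : i / N * N + k < M := by
      have : i / N < m := Nat.div_lt_of_lt_mul (by rw [mul_comm]; lia)
      have := Nat.mul_le_mul_right N (Nat.succ_le_of_lt this)
      rw [Nat.succ_mul] at this
      lia
    have hsucc : i % N + 1 < N ∧ (i + 1) / N = i / N ∧ (i + 1) % N = i % N + 1 ∨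
        i % N + 1 = N ∧ (i + 1) % N = 0 :=
      (Nat.succ_le_of_lt hmod).lt_or_eq.imp (fun h ↦ ⟨h, div_mod_succ_of_lt h⟩)
        fun h ↦ ⟨h, succ_mod_eq_zero h⟩
    rw [prefixSum_succ, ih (by lia), prefixSum_succ, hentry]
    by_cases hir : i % N = r
    · rw [hir, raise_apply_left a (C.strictMono r).injective (C.entry_ne (by lia)) hcol,
        if_neg (by lia), if_pos (by lia), show (i + 1) / N = i / N by lia, add_zero, add_assoc]
    by_cases hir1 : i % N = r + 1
    · rw [hir1, raise_apply_right a (C.strictMono _).injective (C.entry_ne (by lia)) hcol,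
        if_pos rfl, if_neg (by lia)]
      have := raiseAmount_le (C.entry r) (C.entry (r + 1)) M a l (i / N * N + k)
      lia
    · rw [raise_apply_of_ne a (fun j _ ↦ C.entry_ne hir _ j) (fun j _ ↦ C.entry_ne hir1 _ j),
        if_neg hir1, if_neg (by lia)]
      lia

/- This is the commutation of the two `GL`-crystal structures on matrices. -/
lemma IsBlockTranspose.isLow_raise (h : C.IsBlockTranspose D N) (hM : M = m * N) (hr : r + 1 < N)
    (hk : k + 1 < N)
    (hl : IsLow (prefixSum (D.entry k) l) (prefixSum (D.entry (k + 1)) l) M) :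
    IsLow (prefixSum (D.entry k) (raise (C.entry r) (C.entry (r + 1)) M a l))
      (prefixSum (D.entry (k + 1)) (raise (C.entry r) (C.entry (r + 1)) M a l)) M := by
  intro i hi
  have hMN : M % N = 0 := by rw [hM, Nat.mul_mod_left]
  rw [h.prefixSum_raise hM hr (by lia) le_rfl, h.prefixSum_raise hM hr (by lia) hi.le,
    h.prefixSum_raise hM hr hk le_rfl, h.prefixSum_raise hM hr hk hi,
    if_neg (by lia : ¬M % N = r + 1), if_neg (by lia : ¬M % N = r + 1)]
  by_cases hmod : (i + 1) % N = r + 1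
  · have hiM : i + 1 < M := (Nat.succ_le_of_lt hi).lt_of_ne fun (h : i + 1 = M) ↦ by
      rw [h] at hmod
      lia
    have hnext := hl (i + 1) hiM
    have hdiv := Nat.div_add_mod' (i + 1) N
    have hright : C.entry (r + 1) ((i + 1) / N * N + k + 1) = D.entry (k + 1) (i + 1) := by
      rw [add_assoc, h _ _ _ hr hk, ← hmod, hdiv]
    have hleft : C.entry r ((i + 1) / N * N + k) = D.entry k i := by
      rw [h _ _ _ (by lia) (by lia)]
      congr 1
      lia
    have hamount := raiseAmount_succ_le (C.entry r) (C.entry (r + 1)) M a l ((i + 1) / N * N + k)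
    rw [hright, hleft] at hamount
    rw [prefixSum_succ _ l (i + 1), prefixSum_succ (D.entry k) l i] at hnext
    have hcurrent := hl i hi
    rw [if_pos hmod, ← add_assoc]
    lia
  · have := hl i hi
    rw [if_neg hmod]
    lia

end VariableArray

section ParametricShear

variable {σ : Type*} {R : Type*} [CommRing R]

lemma coeff_aeval_X_pow_mul_C_X (u : σ → ℕ) (f : MvPolynomial σ R) (m : ℕ) :
    (aeval (fun v ↦ Polynomial.X ^ u v * Polynomial.C (X v : MvPolynomial σ R)) f).coeff m =
      weightedHomogeneousComponent u m f := by
  classical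
  induction f using MvPolynomial.induction_on' with
  | add f g hf hg => rw [map_add, Polynomial.coeff_add, hf, hg, map_add]
  | monomial μ r =>
    have hμ : IsWeightedHomogeneous u (monomial μ r) (Finsupp.weight u μ) :=
      isWeightedHomogeneous_monomial _ _ _ rfl
    have hconst : aeval (fun v ↦ Polynomial.C (X v : MvPolynomial σ R)) (monomial μ r) =
        Polynomial.C (monomial μ r) := by
      rw [aeval_monomial, monomial_eq, map_mul, Finsupp.prod, Finsupp.prod, map_prod]
      simp only [map_pow]
      rfl
    rw [aeval_pow_mul_of_isWeightedHomogeneous hμ, hconst, Polynomial.coeff_X_pow_mul',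
      Polynomial.coeff_C]
    rcases eq_or_ne m (Finsupp.weight u μ) with rfl | hm
    · rw [if_pos le_rfl, if_pos (Nat.sub_self _), hμ.weightedHomogeneousComponent_same]
    · rw [hμ.weightedHomogeneousComponent_ne _ hm]
      split_ifs <;> first | rfl | lia

variable [DecidableEq σ] {ι : Type*} (R) (x y : ι → σ) (s : Finset ι)

/-- The one-parameter family `X (x c) ↦ X (x c) + T * X (y c)` (`c ∈ s`) which specialises to
`shear` at `T = 1`. -/
noncomputable def parametricShear : MvPolynomial σ R →ₐ[R] Polynomial (MvPolynomial σ R) :=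
  aeval fun v ↦ Polynomial.C (X v) +
    Polynomial.X * Polynomial.C (∑ c ∈ s, if v = x c then X (y c) else 0)

variable {R x y s}

lemma map_shear_parametricShear (hxy : ∀ c ∈ s, ∀ d ∈ s, y c ≠ x d) (f : MvPolynomial σ R) :
    (parametricShear R x y s f).map (shear R x y s : MvPolynomial σ R →+* MvPolynomial σ R) =
      Polynomial.taylor 1 (parametricShear R x y s f) := by
  suffices h : (Polynomial.mapAlgHom (shear R x y s)).comp (parametricShear R x y s) =
      ((Polynomial.taylorAlgHom (1 : MvPolynomial σ R)).restrictScalars R).comp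
        (parametricShear R x y s) from DFunLike.congr_fun h f
  refine MvPolynomial.algHom_ext fun v ↦ ?_
  have fix_y : shear R x y s (∑ c ∈ s, if v = x c then X (y c) else 0) =
      ∑ c ∈ s, if v = x c then X (y c) else 0 := by
    rw [map_sum]
    refine Finset.sum_congr rfl fun c hc ↦ ?_
    split_ifs
    · exact shear_X_of_ne (hxy c hc)
    · rw [map_zero]
  have hX : parametricShear R x y s (X v) = Polynomial.C (X v) +
      Polynomial.X * Polynomial.C (∑ c ∈ s, if v = x c then X (y c) else 0) := aeval_X _ v
  rw [AlgHom.comp_apply, AlgHom.comp_apply, hX]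
  simp only [Polynomial.coe_mapAlgHom, Polynomial.map_mul, Polynomial.map_C,
    Polynomial.map_X, RingHom.coe_coe, fix_y, shear_X, AlgHom.restrictScalars_apply,
    Polynomial.taylorAlgHom_apply, Polynomial.taylor_mul, map_add, Polynomial.taylor_C,
    Polynomial.taylor_X, Polynomial.C_1]
  ring

lemma aeval_X_pow_mul_C_X_shear {u : σ → ℕ} (hx : ∀ c ∈ s, u (x c) = 0)
    (hy : ∀ c ∈ s, u (y c) = 1) {f : MvPolynomial σ R} {k : ℕ} (hf : IsWeightedHomogeneous u f k) :
    aeval (fun v ↦ Polynomial.X ^ u v * Polynomial.C (X v : MvPolynomial σ R)) (shear R x y s f) =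
      Polynomial.X ^ k * parametricShear R x y s f := by
  refine Eq.trans ?_ (aeval_pow_mul_of_isWeightedHomogeneous hf Polynomial.X _)
  rw [← AlgHom.comp_apply]
  refine DFunLike.congr_fun (MvPolynomial.algHom_ext fun v ↦ ?_) f
  rw [AlgHom.comp_apply, shear_X, map_add, map_sum, aeval_X, aeval_X, mul_add, map_sum,
    Finset.mul_sum, Finset.mul_sum]
  refine congrArg _ (Finset.sum_congr rfl fun c hc ↦ ?_)
  split_ifs with h
  · rw [aeval_X, hy c hc, h, hx c hc, pow_one, pow_zero, one_mul]
  · rw [map_zero, map_zero, mul_zero, mul_zero]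

/- The coefficient of the top power of the parameter is unchanged when the parameter is shifted. -/
lemma shear_weightedHomogeneousComponent_shear (hxy : ∀ c ∈ s, ∀ d ∈ s, y c ≠ x d) {u : σ → ℕ}
    (hx : ∀ c ∈ s, u (x c) = 0) (hy : ∀ c ∈ s, u (y c) = 1) {f : MvPolynomial σ R} {k n : ℕ}
    (hf : IsWeightedHomogeneous u f k) (hlt : shear R x y s f ∈ weightLT R u (n + 1))
    (hkn : k ≤ n) :
    shear R x y s (weightedHomogeneousComponent u n (shear R x y s f)) =
      weightedHomogeneousComponent u n (shear R x y s f) := by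
  have hcoeff (m : ℕ) : (parametricShear R x y s f).coeff m =
      weightedHomogeneousComponent u (m + k) (shear R x y s f) := by
    rw [← coeff_aeval_X_pow_mul_C_X, aeval_X_pow_mul_C_X_shear hx hy hf, Polynomial.coeff_X_pow_mul]
  have hdegree : (parametricShear R x y s f).natDegree ≤ n - k := by
    refine Polynomial.natDegree_le_iff_coeff_eq_zero.2 fun m hm ↦ ?_
    rw [hcoeff, weightedHomogeneousComponent_eq_zero_of_mem_weightLT hlt (by lia)]
  have htop : (Polynomial.taylor 1 (parametricShear R x y s f)).coeff (n - k) =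
      (parametricShear R x y s f).coeff (n - k) := by
    rcases hdegree.lt_or_eq with h | h
    · rw [Polynomial.coeff_eq_zero_of_natDegree_lt h, Polynomial.coeff_eq_zero_of_natDegree_lt]
      rwa [Polynomial.natDegree_taylor]
    · rw [← h, Polynomial.coeff_taylor_natDegree, Polynomial.leadingCoeff]
  rwa [← map_shear_parametricShear hxy, Polynomial.coeff_map, hcoeff, Nat.sub_add_cancel hkn]
    at htop

end ParametricShear

namespace VariableArray

variable {σ : Type*} [LinearOrder σ] (R : Type*) [CommRing R] (C : VariableArray σ) (M : ℕ)

/-- The elementary row operation which adds row `q` to row `p` of the `M` columns of the array. -/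
noncomputable abbrev rowShear (p q : ℕ) : MvPolynomial σ R →ₐ[R] MvPolynomial σ R :=
  shear R (C.entry p) (C.entry q) (Finset.range M)

/-- The weight measuring the degree in the variables of row `p`. -/
abbrev rowContent (p : ℕ) : σ → ℕ := content (C.entry p) (Finset.range M)

variable {R C M}

lemma weight_rowContent (p : ℕ) (μ : σ →₀ ℕ) :
    Finsupp.weight (C.rowContent M p) μ = prefixSum (C.entry p) μ M :=
  weight_content _ _ _

lemma rowContent_entry (p s : ℕ) {c : ℕ} (hc : c < M) :
    C.rowContent M p (C.entry s c) = if s = p then 1 else 0 := by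
  split_ifs with h
  · rw [h, rowContent, content_apply_self (C.strictMono p).injective (Finset.mem_range.2 hc)]
  · exact content_eq_zero fun i _ ↦ C.entry_ne h _ _

lemma rowShear_X_entry (p q s : ℕ) {c : ℕ} (hc : c < M) :
    C.rowShear R M p q (X (C.entry s c)) =
      X (C.entry s c) + if s = p then X (C.entry q c) else 0 := by
  split_ifs with h
  · rw [h, shear_X_apply (C.strictMono p).injective (Finset.mem_range.2 hc)]
  · rw [add_zero]
    exact shear_X_of_ne fun i _ ↦ C.entry_ne h _ _

lemma rowShear_X_of_ne (p q : ℕ) {v : σ} (h : ∀ s, ∀ c < M, v ≠ C.entry s c) :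
    C.rowShear R M p q (X v) = X v :=
  shear_X_of_ne fun i hi ↦ h _ i (Finset.mem_range.1 hi)

lemma algHom_ext {A : Type*} [CommSemiring A] [Algebra R A] {φ ψ : MvPolynomial σ R →ₐ[R] A}
    (hentry : ∀ s, ∀ c < M, φ (X (C.entry s c)) = ψ (X (C.entry s c)))
    (hne : ∀ v, (∀ s, ∀ c < M, v ≠ C.entry s c) → φ (X v) = ψ (X v)) : φ = ψ :=
  MvPolynomial.algHom_ext fun v ↦ by
    by_cases h : ∀ s, ∀ c < M, v ≠ C.entry s c
    · exact hne v h
    · push Not at h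
      obtain ⟨s, c, hc, rfl⟩ := h
      exact hentry s c hc

lemma rowShear_comm {a b c d : ℕ} (hbc : b ≠ c) (had : a ≠ d) (f : MvPolynomial σ R) :
    C.rowShear R M a b (C.rowShear R M c d f) = C.rowShear R M c d (C.rowShear R M a b f) := by
  suffices h : (C.rowShear R M a b).comp (C.rowShear R M c d) =
      (C.rowShear R M c d).comp (C.rowShear R M a b) from DFunLike.congr_fun h f
  refine C.algHom_ext (M := M) (fun s i hi ↦ ?_) fun v hv ↦ ?_
  · simp only [AlgHom.comp_apply, rowShear_X_entry _ _ _ hi, map_add,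
      apply_ite (C.rowShear R M a b), apply_ite (C.rowShear R M c d), map_zero, if_neg hbc,
      if_neg had.symm, add_zero]
    ring
  · simp only [AlgHom.comp_apply, rowShear_X_of_ne _ _ hv]

lemma rowShear_rowShear_eq {j z i : ℕ} (hij : i ≠ j) (f : MvPolynomial σ R) :
    C.rowShear R M z i (C.rowShear R M j z f) =
      C.rowShear R M j z (C.rowShear R M j i (C.rowShear R M z i f)) := by
  suffices h : (C.rowShear R M z i).comp (C.rowShear R M j z) =
      ((C.rowShear R M j z).comp (C.rowShear R M j i)).comp (C.rowShear R M z i) from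
    DFunLike.congr_fun h f
  refine C.algHom_ext (M := M) (fun s c hc ↦ ?_) fun v hv ↦ ?_
  · simp only [AlgHom.comp_apply, rowShear_X_entry _ _ _ hc, map_add,
      apply_ite (C.rowShear R M z i), apply_ite (C.rowShear R M j z),
      apply_ite (C.rowShear R M j i), map_zero, if_neg hij, if_true]
    split_ifs <;> ring
  · simp only [AlgHom.comp_apply, rowShear_X_of_ne _ _ hv]

/- The proof is the case of `SL₂`: the highest divided power of the raising operator that does not
kill `f` maps it to an invariant of the raising operator. -/
lemma rowShear_weightedHomogeneousComponent_rowShear {j z : ℕ} (hjz : j ≠ z) {k n : ℕ}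
    {f : MvPolynomial σ R} (hf : IsWeightedHomogeneous (C.rowContent M z) f k)
    (hlt : C.rowShear R M j z f ∈ weightLT R (C.rowContent M z) (n + 1)) (hkn : k ≤ n) :
    C.rowShear R M j z (weightedHomogeneousComponent (C.rowContent M z) n (C.rowShear R M j z f)) =
      weightedHomogeneousComponent (C.rowContent M z) n (C.rowShear R M j z f) := by
  refine shear_weightedHomogeneousComponent_shear (fun c _ d _ ↦ C.entry_ne hjz.symm c d)
    (fun c hc ↦ ?_) (fun c hc ↦ ?_) hf hlt hkn
  · rw [rowContent_entry _ _ (Finset.mem_range.1 hc), if_neg hjz]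
  · rw [rowContent_entry _ _ (Finset.mem_range.1 hc), if_pos rfl]

end VariableArray

section Weights

variable {σ R Γ : Type*} [CommSemiring R]

lemma weight_add_left [AddCommMonoid Γ] (u v : σ → Γ) (μ : σ →₀ ℕ) :
    Finsupp.weight (u + v) μ = Finsupp.weight u μ + Finsupp.weight v μ := by
  simp only [Finsupp.weight_apply, Finsupp.sum, ← Finset.sum_add_distrib, Pi.add_apply, smul_add]

lemma isWeightedHomogeneous_add [AddCommMonoid Γ] {u v : σ → Γ} {f : MvPolynomial σ R} {m n : Γ}
    (hu : IsWeightedHomogeneous u f m) (hv : IsWeightedHomogeneous v f n) :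
    IsWeightedHomogeneous (u + v) f (m + n) := fun μ hμ ↦ by
  rw [weight_add_left, hu hμ, hv hμ]

lemma weightedHomogeneousComponent_add [AddCancelCommMonoid Γ] {u : σ → Γ} (v : σ → Γ)
    {f : MvPolynomial σ R} {m : Γ} (hu : IsWeightedHomogeneous u f m) (n : Γ) :
    weightedHomogeneousComponent (u + v) (m + n) f = weightedHomogeneousComponent v n f := by
  classical
  ext μ
  rw [coeff_weightedHomogeneousComponent, coeff_weightedHomogeneousComponent]
  by_cases hμ : coeff μ f = 0
  · rw [hμ, ite_self, ite_self]
  · simp only [weight_add_left, hu hμ, add_right_inj]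

lemma isWeightedHomogeneous_weightedHomogeneousComponent {Γ' : Type*} [AddCommMonoid Γ]
    [AddCommMonoid Γ'] {u : σ → Γ} {f : MvPolynomial σ R} {m : Γ}
    (hf : IsWeightedHomogeneous u f m) (v : σ → Γ') (n : Γ') :
    IsWeightedHomogeneous u (weightedHomogeneousComponent v n f) m :=
  fun _ hμ ↦ hf (coeff_ne_zero_of_weightedHomogeneousComponent hμ).1

lemma exists_weightedHomogeneousComponent_ne_zero {f : MvPolynomial σ R} {μ : σ →₀ ℕ}
    (hμ : coeff μ f ≠ 0) (u : σ → ℕ) : ∃ n, Finsupp.weight u μ ≤ n ∧ f ∈ weightLT R u (n + 1) ∧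
      weightedHomogeneousComponent u n f ≠ 0 := by
  classical
  obtain ⟨ν, hν, hmax⟩ := Finset.exists_max_image f.support (Finsupp.weight u)
    ⟨μ, mem_support_iff.2 hμ⟩
  refine ⟨Finsupp.weight u ν, hmax μ (mem_support_iff.2 hμ),
    mem_weightLT.2 fun ξ hξ ↦ Nat.lt_succ_of_le (hmax ξ (mem_support_iff.2 hξ)), fun h ↦ ?_⟩
  have hcoeff := congrArg (coeff ν) h
  rw [coeff_weightedHomogeneousComponent, if_pos rfl, coeff_zero] at hcoeff
  exact mem_support_iff.1 hν hcoeff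

end Weights

namespace VariableArray

variable {σ : Type*} [LinearOrder σ]

section RowShear

variable {R : Type*} [CommRing R] {C : VariableArray σ} {M p q s j z k n : ℕ}
  {f : MvPolynomial σ R}

lemma isWeightedHomogeneous_rowShear_X (h : s = p ↔ s = q) (v : σ) :
    IsWeightedHomogeneous (C.rowContent M s) (C.rowShear R M p q (X v)) (C.rowContent M s v) := by
  refine isWeightedHomogeneous_shear_X (fun c hc ↦ ?_) v
  have hc := Finset.mem_range.1 hc
  simp only [rowContent_entry _ _ hc, @eq_comm _ _ s, h]

lemma isWeightedHomogeneous_rowShear_X_add (hpq : p ≠ q) (v : σ) :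
    IsWeightedHomogeneous (C.rowContent M p + C.rowContent M q) (C.rowShear R M p q (X v))
      ((C.rowContent M p + C.rowContent M q) v) := by
  refine isWeightedHomogeneous_shear_X (fun c hc ↦ ?_) v
  have hc := Finset.mem_range.1 hc
  simp only [Pi.add_apply, rowContent_entry _ _ hc, if_neg hpq, if_neg hpq.symm, if_true, add_comm]

lemma rowShear_X_sub_mem_weightLT (hpq : p ≠ q) (v : σ) :
    C.rowShear R M p q (X v) - X v ∈ weightLT R (C.rowContent M p) (C.rowContent M p v) := by
  refine shear_X_sub_mem_weightLT (fun c hc ↦ ?_) v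
  have hc := Finset.mem_range.1 hc
  rw [rowContent_entry _ _ hc, rowContent_entry _ _ hc, if_neg hpq.symm, if_pos rfl]
  exact one_pos

lemma isWeightedHomogeneous_rowShear (h : s = p ↔ s = q)
    (hf : IsWeightedHomogeneous (C.rowContent M s) f k) :
    IsWeightedHomogeneous (C.rowContent M s) (C.rowShear R M p q f) k :=
  isWeightedHomogeneous_algHom (isWeightedHomogeneous_rowShear_X h) hf

end RowShear

section Submodules

variable (K : Type*) [CommRing K] (C : VariableArray σ) (M lo hi k : ℕ)

/-- The polynomials which are homogeneous of the same degree `k` in each of the rows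
`lo, …, hi - 1`. -/
noncomputable def balanced : Submodule K (MvPolynomial σ K) :=
  ⨅ p ∈ Set.Ico lo hi, weightedHomogeneousSubmodule K (C.rowContent M p) k

/-- The polynomials which are invariant under the elementary operations among the rows
`lo, …, hi - 1`, that is, under the special linear group of this block of rows. -/
noncomputable def shearInvariants : Submodule K (MvPolynomial σ K) where
  carrier := {f | ∀ p ∈ Set.Ico lo hi, ∀ q ∈ Set.Ico lo hi, p ≠ q → C.rowShear K M p q f = f}
  add_mem' hf hg p hp q hq hpq := by rw [map_add, hf p hp q hq hpq, hg p hp q hq hpq]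
  zero_mem' _ _ _ _ _ := map_zero _
  smul_mem' c f hf p hp q hq hpq := by rw [map_smul, hf p hp q hq hpq]

/-- The exponents of the monomials in `balanced`. -/
def IsBalanced (l : σ →₀ ℕ) : Prop :=
  ∀ p ∈ Set.Ico lo hi, prefixSum (C.entry p) l M = k

/-- The condition satisfied by the leading exponents of the elements of `shearInvariants`. -/
def IsLowBlock (l : σ →₀ ℕ) : Prop :=
  ∀ r, lo ≤ r → r + 1 < hi → IsLow (prefixSum (C.entry r) l) (prefixSum (C.entry (r + 1)) l) M

variable {K C M lo hi k} {f : MvPolynomial σ K}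

lemma mem_balanced : f ∈ C.balanced K M lo hi k ↔
    ∀ p ∈ Set.Ico lo hi, IsWeightedHomogeneous (C.rowContent M p) f k := by
  simp only [balanced, Submodule.mem_iInf, mem_weightedHomogeneousSubmodule]

lemma shearInvariants_eq_top (h : hi ≤ lo + 1) : C.shearInvariants K M lo hi = ⊤ :=
  eq_top_iff.2 fun _ _ p hp q hq hpq ↦ by
    have := hp.1
    have := hp.2
    have := hq.1
    have := hq.2
    lia

lemma isLowBlock_of_le (h : hi ≤ lo + 1) (l : σ →₀ ℕ) : C.IsLowBlock M lo hi l :=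
  fun r _ _ ↦ by lia

lemma isBalanced_of_mem_balanced (hf : f ∈ C.balanced K M lo hi k) {l : σ →₀ ℕ}
    (hl : coeff l f ≠ 0) : C.IsBalanced M lo hi k l := fun p hp ↦ by
  rw [← weight_rowContent, mem_balanced.1 hf p hp hl]

lemma isLow_of_isLeadExponent [IsDomain K] [Infinite K] {l : σ →₀ ℕ} (hl : IsLeadExponent f l)
    {r m : ℕ} (hf : C.rowShear K M r (r + 1) f = f)
    (hr : IsWeightedHomogeneous (C.rowContent M r) f m) :
    IsLow (prefixSum (C.entry r) l) (prefixSum (C.entry (r + 1)) l) M :=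
  hl.isLow (C.strictMono r) (C.strictMono (r + 1)).injective (C.entry_ne (by lia))
    (fun i j ↦ C.lt_of_lt_of_le r (r + 1) i j (by lia)) hf hr

lemma isLowBlock_of_isLeadExponent [IsDomain K] [Infinite K] {l : σ →₀ ℕ}
    (hl : IsLeadExponent f l) (hbal : f ∈ C.balanced K M lo hi k)
    (hinv : f ∈ C.shearInvariants K M lo hi) : C.IsLowBlock M lo hi l := fun r hlo hhi ↦
  isLow_of_isLeadExponent hl (hinv r ⟨hlo, by lia⟩ (r + 1) ⟨by lia, hhi⟩ (by lia))
    (mem_balanced.1 hbal r ⟨hlo, by lia⟩)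

end Submodules

section TopComponent

variable {R : Type*} [CommRing R] {C : VariableArray σ} {M j z k n : ℕ} {f : MvPolynomial σ R}

lemma isWeightedHomogeneous_add_rowShear (hjz : j < z) (hf : f ∈ C.balanced R M j (z + 1) k) :
    IsWeightedHomogeneous (C.rowContent M j + C.rowContent M z) (C.rowShear R M j z f) (2 * k) := by
  have hf := mem_balanced.1 hf
  rw [two_mul]
  exact isWeightedHomogeneous_algHom (isWeightedHomogeneous_rowShear_X_add hjz.ne)
    (isWeightedHomogeneous_add (hf j ⟨le_rfl, by lia⟩) (hf z ⟨hjz.le, by lia⟩))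

lemma rowShear_rowShear_eq_of_mem_shearInvariants
    (hf : f ∈ C.shearInvariants R M (j + 1) (z + 1)) {i : ℕ} (hji : j < i) (hiz : i < z) :
    C.rowShear R M j i (C.rowShear R M j z f) = C.rowShear R M z i (C.rowShear R M j z f) := by
  rw [rowShear_rowShear_eq hji.ne', hf z ⟨by lia, by lia⟩ i ⟨hji, by lia⟩ hiz.ne',
    rowShear_comm (by lia) (by lia)]

lemma rowShear_top_component_eq_self (hjz : j < z) (hbal : f ∈ C.balanced R M j (z + 1) k)
    (hinv : f ∈ C.shearInvariants R M (j + 1) (z + 1))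
    (hlt : C.rowShear R M j z f ∈ weightLT R (C.rowContent M z) (n + 1)) (hkn : k ≤ n) {r : ℕ}
    (hjr : j ≤ r) (hrz : r < z) :
    C.rowShear R M r (r + 1)
        (weightedHomogeneousComponent (C.rowContent M z) n (C.rowShear R M j z f)) =
      weightedHomogeneousComponent (C.rowContent M z) n (C.rowShear R M j z f) := by
  have hhom := mem_balanced.1 hbal
  rcases hjr.eq_or_lt with rfl | hjr
  · rcases (Nat.succ_le_of_lt hrz).eq_or_lt with rfl | hjz'
    · exact rowShear_weightedHomogeneousComponent_rowShear hjz.ne (hhom _ ⟨hjz.le, by lia⟩) hlt hkn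
    · rw [← weightedHomogeneousComponent_algHom (isWeightedHomogeneous_rowShear_X (by lia)),
        rowShear_rowShear_eq_of_mem_shearInvariants hinv (Nat.lt_succ_self j) hjz']
      exact weightedHomogeneousComponent_algHom_eq_self (rowShear_X_sub_mem_weightLT hjz'.ne') hlt
  · have hinv_r : C.rowShear R M r (r + 1) (C.rowShear R M j z f) = C.rowShear R M j z f := by
      rw [rowShear_comm (by lia) (by lia), hinv r ⟨hjr, by lia⟩ (r + 1) ⟨by lia, by lia⟩ (by lia)]
    rcases (Nat.succ_le_of_lt hrz).eq_or_lt with rfl | hrz'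
    · have hr : IsWeightedHomogeneous (C.rowContent M r) (C.rowShear R M j (r + 1) f) k :=
        isWeightedHomogeneous_rowShear (by lia) (hhom r ⟨hjr.le, by lia⟩)
      rw [← weightedHomogeneousComponent_add _ hr, ← weightedHomogeneousComponent_algHom
        (isWeightedHomogeneous_rowShear_X_add (by lia)), hinv_r]
    · rw [← weightedHomogeneousComponent_algHom (isWeightedHomogeneous_rowShear_X (by lia)), hinv_r]

lemma isSweepStage_of_isLeadExponent [IsDomain R] [Infinite R] (hjz : j < z)
    (hbal : f ∈ C.balanced R M j (z + 1) k) (hinv : f ∈ C.shearInvariants R M (j + 1) (z + 1))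
    (hlt : C.rowShear R M j z f ∈ weightLT R (C.rowContent M z) (n + 1)) (hkn : k ≤ n)
    {l : σ →₀ ℕ} (hl : IsLeadExponent
      (weightedHomogeneousComponent (C.rowContent M z) n (C.rowShear R M j z f)) l) :
    IsSweepStage j z k M z fun p ↦ prefixSum (C.entry p) l := by
  obtain ⟨hcoeff, hweight⟩ := coeff_ne_zero_of_weightedHomogeneousComponent hl.1
  have hsum := isWeightedHomogeneous_add_rowShear hjz hbal
  have hrow (p : ℕ) (hjp : j < p) (hpz : p < z) :
      IsWeightedHomogeneous (C.rowContent M p) (C.rowShear R M j z f) k :=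
    isWeightedHomogeneous_rowShear (by lia) (mem_balanced.1 hbal p ⟨hjp.le, by lia⟩)
  have htotal := hsum hcoeff
  rw [weight_add_left, weight_rowContent, weight_rowContent, add_comm] at htotal
  have hrow_j : IsWeightedHomogeneous (C.rowContent M j)
      (weightedHomogeneousComponent (C.rowContent M z) n (C.rowShear R M j z f)) (2 * k - n) := by
    intro μ hμ
    obtain ⟨hμ, hμn⟩ := coeff_ne_zero_of_weightedHomogeneousComponent hμ
    have hμsum := hsum hμ
    rw [weight_add_left] at hμsum
    lia
  refine ⟨fun p hjp hpz hne ↦ ?_, htotal, ?_, fun r hjr hrz _ ↦ ?_, by lia, by lia⟩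
  · rw [← weight_rowContent, hrow p hjp (hpz.lt_of_ne hne) hcoeff]
  · rw [← weight_rowContent, hweight]
    exact hkn
  · have hfix := rowShear_top_component_eq_self hjz hbal hinv hlt hkn hjr hrz
    rcases hjr.eq_or_lt with rfl | hjr
    · exact isLow_of_isLeadExponent hl hfix hrow_j
    · exact isLow_of_isLeadExponent hl hfix
        (isWeightedHomogeneous_weightedHomogeneousComponent (hrow r hjr hrz) _ _)

lemma exists_component_ne_zero_of_rowShear_ne (hjz : j < z)
    (hbal : f ∈ C.balanced R M j (z + 1) k) (hne : C.rowShear R M j z f ≠ f) :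
    ∃ n, k < n ∧ C.rowShear R M j z f ∈ weightLT R (C.rowContent M z) (n + 1) ∧
      weightedHomogeneousComponent (C.rowContent M z) n (C.rowShear R M j z f) ≠ 0 := by
  have hj := mem_balanced.1 hbal j ⟨le_rfl, by lia⟩
  obtain ⟨μ, hμ⟩ := MvPolynomial.ne_zero_iff.1 (sub_ne_zero.2 hne)
  have hμj : Finsupp.weight (C.rowContent M j) μ < k :=
    mem_weightLT.1 (algHom_sub_mem_weightLT (rowShear_X_sub_mem_weightLT hjz.ne)
      (mem_weightLT_of_isWeightedHomogeneous hj k.lt_succ_self)) μ hμ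
  have hμf : coeff μ f = 0 := by
    by_contra h
    exact hμj.ne (hj h)
  rw [coeff_sub, hμf, sub_zero] at hμ
  obtain ⟨n, hn, hlt, hcomp⟩ := exists_weightedHomogeneousComponent_ne_zero hμ (C.rowContent M z)
  have hsum := isWeightedHomogeneous_add_rowShear hjz hbal hμ
  rw [weight_add_left] at hsum
  exact ⟨n, by lia, hlt, hcomp⟩

lemma mem_shearInvariants_of_rowShear_eq_self [IsDomain R] [Infinite R] (hjz : j < z)
    (hbal : f ∈ C.balanced R M j (z + 1) k) (hinv : f ∈ C.shearInvariants R M (j + 1) (z + 1))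
    (hf : C.rowShear R M j z f = f) : f ∈ C.shearInvariants R M j (z + 1) := by
  have hhom := mem_balanced.1 hbal
  have hfix (q : ℕ) (hjq : j < q) (hqz : q < z + 1) : C.rowShear R M j q f = f := by
    rcases (Nat.le_of_lt_succ hqz).eq_or_lt with rfl | hqz
    · exact hf
    · have h := rowShear_rowShear_eq_of_mem_shearInvariants hinv hjq hqz
      rw [hf] at h
      rw [h, hinv z ⟨by lia, by lia⟩ q ⟨hjq, by lia⟩ hqz.ne']
  rintro p ⟨hjp, hpz⟩ q ⟨hjq, hqz⟩ hpq
  rcases hjp.eq_or_lt with rfl | hjp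
  · exact hfix q (hjq.lt_of_ne hpq) hqz
  · rcases hjq.eq_or_lt with rfl | hjq
    · exact shear_swap_eq_self (C.strictMono j).injective (C.strictMono p).injective
        (C.entry_ne hpq.symm) (hfix p hjp hpz) (hhom j ⟨le_rfl, by lia⟩) (hhom p ⟨hjp.le, hpz⟩)
    · exact hinv p ⟨hjp, hpz⟩ q ⟨hjq, hqz⟩ hpq

end TopComponent

section Count

variable (K : Type*) [Field K] (C : VariableArray σ) (M lo hi : ℕ)

/-- A space of polynomials which is stable under the operations of a block of rows, together with a
set of exponents which contains its leading exponents and is stable under the combinatorial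
counterparts of these operations. -/
structure IsBlockStable (W : Submodule K (MvPolynomial σ K)) (Λ : Finset (σ →₀ ℕ)) : Prop where
  rowShear_mem : ∀ p ∈ Set.Ico lo hi, ∀ q ∈ Set.Ico lo hi, p ≠ q → ∀ f ∈ W,
    C.rowShear K M p q f ∈ W
  component_mem : ∀ p ∈ Set.Ico lo hi, ∀ m, ∀ f ∈ W,
    weightedHomogeneousComponent (C.rowContent M p) m f ∈ W
  leadExponent_mem : ∀ f ∈ W, ∀ l, IsLeadExponent f l → l ∈ Λ
  raiseClosed : C.RaiseClosed M lo (hi - 1) Λ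

variable {K C M lo hi} {k j z : ℕ} {W : Submodule K (MvPolynomial σ K)} {Λ : Finset (σ →₀ ℕ)}

lemma balanced_mono {lo' hi' : ℕ} (hlo : lo ≤ lo') (hhi : hi' ≤ hi) :
    C.balanced K M lo hi k ≤ C.balanced K M lo' hi' k := fun _ hf ↦
  mem_balanced.2 fun p hp ↦ mem_balanced.1 hf p ⟨hlo.trans hp.1, hp.2.trans_le hhi⟩

namespace IsBlockStable

lemma mem_shearInvariants_of_coeff_eq_zero [Infinite K] (h : C.IsBlockStable K M lo (z + 1) W Λ)
    (hlj : lo ≤ j) (hjz : j < z) {f : MvPolynomial σ K} (hW : f ∈ W)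
    (hbal : f ∈ C.balanced K M lo (z + 1) k) (hinv : f ∈ C.shearInvariants K M (j + 1) (z + 1))
    (hcoeff : ∀ l ∈ Λ, C.IsBalanced M lo j k l →
      IsSweepStage j z k M z (fun p ↦ prefixSum (C.entry p) l) →
      k < prefixSum (C.entry z) l M → coeff l (C.rowShear K M j z f) = 0) :
    f ∈ C.shearInvariants K M j (z + 1) := by
  have hbal_j := balanced_mono hlj le_rfl hbal
  refine mem_shearInvariants_of_rowShear_eq_self hjz hbal_j hinv ?_
  by_contra hne
  obtain ⟨n, hkn, hlt, hcomp⟩ := exists_component_ne_zero_of_rowShear_ne hjz hbal_j hne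
  obtain ⟨l, hl⟩ := exists_isLeadExponent hcomp
  obtain ⟨hlF, hln⟩ := coeff_ne_zero_of_weightedHomogeneousComponent hl.1
  refine hlF (hcoeff l (h.leadExponent_mem _ ?_ l hl) (fun p hp ↦ ?_)
    (isSweepStage_of_isLeadExponent hjz hbal_j hinv hlt hkn.le hl) ?_)
  · exact h.component_mem z ⟨by lia, by lia⟩ n _
      (h.rowShear_mem j ⟨hlj, by lia⟩ z ⟨by lia, by lia⟩ hjz.ne f hW)
  · have hp_lo := hp.1
    have hp_hi := hp.2
    rw [← weight_rowContent]
    exact isWeightedHomogeneous_rowShear (by lia) (mem_balanced.1 hbal p ⟨hp_lo, by lia⟩) hlF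
  · rwa [← weight_rowContent, hln]

open scoped Classical in
lemma card_sweepStage_top_le (h : C.IsBlockStable K M lo (z + 1) W Λ) (hlj : lo ≤ j)
    (hjz : j < z) :
    {l ∈ Λ | C.IsBalanced M lo j k l ∧
        IsSweepStage j z k M z fun p ↦ prefixSum (C.entry p) l}.card ≤
      {l ∈ Λ | C.IsBalanced M lo (z + 1) k l ∧ C.IsLowBlock M (j + 1) (z + 1) l}.card := by
  have hclosed : C.RaiseClosed M j z {l ∈ Λ | C.IsBalanced M lo j k l} := by
    intro r a l hl hjr hrz hlow ha
    rw [Finset.mem_filter] at hl ⊢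
    refine ⟨h.raiseClosed r a l hl.1 (hlj.trans hjr) hrz hlow ha, fun p hp ↦ ?_⟩
    have hpj := hp.2
    rw [prefixSum_raise_of_ne a (C.entry_ne (by lia)) (C.entry_ne (by lia))]
    exact hl.2 p hp
  have hcard := hclosed.card_isSweepStage_le k le_rfl hjz.le
  rw [Finset.filter_filter, Finset.filter_filter] at hcard
  refine hcard.trans (Finset.card_le_card (Finset.monotone_filter_right _ ?_))
  rintro l - ⟨hbal, hstage⟩
  refine ⟨fun p hp ↦ ?_, fun r hr hrz ↦ hstage.isLow r (by lia) (by lia) (by lia)⟩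
  rcases lt_trichotomy p j with hpj | rfl | hpj
  · exact hbal p ⟨hp.1, hpj⟩
  · have := hstage.total_add
    lia
  · exact hstage.total_eq p hpj (Nat.le_of_lt_succ hp.2) hpj.ne'

lemma finiteDimensional (h : C.IsBlockStable K M lo hi W Λ) : FiniteDimensional K W :=
  (finrank_le_card_of_exists_coeff_ne_zero fun f hf hf0 ↦
    (exists_isLeadExponent hf0).imp fun l hl ↦ ⟨h.leadExponent_mem f hf l hl, hl.1⟩).1

end IsBlockStable

lemma IsBalanced.isSweepStage {l : σ →₀ ℕ} (hbal : C.IsBalanced M lo (z + 1) k l)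
    (hlow : C.IsLowBlock M j (z + 1) l) (hlj : lo ≤ j) (hjz : j < z) :
    IsSweepStage j z k M z fun p ↦ prefixSum (C.entry p) l where
  total_eq p hjp hpz _ := hbal p ⟨by lia, by lia⟩
  total_add := by
    rw [hbal z ⟨by lia, by lia⟩, hbal j ⟨hlj, by lia⟩, two_mul]
  le_total := (hbal z ⟨by lia, by lia⟩).ge
  isLow r hjr hrz _ := hlow r hjr (by lia)
  interlace := by lia
  interlace_add := by lia

namespace IsBlockStable

open scoped Classical in
lemma card_isLowBlock_le_of_succ [Infinite K] (h : C.IsBlockStable K M lo (z + 1) W Λ)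
    (hlj : lo ≤ j) (hjz : j < z)
    (hsucc : {l ∈ Λ | C.IsBalanced M lo (z + 1) k l ∧ C.IsLowBlock M (j + 1) (z + 1) l}.card ≤
      Module.finrank K ↥(W ⊓ C.balanced K M lo (z + 1) k ⊓
        C.shearInvariants K M (j + 1) (z + 1))) :
    {l ∈ Λ | C.IsBalanced M lo (z + 1) k l ∧ C.IsLowBlock M j (z + 1) l}.card ≤
      Module.finrank K ↥(W ⊓ C.balanced K M lo (z + 1) k ⊓ C.shearInvariants K M j (z + 1)) := by
  have := h.finiteDimensional
  set low := {l ∈ Λ | C.IsBalanced M lo (z + 1) k l ∧ C.IsLowBlock M j (z + 1) l}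
  set stage := {l ∈ Λ | C.IsBalanced M lo j k l ∧
    IsSweepStage j z k M z fun p ↦ prefixSum (C.entry p) l}
  have hstage : stage.card ≤ _ := h.card_sweepStage_top_le hlj hjz
  have hsub : low ⊆ stage := Finset.monotone_filter_right _ fun l _ ⟨hbal, hlow⟩ ↦
    ⟨fun p hp ↦ hbal p ⟨hp.1, by have := hp.2; lia⟩, hbal.isSweepStage hlow hlj hjz⟩
  have hrank := finrank_le_finrank_add_card
    (V := W ⊓ C.balanced K M lo (z + 1) k ⊓ C.shearInvariants K M (j + 1) (z + 1))
    (V' := W ⊓ C.balanced K M lo (z + 1) k ⊓ C.shearInvariants K M j (z + 1)) (stage \ low)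
    (fun l ↦ lcoeff K l ∘ₗ (C.rowShear K M j z).toLinearMap) fun f hf hzero ↦
      ⟨hf.1, h.mem_shearInvariants_of_coeff_eq_zero hlj hjz hf.1.1 hf.1.2 hf.2
        fun l hl hbal hsweep hlt ↦ hzero l ?_⟩
  · have hcard := Finset.card_sdiff_add_card_eq_card hsub
    lia
  · refine Finset.mem_sdiff.2 ⟨Finset.mem_filter.2 ⟨hl, hbal, hsweep⟩, fun hlow ↦ ?_⟩
    exact hlt.ne' ((Finset.mem_filter.1 hlow).2.1 z ⟨by lia, by lia⟩)

open scoped Classical in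
theorem card_isLowBlock_le_finrank [Infinite K] (h : C.IsBlockStable K M lo hi W Λ)
    (hbal : {l ∈ Λ | C.IsBalanced M lo hi k l}.card ≤
      Module.finrank K ↥(W ⊓ C.balanced K M lo hi k)) :
    {l ∈ Λ | C.IsBalanced M lo hi k l ∧ C.IsLowBlock M lo hi l}.card ≤
      Module.finrank K ↥(W ⊓ C.balanced K M lo hi k ⊓ C.shearInvariants K M lo hi) := by
  rcases le_or_gt hi (lo + 1) with hle | hlt
  · rw [shearInvariants_eq_top hle, inf_top_eq]
    simpa only [isLowBlock_of_le hle, and_true] using hbal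
  · obtain ⟨z, rfl⟩ : ∃ z, hi = z + 1 := ⟨hi - 1, by lia⟩
    refine Nat.decreasingInduction' (m := lo) (n := z)
      (P := fun j ↦ {l ∈ Λ | C.IsBalanced M lo (z + 1) k l ∧ C.IsLowBlock M j (z + 1) l}.card ≤
        Module.finrank K
          ↥(W ⊓ C.balanced K M lo (z + 1) k ⊓ C.shearInvariants K M j (z + 1)))
      (fun j hjz hlj ↦ h.card_isLowBlock_le_of_succ hlj hjz) (by lia) ?_
    rw [shearInvariants_eq_top le_rfl, inf_top_eq]
    simpa only [isLowBlock_of_le le_rfl, and_true] using hbal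

end IsBlockStable

end Count

end VariableArray

namespace VariableArray

variable {σ : Type*} [LinearOrder σ] {C D : VariableArray σ} {N m M : ℕ}

lemma mul_add_lt_of_lt {e q : ℕ} (he : e < m) (hq : q < N) : e * N + q < m * N :=
  calc e * N + q < (e + 1) * N := by lia
    _ ≤ m * N := Nat.mul_le_mul_right N he

lemma exists_eq_mul_add_of_lt {c : ℕ} (hc : c < m * N) : ∃ e < m, ∃ q < N, c = e * N + q :=
  ⟨c / N, Nat.div_lt_of_lt_mul (by lia), c % N,
    Nat.mod_lt _ (Nat.pos_of_ne_zero fun h ↦ by simp [h] at hc), (Nat.div_add_mod' c N).symm⟩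

lemma IsBlockTranspose.rowContent_entry_eq (h : C.IsBlockTranspose D N) {p q c : ℕ} (s : ℕ)
    (hp : p < N) (hq : q < N) (hc : c < m * N) :
    D.rowContent (m * N) s (C.entry p c) = D.rowContent (m * N) s (C.entry q c) := by
  obtain ⟨e, he, i, hi, rfl⟩ := exists_eq_mul_add_of_lt hc
  rw [h e p i hp hi, h e q i hq hi, rowContent_entry _ _ (mul_add_lt_of_lt he hp),
    rowContent_entry _ _ (mul_add_lt_of_lt he hq)]

/- Row operations act by multiplication on the left, column operations by multiplication on the
right. -/
lemma IsBlockTranspose.rowShear_comm (h : C.IsBlockTranspose D N) {R : Type*} [CommRing R]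
    {p q p' q' : ℕ} (hp : p < N) (hq : q < N) (hp' : p' < N) (hq' : q' < N)
    (f : MvPolynomial σ R) :
    C.rowShear R (m * N) p q (D.rowShear R (m * N) p' q' f) =
      D.rowShear R (m * N) p' q' (C.rowShear R (m * N) p q f) := by
  suffices hcomp : (C.rowShear R (m * N) p q).comp (D.rowShear R (m * N) p' q') =
      (D.rowShear R (m * N) p' q').comp (C.rowShear R (m * N) p q) from DFunLike.congr_fun hcomp f
  refine MvPolynomial.algHom_ext fun v ↦ ?_
  rw [AlgHom.comp_apply, AlgHom.comp_apply]
  by_cases hv : ∃ e < m, ∃ s < N, ∃ t < N, v = C.entry s (e * N + t)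
  · obtain ⟨e, he, s, hs, t, ht, rfl⟩ := hv
    have shear_C {i j : ℕ} (hj : j < N) : C.rowShear R (m * N) p q (X (C.entry i (e * N + j))) =
        X (C.entry i (e * N + j)) + if i = p then X (C.entry q (e * N + j)) else 0 :=
      rowShear_X_entry _ _ _ (mul_add_lt_of_lt he hj)
    have shear_D {i j : ℕ} (hi : i < N) (hj : j < N) :
        D.rowShear R (m * N) p' q' (X (C.entry i (e * N + j))) =
          X (C.entry i (e * N + j)) + if j = p' then X (C.entry i (e * N + q')) else 0 := by
      rw [h e i j hi hj, rowShear_X_entry _ _ _ (mul_add_lt_of_lt he hi), h e i q' hi hq']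
    simp only [shear_C ht, shear_D hs ht, map_add, apply_ite (C.rowShear R (m * N) p q),
      apply_ite (D.rowShear R (m * N) p' q'), map_zero, shear_C hq', shear_D hq ht]
    split_ifs <;> ring
  · have hC : C.rowShear R (m * N) p q (X v) = X v := shear_X_of_ne fun c hc hvc ↦ by
      obtain ⟨e, he, t, ht, rfl⟩ := exists_eq_mul_add_of_lt (Finset.mem_range.1 hc)
      exact hv ⟨e, he, p, hp, t, ht, hvc⟩
    have hD : D.rowShear R (m * N) p' q' (X v) = X v := shear_X_of_ne fun c hc hvc ↦ by
      obtain ⟨e, he, t, ht, rfl⟩ := exists_eq_mul_add_of_lt (Finset.mem_range.1 hc)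
      exact hv ⟨e, he, t, ht, p', hp', hvc.trans (h e t p' ht hp').symm⟩
    rw [hD, hC, hD]

/-- The operations on the rows `I` of `C` and those on the rows `J` of `D`, restricted to the first
`M` columns, are independent of each other: either these are disjoint sets of rows of the same
array, or one are rows and the other columns of the same square matrices. -/
def IsIndependent (M : ℕ) (C : VariableArray σ) (I : Set ℕ) (D : VariableArray σ) (J : Set ℕ) :
    Prop :=
  C = D ∧ Disjoint I J ∨
    ∃ N m, C.IsBlockTranspose D N ∧ M = m * N ∧ I ⊆ Set.Iio N ∧ J ⊆ Set.Iio N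

namespace IsIndependent

variable {I J : Set ℕ}

lemma rowContent_entry_eq (h : IsIndependent M C I D J) {s p q c : ℕ} (hs : s ∈ J) (hp : p ∈ I)
    (hq : q ∈ I) (hc : c < M) :
    D.rowContent M s (C.entry p c) = D.rowContent M s (C.entry q c) := by
  rcases h with ⟨rfl, hIJ⟩ | ⟨N, m, h, rfl, hI, -⟩
  · rw [rowContent_entry _ _ hc, rowContent_entry _ _ hc, if_neg (hIJ.ne_of_mem hp hs),
      if_neg (hIJ.ne_of_mem hq hs)]
  · exact h.rowContent_entry_eq s (hI hp) (hI hq) hc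

lemma rowShear_comm (h : IsIndependent M C I D J) {R : Type*} [CommRing R] {p q p' q' : ℕ}
    (hp : p ∈ I) (hq : q ∈ I) (hp' : p' ∈ J) (hq' : q' ∈ J) (f : MvPolynomial σ R) :
    C.rowShear R M p q (D.rowShear R M p' q' f) = D.rowShear R M p' q' (C.rowShear R M p q f) := by
  rcases h with ⟨rfl, hIJ⟩ | ⟨N, m, h, rfl, hI, hJ⟩
  · exact VariableArray.rowShear_comm (hIJ.ne_of_mem hq hp') (hIJ.ne_of_mem hp hq') f
  · exact h.rowShear_comm (hI hp) (hI hq) (hJ hp') (hJ hq') f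

lemma isLow_raise (h : IsIndependent M C I D J) {r k a : ℕ} (hr : r ∈ I) (hr' : r + 1 ∈ I)
    (hk : k ∈ J) (hk' : k + 1 ∈ J) {l : σ →₀ ℕ}
    (hl : IsLow (prefixSum (D.entry k) l) (prefixSum (D.entry (k + 1)) l) M) :
    IsLow (prefixSum (D.entry k) (raise (C.entry r) (C.entry (r + 1)) M a l))
      (prefixSum (D.entry (k + 1)) (raise (C.entry r) (C.entry (r + 1)) M a l)) M := by
  rcases h with ⟨rfl, hIJ⟩ | ⟨N, m, h, hM, hI, hJ⟩
  · rwa [prefixSum_raise_of_ne a (C.entry_ne (hIJ.ne_of_mem hr hk).symm)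
      (C.entry_ne (hIJ.ne_of_mem hr' hk).symm),
      prefixSum_raise_of_ne a (C.entry_ne (hIJ.ne_of_mem hr hk').symm)
      (C.entry_ne (hIJ.ne_of_mem hr' hk').symm)]
  · exact h.isLow_raise hM (hI hr') (hJ hk') hl

end IsIndependent

end VariableArray

/-- A family of pairwise independent blocks of rows, each with a degree prescribed for all of its
rows, and a family of weights with prescribed values. The weights are constant along the part of a
column lying in a block, and only finitely many exponents have the prescribed values. -/
structure BlockSystem (σ β ι : Type*) [LinearOrder σ] where
  /-- The common number of columns of all blocks. -/
  width : ℕ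
  /-- The array containing a block. -/
  array : β → VariableArray σ
  /-- The first row of a block. -/
  lo : β → ℕ
  /-- The row following the last row of a block. -/
  hi : β → ℕ
  /-- The degree prescribed for the rows of a block. -/
  degree : β → ℕ
  /-- The weights. -/
  weight : ι → σ → ℕ
  /-- The prescribed values of the weights. -/
  target : ι → ℕ
  isIndependent : Pairwise fun b b' ↦ VariableArray.IsIndependent width
    (array b) (Set.Ico (lo b) (hi b)) (array b') (Set.Ico (lo b') (hi b'))
  weight_entry_eq : ∀ i b, ∀ p ∈ Set.Ico (lo b) (hi b), ∀ q ∈ Set.Ico (lo b) (hi b), ∀ c < width,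
    weight i ((array b).entry p c) = weight i ((array b).entry q c)
  finite_weight_eq : {l : σ →₀ ℕ | ∀ i, Finsupp.weight (weight i) l = target i}.Finite

namespace BlockSystem

open VariableArray

variable {σ β ι : Type*} [LinearOrder σ] (B : BlockSystem σ β ι)

/-- The polynomials of the prescribed weights which have the prescribed degree in the rows of the
blocks in `s` and are invariant under the row operations of the blocks in `t`. -/
noncomputable def space (K : Type*) [CommRing K] (s t : Set β) : Submodule K (MvPolynomial σ K) :=
  (⨅ i, weightedHomogeneousSubmodule K (B.weight i) (B.target i)) ⊓
    (⨅ b ∈ s, (B.array b).balanced K B.width (B.lo b) (B.hi b) (B.degree b)) ⊓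
      ⨅ b ∈ t, (B.array b).shearInvariants K B.width (B.lo b) (B.hi b)

open scoped Classical in
/-- The exponents which satisfy the conditions that hold for the leading exponents of the elements
of `space`. -/
noncomputable def exponents (s t : Set β) : Finset (σ →₀ ℕ) :=
  {l ∈ B.finite_weight_eq.toFinset |
    (∀ b ∈ s, (B.array b).IsBalanced B.width (B.lo b) (B.hi b) (B.degree b) l) ∧
      ∀ b ∈ t, (B.array b).IsLowBlock B.width (B.lo b) (B.hi b) l}

variable {B}

section CommRing

variable {K : Type*} [CommRing K] {s t : Set β} {f : MvPolynomial σ K} {l : σ →₀ ℕ} {b : β}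

lemma mem_space : f ∈ B.space K s t ↔
    (∀ i, IsWeightedHomogeneous (B.weight i) f (B.target i)) ∧
      (∀ b ∈ s, f ∈ (B.array b).balanced K B.width (B.lo b) (B.hi b) (B.degree b)) ∧
        ∀ b ∈ t, f ∈ (B.array b).shearInvariants K B.width (B.lo b) (B.hi b) := by
  simp only [space, Submodule.mem_inf, Submodule.mem_iInf, mem_weightedHomogeneousSubmodule,
    and_assoc]

lemma mem_exponents : l ∈ B.exponents s t ↔
    (∀ i, Finsupp.weight (B.weight i) l = B.target i) ∧
      (∀ b ∈ s, (B.array b).IsBalanced B.width (B.lo b) (B.hi b) (B.degree b) l) ∧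
        ∀ b ∈ t, (B.array b).IsLowBlock B.width (B.lo b) (B.hi b) l := by
  simp only [exponents, Finset.mem_filter, Set.Finite.mem_toFinset, Set.mem_ofPred_eq]

lemma space_compl_inf_balanced :
    B.space K {b}ᶜ t ⊓ (B.array b).balanced K B.width (B.lo b) (B.hi b) (B.degree b) =
      B.space K Set.univ t := by
  ext f
  simp only [Submodule.mem_inf, mem_space, Set.mem_compl_singleton_iff, Set.mem_univ, forall_const]
  refine ⟨fun h ↦ ⟨h.1.1, fun b' ↦ ?_, h.1.2.2⟩,
    fun h ↦ ⟨⟨h.1, fun b' _ ↦ h.2.1 b', h.2.2⟩, h.2.1 b⟩⟩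
  rcases eq_or_ne b' b with rfl | hb'
  · exact h.2
  · exact h.1.2.1 b' hb'

lemma space_inf_shearInvariants :
    B.space K s t ⊓ (B.array b).shearInvariants K B.width (B.lo b) (B.hi b) =
      B.space K s (insert b t) := by
  ext f
  simp only [Submodule.mem_inf, mem_space, Set.forall_mem_insert]
  tauto

open scoped Classical in
lemma filter_exponents_compl_isBalanced :
    {l ∈ B.exponents {b}ᶜ t | (B.array b).IsBalanced B.width (B.lo b) (B.hi b) (B.degree b) l} =
      B.exponents Set.univ t := by
  ext l
  simp only [Finset.mem_filter, mem_exponents, Set.mem_compl_singleton_iff, Set.mem_univ,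
    forall_const]
  refine ⟨fun h ↦ ⟨h.1.1, fun b' ↦ ?_, h.1.2.2⟩,
    fun h ↦ ⟨⟨h.1, fun b' _ ↦ h.2.1 b', h.2.2⟩, h.2.1 b⟩⟩
  rcases eq_or_ne b' b with rfl | hb'
  · exact h.2
  · exact h.1.2.1 b' hb'

open scoped Classical in
lemma filter_exponents_isLowBlock :
    {l ∈ B.exponents s t | (B.array b).IsLowBlock B.width (B.lo b) (B.hi b) l} =
      B.exponents s (insert b t) := by
  ext l
  simp only [Finset.mem_filter, mem_exponents, Set.forall_mem_insert]
  tauto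

lemma mem_exponents_of_isLeadExponent [IsDomain K] [Infinite K] (hts : t ⊆ s)
    (hf : f ∈ B.space K s t) (hl : IsLeadExponent f l) : l ∈ B.exponents s t := by
  have hf := mem_space.1 hf
  exact mem_exponents.2 ⟨fun i ↦ hf.1 i hl.1,
    fun b hb ↦ isBalanced_of_mem_balanced (hf.2.1 b hb) hl.1,
    fun b hb ↦ isLowBlock_of_isLeadExponent hl (hf.2.1 b (hts hb)) (hf.2.2 b hb)⟩

lemma rowShear_mem_space (hb : b ∉ t) {p q : ℕ} (hp : p ∈ Set.Ico (B.lo b) (B.hi b))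
    (hq : q ∈ Set.Ico (B.lo b) (B.hi b)) (hf : f ∈ B.space K {b}ᶜ t) :
    (B.array b).rowShear K B.width p q f ∈ B.space K {b}ᶜ t := by
  obtain ⟨hweight, hbal, hinv⟩ := mem_space.1 hf
  refine mem_space.2 ⟨fun i ↦ ?_, fun b' hb' ↦ mem_balanced.2 fun r hr ↦ ?_,
    fun b' hb' p' hp' q' hq' hne ↦ ?_⟩
  · exact isWeightedHomogeneous_algHom (isWeightedHomogeneous_shear_X fun c hc ↦
      B.weight_entry_eq i b p hp q hq c (Finset.mem_range.1 hc)) (hweight i)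
  · exact isWeightedHomogeneous_algHom (isWeightedHomogeneous_shear_X fun c hc ↦
      (B.isIndependent (Ne.symm hb')).rowContent_entry_eq hr hp hq (Finset.mem_range.1 hc))
      (mem_balanced.1 (hbal b' hb') r hr)
  · have hbb' : b' ≠ b := fun h ↦ hb (h ▸ hb')
    rw [(B.isIndependent hbb').rowShear_comm hp' hq' hp hq, hinv b' hb' p' hp' q' hq' hne]

lemma weightedHomogeneousComponent_mem_space (hb : b ∉ t) {p : ℕ}
    (hp : p ∈ Set.Ico (B.lo b) (B.hi b)) (n : ℕ) (hf : f ∈ B.space K s t) :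
    weightedHomogeneousComponent ((B.array b).rowContent B.width p) n f ∈ B.space K s t := by
  obtain ⟨hweight, hbal, hinv⟩ := mem_space.1 hf
  refine mem_space.2 ⟨fun i ↦ isWeightedHomogeneous_weightedHomogeneousComponent (hweight i) _ _,
    fun b' hb' ↦ mem_balanced.2 fun r hr ↦
      isWeightedHomogeneous_weightedHomogeneousComponent (mem_balanced.1 (hbal b' hb') r hr) _ _,
    fun b' hb' p' hp' q' hq' hne ↦ ?_⟩
  have hbb' : b' ≠ b := fun h ↦ hb (h ▸ hb')
  rw [← weightedHomogeneousComponent_algHom, hinv b' hb' p' hp' q' hq' hne]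
  exact isWeightedHomogeneous_shear_X fun c hc ↦
    (B.isIndependent hbb').rowContent_entry_eq hp hp' hq' (Finset.mem_range.1 hc)

lemma raise_mem_exponents (hb : b ∉ t) {r a : ℕ} (hr : r ∈ Set.Ico (B.lo b) (B.hi b))
    (hr' : r + 1 ∈ Set.Ico (B.lo b) (B.hi b)) (hl : l ∈ B.exponents {b}ᶜ t) :
    raise ((B.array b).entry r) ((B.array b).entry (r + 1)) B.width a l ∈ B.exponents {b}ᶜ t := by
  obtain ⟨hweight, hbal, hlow⟩ := mem_exponents.1 hl
  have hinj := ((B.array b).strictMono (r + 1)).injective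
  refine mem_exponents.2 ⟨fun i ↦ ?_, fun b' hb' p hp ↦ ?_, fun b' hb' k hk hk' ↦ ?_⟩
  · rw [weight_raise a hinj (B.weight_entry_eq i b r hr (r + 1) hr'), hweight i]
  · rw [← weight_rowContent, weight_raise a hinj fun c hc ↦
      (B.isIndependent (Ne.symm hb')).rowContent_entry_eq hp hr hr' hc, weight_rowContent,
      hbal b' hb' p hp]
  · have hbb' : b ≠ b' := fun h ↦ hb (h ▸ hb')
    exact (B.isIndependent hbb').isLow_raise hr hr' ⟨hk, by lia⟩ ⟨by lia, hk'⟩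
      (hlow b' hb' k hk hk')

end CommRing

variable {K : Type*} [Field K] {s t : Set β}

lemma isBlockStable_space [Infinite K] {b : β} (hb : b ∉ t) :
    (B.array b).IsBlockStable K B.width (B.lo b) (B.hi b) (B.space K {b}ᶜ t)
      (B.exponents {b}ᶜ t) where
  rowShear_mem _ hp _ hq _ _ hf := rowShear_mem_space hb hp hq hf
  component_mem _ hp n _ hf := weightedHomogeneousComponent_mem_space hb hp n hf
  leadExponent_mem _ hf _ hl :=
    mem_exponents_of_isLeadExponent (Set.subset_compl_singleton_iff.2 hb) hf hl
  raiseClosed r a l hl hlo hhi _ _ :=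
    raise_mem_exponents hb ⟨hlo, by lia⟩ ⟨by lia, by lia⟩ hl

lemma finiteDimensional_space_and_finrank_le [Infinite K] (hts : t ⊆ s) :
    FiniteDimensional K (B.space K s t) ∧
      Module.finrank K (B.space K s t) ≤ (B.exponents s t).card :=
  finrank_le_card_of_exists_coeff_ne_zero fun _ hf hf0 ↦ (exists_isLeadExponent hf0).imp
    fun _ hl ↦ ⟨mem_exponents_of_isLeadExponent hts hf hl, hl.1⟩

lemma card_exponents_empty_le [Infinite K] :
    (B.exponents s ∅).card ≤ Module.finrank K (B.space K s ∅) := by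
  have := (finiteDimensional_space_and_finrank_le (B := B) (K := K) (Set.empty_subset s)).1
  have hmem (l : B.exponents s ∅) : monomial (l : σ →₀ ℕ) (1 : K) ∈ B.space K s ∅ := by
    obtain ⟨hweight, hbal, -⟩ := mem_exponents.1 l.2
    refine mem_space.2 ⟨fun i ↦ isWeightedHomogeneous_monomial _ _ _ (hweight i),
      fun b hb ↦ mem_balanced.2 fun p hp ↦ isWeightedHomogeneous_monomial _ _ _ ?_,
      fun b hb ↦ hb.elim⟩
    rw [weight_rowContent, hbal b hb p hp]
  have hindep : LinearIndependent K fun l : B.exponents s ∅ ↦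
      (⟨monomial (l : σ →₀ ℕ) (1 : K), hmem l⟩ : B.space K s ∅) := by
    refine LinearIndependent.of_comp (Submodule.subtype _) ?_
    have hbasis := (basisMonomials σ K).linearIndependent
    rw [coe_basisMonomials] at hbasis
    exact hbasis.comp (fun l : B.exponents s ∅ ↦ (l : σ →₀ ℕ)) Subtype.val_injective
  simpa only [Fintype.card_coe] using hindep.fintype_card_le_finrank

lemma card_exponents_insert_le [Infinite K] {b : β} (hb : b ∉ t)
    (h : (B.exponents Set.univ t).card ≤ Module.finrank K (B.space K Set.univ t)) :
    (B.exponents Set.univ (insert b t)).card ≤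
      Module.finrank K (B.space K Set.univ (insert b t)) := by
  have hstable := isBlockStable_space (B := B) (K := K) hb
  have hle := hstable.card_isLowBlock_le_finrank (k := B.degree b) <| by
    rwa [filter_exponents_compl_isBalanced, space_compl_inf_balanced]
  rwa [← Finset.filter_filter, filter_exponents_compl_isBalanced, filter_exponents_isLowBlock,
    space_compl_inf_balanced, space_inf_shearInvariants] at hle

theorem finrank_space_univ [Finite β] [Infinite K] :
    Module.finrank K (B.space K Set.univ Set.univ) = (B.exponents Set.univ Set.univ).card := by
  refine (finiteDimensional_space_and_finrank_le subset_rfl).2.antisymm ?_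
  suffices h : ∀ t : Set β, t.Finite →
      (B.exponents Set.univ t).card ≤ Module.finrank K (B.space K Set.univ t) from
    h _ Set.finite_univ
  intro t ht
  induction t, ht using Set.Finite.induction_on with
  | empty => exact card_exponents_empty_le
  | insert hb _ ih => exact card_exponents_insert_le hb ih

end BlockSystem

section MatrixInduction

variable {n K : Type*} [Fintype n] [DecidableEq n] [Field K]

lemma transvection_eq_diagonal_mul_mul {i j : n} (hij : i ≠ j) {c : K} (hc : c ≠ 0) :
    transvection i j c = diagonal (Function.update 1 i c) * transvection i j 1 *
      diagonal (Function.update 1 i c⁻¹) := by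
  ext x y
  rw [mul_diagonal, diagonal_mul, transvection, transvection, Matrix.add_apply, Matrix.add_apply,
    Matrix.one_apply, Matrix.single_apply, Matrix.single_apply]
  rcases eq_or_ne x i with rfl | hx <;> rcases eq_or_ne y x with rfl | hy
  · simp [hij.symm, hc]
  · simp [hy, hy.symm]
  · simp [hx, hx.symm]
  · rcases eq_or_ne y i with rfl | hy' <;> simp [*, hy.symm, hx.symm]

lemma prod_diagonal_update_induction {P : Matrix n n K → Prop} (hone : P 1)
    (hmul : ∀ A B, P A → P B → P (A * B))
    (hdiag : ∀ (i : n) (c : K), c ≠ 0 → P (diagonal (Function.update 1 i c)))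
    (D : n → K) (hD : ∀ i, D i ≠ 0) : P (diagonal D) := by
  suffices h : ∀ s : Finset n, P (diagonal fun i ↦ if i ∈ s then D i else 1) by
    simpa only [Finset.mem_univ, if_true] using h Finset.univ
  intro s
  induction s using Finset.induction_on with
  | empty => simpa only [Finset.notMem_empty, if_false, diagonal_one] using hone
  | insert i s hi ih =>
    convert hmul _ _ (hdiag i (D i) (hD i)) ih using 1
    rw [diagonal_mul_diagonal]
    congr 1
    funext x
    rcases eq_or_ne x i with rfl | hx
    · simp [hi]
    · simp [hx]

lemma matrix_induction_of_det_ne_zero {P : Matrix n n K → Prop} (hone : P 1)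
    (hmul : ∀ A B, P A → P B → P (A * B))
    (hdiag : ∀ (i : n) (c : K), c ≠ 0 → P (diagonal (Function.update 1 i c)))
    (htransvec : ∀ i j, i ≠ j → P (transvection i j 1)) {S : Matrix n n K} (hS : S.det ≠ 0) :
    P S := by
  refine diagonal_transvection_induction_of_det_ne_zero P S hS (fun D hD ↦ ?_) ?_
    fun A B _ _ ↦ hmul A B
  · rw [det_diagonal, Finset.prod_ne_zero_iff] at hD
    exact prod_diagonal_update_induction hone hmul hdiag D fun i ↦ hD i (Finset.mem_univ i)
  · rintro ⟨i, j, hij, c⟩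
    rw [TransvectionStruct.toMatrix_mk]
    rcases eq_or_ne c 0 with rfl | hc
    · rwa [transvection_zero]
    · rw [transvection_eq_diagonal_mul_mul hij hc]
      exact hmul _ _ (hmul _ _ (hdiag i c hc) (htransvec i j hij)) (hdiag i _ (inv_ne_zero hc))

lemma det_diagonal_update (i : n) (c : K) : (diagonal (Function.update 1 i c)).det = c := by
  rw [det_diagonal, Finset.prod_update_of_mem (Finset.mem_univ i)]
  simp only [Pi.one_apply, Finset.prod_const_one, mul_one]

end MatrixInduction

namespace VariableArray

variable {σ : Type*} [LinearOrder σ] (C : VariableArray σ) (M lo : ℕ) {n : ℕ}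

lemma injective_entry_add :
    Function.Injective fun rc : Fin n × Fin M ↦ C.entry (lo + rc.1) rc.2 := fun rc rc' h ↦ by
  obtain ⟨hr, hc⟩ := C.injective2 h
  exact Prod.ext (Fin.ext (Nat.add_left_cancel hr)) (Fin.ext hc)

section CommSemiring

variable {R : Type*} [CommSemiring R]

/-- The point obtained from `w` by multiplying the matrix formed by the rows
`lo, …, lo + n - 1` of the array, truncated to `M` columns, from the left by `S`. -/
noncomputable def rowMul (S : Matrix (Fin n) (Fin n) R) (w : σ → R) : σ → R :=
  Function.extend (fun rc : Fin n × Fin M ↦ C.entry (lo + rc.1) rc.2)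
    (fun rc ↦ ∑ q, S rc.1 q * w (C.entry (lo + q) rc.2)) w

variable {C M lo} {S T : Matrix (Fin n) (Fin n) R} {w : σ → R}

lemma rowMul_entry (r : Fin n) {c : ℕ} (hc : c < M) :
    C.rowMul M lo S w (C.entry (lo + r) c) = ∑ q, S r q * w (C.entry (lo + q) c) :=
  (C.injective_entry_add M lo).extend_apply _ w (r, ⟨c, hc⟩)

lemma rowMul_of_ne {v : σ} (hv : ∀ r : Fin n, ∀ c < M, v ≠ C.entry (lo + r) c) :
    C.rowMul M lo S w v = w v :=
  Function.extend_apply' _ _ _ fun ⟨rc, h⟩ ↦ hv rc.1 rc.2 rc.2.2 h.symm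

lemma rowMul_entry_of_ne {p : ℕ} (hp : ∀ r : Fin n, p ≠ lo + r) (c : ℕ) :
    C.rowMul M lo S w (C.entry p c) = w (C.entry p c) :=
  rowMul_of_ne fun r _ _ ↦ C.entry_ne (hp r) _ _

omit [CommSemiring R] in
lemma funext_block {w w' : σ → R}
    (hentry : ∀ r : Fin n, ∀ c < M, w (C.entry (lo + r) c) = w' (C.entry (lo + r) c))
    (hne : ∀ v, (∀ r : Fin n, ∀ c < M, v ≠ C.entry (lo + r) c) → w v = w' v) : w = w' := by
  funext v
  by_cases h : ∀ r : Fin n, ∀ c < M, v ≠ C.entry (lo + r) c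
  · exact hne v h
  · push Not at h
    obtain ⟨r, c, hc, rfl⟩ := h
    exact hentry r c hc

lemma rowMul_one : C.rowMul M lo (1 : Matrix (Fin n) (Fin n) R) w = w :=
  C.funext_block (M := M)
    (fun r c hc ↦ by simp only [rowMul_entry r hc, Matrix.one_apply, ite_mul, one_mul, zero_mul,
      Finset.sum_ite_eq, Finset.mem_univ, if_true])
    fun v hv ↦ rowMul_of_ne hv

lemma rowMul_mul : C.rowMul M lo (S * T) w = C.rowMul M lo S (C.rowMul M lo T w) := by
  refine C.funext_block (M := M) (lo := lo) (n := n) (fun r c hc ↦ ?_) fun v hv ↦ ?_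
  · simp only [rowMul_entry _ hc, Matrix.mul_apply, Finset.sum_mul, Finset.mul_sum, mul_assoc]
    exact Finset.sum_comm
  · simp only [rowMul_of_ne hv]

lemma rowMul_diagonal_update (r : Fin n) (c : R) :
    C.rowMul M lo (diagonal (Function.update 1 r c)) w =
      fun v ↦ c ^ C.rowContent M (lo + r) v * w v := by
  refine C.funext_block (M := M) (lo := lo) (n := n) (fun p i hi ↦ ?_) fun v hv ↦ ?_
  · rw [rowMul_entry p hi, rowContent_entry _ _ hi]
    simp only [diagonal_apply, ite_mul, zero_mul, Finset.sum_ite_eq, Finset.mem_univ, if_true]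
    rcases eq_or_ne p r with rfl | hp
    · rw [Function.update_self, if_pos rfl, pow_one]
    · rw [Function.update_of_ne hp, if_neg (fun h ↦ hp (Fin.ext (Nat.add_left_cancel h))),
        pow_zero, Pi.one_apply]
  · have hcontent : C.rowContent M (lo + r) v = 0 :=
      content_eq_zero fun i hi ↦ hv r i (Finset.mem_range.1 hi)
    rw [rowMul_of_ne hv, hcontent, pow_zero, one_mul]

end CommSemiring

section Ring

variable {C M lo} {R : Type*} [CommRing R] (w : σ → R) (F : MvPolynomial σ R)

lemma eval_rowMul_transvection (p q : Fin n) :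
    eval (C.rowMul M lo (transvection p q 1) w) F =
      eval w (C.rowShear R M (lo + p) (lo + q) F) := by
  suffices h : aeval (C.rowMul M lo (transvection p q 1) w) =
      (aeval w).comp (C.rowShear R M (lo + p) (lo + q)) from DFunLike.congr_fun h F
  refine MvPolynomial.algHom_ext fun v ↦ ?_
  rw [aeval_X]
  refine congrFun (C.funext_block (M := M) (lo := lo) (n := n)
    (w' := fun v ↦ aeval w (C.rowShear R M (lo + p) (lo + q) (X v)))
    (fun r c hc ↦ ?_) fun v hv ↦ ?_) v
  · rw [rowMul_entry r hc, rowShear_X_entry _ _ _ hc, map_add, aeval_X, transvection]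
    simp only [Matrix.add_apply, Matrix.one_apply, add_mul, ite_mul, one_mul, zero_mul,
      Finset.sum_add_distrib, Finset.sum_ite_eq, Finset.mem_univ, if_true, Matrix.single_apply,
      ite_and, Finset.sum_ite_irrel, Finset.sum_const_zero]
    rcases eq_or_ne r p with rfl | hr
    · rw [if_pos rfl, if_pos rfl, aeval_X]
    · rw [if_neg hr.symm, if_neg (fun h ↦ hr (Fin.ext (Nat.add_left_cancel h))), map_zero]
  · rw [rowMul_of_ne hv, shear_X_of_ne fun i hi ↦ hv p i (Finset.mem_range.1 hi), aeval_X]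

end Ring

section Field

variable {C M lo} {K : Type*} [Field K] {F : MvPolynomial σ K} {k m : ℕ}

lemma eval_rowMul_of_mem (hbal : F ∈ C.balanced K M lo (lo + n) k)
    (hinv : F ∈ C.shearInvariants K M lo (lo + n)) {S : Matrix (Fin n) (Fin n) K} (hS : S.det ≠ 0)
    (w : σ → K) : eval (C.rowMul M lo S w) F = S.det ^ k * eval w F := by
  have hmem (r : Fin n) : lo + (r : ℕ) ∈ Set.Ico lo (lo + n) := ⟨by lia, by lia⟩
  refine matrix_induction_of_det_ne_zero
    (P := fun S ↦ ∀ w, eval (C.rowMul M lo S w) F = S.det ^ k * eval w F)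
    (fun w ↦ ?_) (fun A B hA hB w ↦ ?_) (fun r c _ w ↦ ?_) (fun p q hpq w ↦ ?_) hS w
  · rw [rowMul_one, det_one, one_pow, one_mul]
  · rw [rowMul_mul, hA, hB, det_mul, mul_pow, mul_assoc]
  · rw [rowMul_diagonal_update, det_diagonal_update]
    exact aeval_pow_mul_of_isWeightedHomogeneous (mem_balanced.1 hbal _ (hmem r)) c w
  · rw [eval_rowMul_transvection, det_transvection_of_ne _ _ hpq, one_pow, one_mul,
      hinv _ (hmem p) _ (hmem q) fun h ↦ hpq (Fin.ext (Nat.add_left_cancel h))]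

lemma mem_shearInvariants_of_eval_rowMul [Infinite K]
    (hF : ∀ S : Matrix (Fin n) (Fin n) K, S.det = 1 → ∀ w,
      eval (C.rowMul M lo S w) F = eval w F) : F ∈ C.shearInvariants K M lo (lo + n) := by
  rintro p ⟨hlo, hp⟩ q ⟨hlo', hq⟩ hpq
  obtain ⟨p, rfl⟩ := Nat.exists_eq_add_of_le hlo
  obtain ⟨q, rfl⟩ := Nat.exists_eq_add_of_le hlo'
  have hne : (⟨p, by lia⟩ : Fin n) ≠ ⟨q, by lia⟩ := fun h ↦ hpq (by rw [Fin.mk.inj h])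
  refine MvPolynomial.funext fun w ↦ ?_
  rw [← hF _ (det_transvection_of_ne _ _ hne 1) w, eval_rowMul_transvection]

/- The `n`-th power of `diag(1, …, c, …, 1)` is a scalar matrix times a matrix of determinant
one. -/
lemma mem_balanced_of_eval_rowMul [Infinite K]
    (hF : ∀ S : Matrix (Fin n) (Fin n) K, S.det = 1 → ∀ w,
      eval (C.rowMul M lo S w) F = eval w F)
    (hscalar : ∀ b : K, b ≠ 0 → ∀ w, eval (C.rowMul M lo (b • (1 : Matrix (Fin n) (Fin n) K)) w) F =
      b ^ m * eval w F) : F ∈ C.balanced K M lo (lo + n) (m / n) := by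
  refine mem_balanced.2 fun p ⟨hlo, hp⟩ ↦ ?_
  obtain ⟨p, rfl⟩ := Nat.exists_eq_add_of_le hlo
  have hn : n ≠ 0 := by lia
  let r : Fin n := ⟨p, by lia⟩
  have hpow : IsWeightedHomogeneous (fun v ↦ n * C.rowContent M (lo + p) v) F m := by
    refine isWeightedHomogeneous_of_eval_pow_mul_eq fun c hc w ↦ ?_
    have hdiag : diagonal (Function.update 1 r (c ^ n)) =
        c • (1 : Matrix (Fin n) (Fin n) K) *
          c⁻¹ • diagonal (Function.update 1 r (c ^ n)) := by
      rw [smul_mul_smul_comm, mul_inv_cancel₀ hc, one_smul, one_mul]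
    have hdet : (c⁻¹ • diagonal (Function.update 1 r (c ^ n))).det = 1 := by
      rw [det_smul, det_diagonal_update, Fintype.card_fin, inv_pow,
        inv_mul_cancel₀ (pow_ne_zero n hc)]
    have hpoint : (fun v ↦ c ^ (n * C.rowContent M (lo + p) v) * w v) =
        C.rowMul M lo (diagonal (Function.update 1 r (c ^ n))) w := by
      simp only [rowMul_diagonal_update, pow_mul, r]
    rw [hpoint, hdiag, rowMul_mul, hscalar c hc, hF _ hdet]
  intro μ hμ
  have hweight := hpow hμ
  simp only [Finsupp.weight_apply, Finsupp.sum, smul_eq_mul, mul_left_comm _ n,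
    ← Finset.mul_sum] at hweight ⊢
  exact (Nat.div_eq_of_eq_mul_right (Nat.pos_of_ne_zero hn) hweight.symm).symm

end Field

end VariableArray

section MatrixVar

/-- The variables, indexed by an arrow, a row and a column, and ordered lexicographically. -/
abbrev MatrixVar : Type := ℕ ×ₗ (ℕ ×ₗ ℕ)

/-- The variable in row `r` and column `c` of the matrix of the arrow `e`. -/
def matrixVar (e r c : ℕ) : MatrixVar := toLex (e, toLex (r, c))

lemma matrixVar_inj {e r c e' r' c' : ℕ} :
    matrixVar e r c = matrixVar e' r' c' ↔ e = e' ∧ r = r' ∧ c = c' := by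
  simp only [matrixVar, EmbeddingLike.apply_eq_iff_eq, Prod.mk.injEq]

lemma matrixVar_lt {e r c e' r' c' : ℕ} :
    matrixVar e r c < matrixVar e' r' c' ↔ e < e' ∨ e = e' ∧ (r < r' ∨ r = r' ∧ c < c') := by
  simp only [matrixVar, Prod.Lex.toLex_lt_toLex]

/-- The variable at place `q` of line `p` of the matrix of the arrow `e`, where the lines are the
rows for `s = true` and the columns for `s = false`. -/
def lineVar : Bool → ℕ → ℕ → ℕ → MatrixVar
  | true, e, p, q => matrixVar e p q
  | false, e, p, q => matrixVar e q p

lemma div_lt_or_mod_lt {c d : ℕ} (N : ℕ) (h : c < d) :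
    c / N < d / N ∨ c / N = d / N ∧ c % N < d % N := by
  rcases (Nat.div_le_div_right (c := N) h.le).lt_or_eq with hlt | heq
  · exact Or.inl hlt
  · have hc := Nat.div_add_mod c N
    have hd := Nat.div_add_mod d N
    rw [heq] at hc
    generalize N * (d / N) = x at hc hd
    exact Or.inr ⟨heq, by lia⟩

/-- The array whose rows are obtained by concatenating, for a fixed `p`, the lines `p` of the
`N × N` matrices of all arrows. -/
def lineArray (N : ℕ) (s : Bool) : VariableArray MatrixVar where
  entry p c := lineVar s (c / N) p (c % N)
  injective2 p q c d h := by
    obtain ⟨hdiv, hmod, hpq⟩ : c / N = d / N ∧ c % N = d % N ∧ p = q := by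
      cases s <;> have h := matrixVar_inj.1 h <;> tauto
    exact ⟨hpq, by rw [← Nat.div_add_mod c N, hdiv, hmod, Nat.div_add_mod]⟩
  strictMono p c d h := by
    have := div_lt_or_mod_lt N h
    cases s <;> refine matrixVar_lt.2 ?_ <;> tauto
  lt_of_lt_of_le p q c d hpq h := by
    rcases h.lt_or_eq with h | rfl
    · have := div_lt_or_mod_lt N h
      cases s <;> refine matrixVar_lt.2 ?_ <;> tauto
    · cases s <;> refine matrixVar_lt.2 ?_ <;> tauto

lemma lineArray_entry {N q : ℕ} (s : Bool) (e p : ℕ) (hq : q < N) :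
    (lineArray N s).entry p (e * N + q) = lineVar s e p q := by
  have hdiv : (e * N + q) / N = e := by
    rw [mul_comm, Nat.mul_add_div (by lia), Nat.div_eq_of_lt hq, add_zero]
  have hmod : (e * N + q) % N = q := by rw [mul_comm, Nat.mul_add_mod, Nat.mod_eq_of_lt hq]
  simp only [lineArray, hdiv, hmod]

lemma isBlockTranspose_lineArray (N : ℕ) (s : Bool) :
    (lineArray N s).IsBlockTranspose (lineArray N !s) N := fun e p q hp hq ↦ by
  rw [lineArray_entry _ _ _ hq, lineArray_entry _ _ _ hp]
  cases s <;> rfl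

end MatrixVar

section Layout

variable {I : Type*} [Fintype I] (α : I → ℕ)

/-- The index of the first line belonging to the vertex `i`. -/
noncomputable def offset (i : I) : ℕ := Fintype.equivFin I i * (∑ j, α j + 1)

/-- The lines belonging to the vertex `i`. -/
def block (i : I) : Set ℕ := Set.Ico (offset α i) (offset α i + α i)

/-- A bound for the indices of all lines. -/
def size : ℕ := Fintype.card I * (∑ j, α j + 1)

variable {α} {i j : I} {r : ℕ}

lemma div_eq_of_mem_block (hr : r ∈ block α i) : r / (∑ j, α j + 1) = Fintype.equivFin I i := by
  have hα : α i < ∑ j, α j + 1 :=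
    Nat.lt_succ_of_le (Finset.single_le_sum (fun _ _ ↦ Nat.zero_le _) (Finset.mem_univ i))
  obtain ⟨hle, hlt⟩ := hr
  rw [offset] at hle hlt
  exact Nat.div_eq_of_lt_le hle (by rw [add_mul]; lia)

lemma eq_of_mem_block (hi : r ∈ block α i) (hj : r ∈ block α j) : i = j :=
  (Fintype.equivFin I).injective
    (Fin.ext ((div_eq_of_mem_block hi).symm.trans (div_eq_of_mem_block hj)))

lemma lt_size_of_mem_block (hr : r ∈ block α i) : r < size α :=
  (Nat.div_lt_iff_lt_mul (Nat.succ_pos _)).1 (by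
    rw [div_eq_of_mem_block hr]
    exact Fin.is_lt _)

lemma offset_add_mem_block (r : Fin (α i)) : offset α i + r ∈ block α i :=
  ⟨Nat.le_add_right _ _, Nat.add_lt_add_left r.is_lt _⟩

lemma exists_eq_offset_add (hr : r ∈ block α i) : ∃ q : Fin (α i), r = offset α i + q :=
  ⟨⟨r - offset α i, Nat.sub_lt_left_of_lt_add hr.1 hr.2⟩, (Nat.add_sub_cancel' hr.1).symm⟩

variable {E : Type*} [Fintype E] (h t : E → I) (α)

/-- The coordinates of the families of matrices of size `α (h e) × α (t e)`. -/
abbrev Coord : Type _ := (e : E) × (Fin (α (h e)) × Fin (α (t e)))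

/-- The variable corresponding to a coordinate. -/
noncomputable def coordVar (y : Coord α h t) : MatrixVar :=
  matrixVar (Fintype.equivFin E y.1) (offset α (h y.1) + y.2.1) (offset α (t y.1) + y.2.2)

lemma coordVar_injective : Function.Injective (coordVar α h t) := by
  rintro ⟨e, r, c⟩ ⟨e', r', c'⟩ hy
  obtain ⟨he, hr, hc⟩ := matrixVar_inj.1 hy
  obtain rfl := (Fintype.equivFin E).injective (Fin.ext he)
  obtain rfl : r = r' := Fin.ext (Nat.add_left_cancel hr)
  obtain rfl : c = c' := Fin.ext (Nat.add_left_cancel hc)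
  rfl

variable {α h t} in
lemma matrixVar_mem_range_coordVar {n r c : ℕ} : matrixVar n r c ∈ Set.range (coordVar α h t) ↔
    ∃ e : E, n = Fintype.equivFin E e ∧ r ∈ block α (h e) ∧ c ∈ block α (t e) := by
  constructor
  · rintro ⟨y, hy⟩
    obtain ⟨rfl, rfl, rfl⟩ := matrixVar_inj.1 hy
    exact ⟨y.1, rfl, offset_add_mem_block _, offset_add_mem_block _⟩
  · rintro ⟨e, rfl, hr, hc⟩
    obtain ⟨r, rfl⟩ := exists_eq_offset_add hr
    obtain ⟨c, rfl⟩ := exists_eq_offset_add hc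
    exact ⟨⟨e, r, c⟩, rfl⟩

open scoped Classical in
/-- The weights: `some e` measures the degree in the variables of the arrow `e`, and `none` the
degree in the variables which are not coordinates. -/
noncomputable def arrowWeight : Option E → MatrixVar → ℕ
  | none, v => if v ∈ Set.range (coordVar α h t) then 0 else 1
  | some e, v => if (ofLex v).1 = Fintype.equivFin E e then 1 else 0

/-- The multidegree `δ` in the coordinates, as prescribed values of the weights. -/
def arrowTarget (δ : E → ℕ) : Option E → ℕ
  | none => 0
  | some e => δ e

variable {α h t}

lemma arrowWeight_none_coordVar (y : Coord α h t) : arrowWeight α h t none (coordVar α h t y) = 0 :=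
  if_pos (Set.mem_range_self y)

lemma arrowWeight_some_coordVar (e : E) (y : Coord α h t) [Decidable (y.1 = e)] :
    arrowWeight α h t (some e) (coordVar α h t y) = if y.1 = e then 1 else 0 := by
  simp only [arrowWeight, coordVar, matrixVar, ofLex_toLex]
  refine if_congr ?_ rfl rfl
  rw [Fin.val_inj, EmbeddingLike.apply_eq_iff_eq]

lemma arrowWeight_lineVar_eq (o : Option E) (s : Bool) {p q : ℕ} (hp : p ∈ block α i)
    (hq : q ∈ block α i) (n c : ℕ) :
    arrowWeight α h t o (lineVar s n p c) = arrowWeight α h t o (lineVar s n q c) := by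
  have hblock (j : I) : p ∈ block α j ↔ q ∈ block α j :=
    ⟨fun h ↦ eq_of_mem_block hp h ▸ hq, fun h ↦ eq_of_mem_block hq h ▸ hp⟩
  cases o
  · cases s <;>
      exact if_congr (by simp only [lineVar, matrixVar_mem_range_coordVar, hblock]) rfl rfl
  · cases s <;> rfl

lemma finite_arrowWeight_eq (δ : E → ℕ) :
    {l : MatrixVar →₀ ℕ |
      ∀ o, Finsupp.weight (arrowWeight α h t o) l = arrowTarget δ o}.Finite := by
  classical
  refine (Set.finite_Icc 0
    (∑ y : Coord α h t, Finsupp.single (coordVar α h t y) (δ y.1))).subset fun l hl ↦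
      ⟨zero_le, fun v ↦ ?_⟩
  by_cases hv : v ∈ Set.range (coordVar α h t)
  · obtain ⟨y, rfl⟩ := hv
    calc l (coordVar α h t y) ≤ δ y.1 := by
          rw [← show _ = δ y.1 from hl (some y.1)]
          refine Finsupp.le_weight _ ?_ l
          rw [arrowWeight_some_coordVar, if_pos rfl]
          exact one_ne_zero
      _ = Finsupp.single (coordVar α h t y) (δ y.1) (coordVar α h t y) :=
          Finsupp.single_eq_same.symm
      _ ≤ _ := by
          rw [Finsupp.finsetSum_apply]
          exact Finset.single_le_sum (f := fun y' : Coord α h t ↦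
            Finsupp.single (coordVar α h t y') (δ y'.1) (coordVar α h t y))
            (fun _ _ ↦ Nat.zero_le _) (Finset.mem_univ y)
  · calc l v ≤ Finsupp.weight (arrowWeight α h t none) l :=
          Finsupp.le_weight _ (by rw [arrowWeight, if_neg hv]; exact one_ne_zero) l
      _ = 0 := hl none
      _ ≤ _ := Nat.zero_le _

variable (α h t)

/-- The block system whose blocks are the rows `(true, i)` and the columns `(false, i)` belonging to
the vertices `i`. -/
noncomputable def quiverBlocks (k : Bool × I → ℕ) (δ : E → ℕ) :
    BlockSystem MatrixVar (Bool × I) (Option E) where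
  width := Fintype.card E * size α
  array b := lineArray (size α) b.1
  lo b := offset α b.2
  hi b := offset α b.2 + α b.2
  degree := k
  weight := arrowWeight α h t
  target := arrowTarget δ
  isIndependent := by
    rintro ⟨s, i⟩ ⟨s', j⟩ hne
    rcases eq_or_ne s s' with rfl | hs
    · refine Or.inl ⟨rfl, Set.disjoint_left.2 fun r hi hj ↦ hne ?_⟩
      rw [show i = j from eq_of_mem_block hi hj]
    · obtain rfl := Bool.eq_not_of_ne hs.symm
      exact Or.inr ⟨size α, Fintype.card E, isBlockTranspose_lineArray _ s, rfl,
        fun r hr ↦ lt_size_of_mem_block hr, fun r hr ↦ lt_size_of_mem_block hr⟩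
  weight_entry_eq o b p hp q hq c _ := arrowWeight_lineVar_eq o b.1 hp hq _ _
  finite_weight_eq := finite_arrowWeight_eq δ

end Layout

section Points

variable {I E : Type*} [Fintype I] [Fintype E] {α : I → ℕ} {h t : E → I} {R : Type*}

variable (α h t) in
/-- The family of matrices whose entries are the coordinates of a point. -/
noncomputable def toMatrices (w : MatrixVar → R) (e : E) :
    Matrix (Fin (α (h e))) (Fin (α (t e))) R :=
  of fun r c ↦ w (coordVar α h t ⟨e, r, c⟩)

/-- The point with a given family of matrices, extended by zero. -/
noncomputable def ofMatrices [Zero R] (x : ∀ e, Matrix (Fin (α (h e))) (Fin (α (t e))) R) :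
    MatrixVar → R :=
  Function.extend (coordVar α h t) (fun y ↦ x y.1 y.2.1 y.2.2) 0

lemma toMatrices_ofMatrices [Zero R] (x : ∀ e, Matrix (Fin (α (h e))) (Fin (α (t e))) R) :
    toMatrices α h t (ofMatrices x) = x := by
  funext e
  ext r c
  exact (coordVar_injective α h t).extend_apply (fun y ↦ x y.1 y.2.1 y.2.2) 0 ⟨e, r, c⟩

lemma coordVar_eq_entry (e : E) (r : Fin (α (h e))) (c : Fin (α (t e))) (s : Bool) :
    coordVar α h t ⟨e, r, c⟩ = (lineArray (size α) s).entry
      (bif s then offset α (h e) + r else offset α (t e) + c)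
      (Fintype.equivFin E e * size α + bif s then offset α (t e) + c else offset α (h e) + r) := by
  cases s
  · exact (lineArray_entry false _ _ (lt_size_of_mem_block (offset_add_mem_block r))).symm
  · exact (lineArray_entry true _ _ (lt_size_of_mem_block (offset_add_mem_block c))).symm

lemma offset_add_ne {i j : I} (hij : i ≠ j) (r : Fin (α i)) (q : Fin (α j)) :
    offset α i + r ≠ offset α j + q :=
  fun e ↦ hij (eq_of_mem_block (offset_add_mem_block r) (e ▸ offset_add_mem_block q))

section Action

variable [CommSemiring R]

/-- The action of a square matrix for each vertex on a family of matrices: on the rows by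
multiplication from the left, and on the columns by multiplication with the transpose from the
right. -/
def sideMul : Bool → (∀ i, Matrix (Fin (α i)) (Fin (α i)) R) →
    (∀ e, Matrix (Fin (α (h e))) (Fin (α (t e))) R) →
    ∀ e, Matrix (Fin (α (h e))) (Fin (α (t e))) R
  | true, A, x, e => A (h e) * x e
  | false, A, x, e => x e * (A (t e))ᵀ

omit [Fintype I] [Fintype E] in
lemma sideMul_one (s : Bool) (x : ∀ e, Matrix (Fin (α (h e))) (Fin (α (t e))) R) :
    sideMul s 1 x = x := by
  cases s
  · exact funext fun e ↦ by rw [sideMul, Pi.one_apply, transpose_one, Matrix.mul_one]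
  · exact funext fun e ↦ Matrix.one_mul _

omit [Fintype I] [Fintype E] in
lemma sideMul_mul (s : Bool) (A B : ∀ i, Matrix (Fin (α i)) (Fin (α i)) R)
    (x : ∀ e, Matrix (Fin (α (h e))) (Fin (α (t e))) R) :
    sideMul s (A * B) x = sideMul s A (sideMul s B x) := by
  cases s
  · exact funext fun e ↦ by
      simp only [sideMul, Pi.mul_apply, transpose_mul, Matrix.mul_assoc]
  · exact funext fun e ↦ Matrix.mul_assoc _ _ _

variable (E) in
/-- The action of a square matrix on the variables in the rows or columns belonging to a vertex. -/
noncomputable def blockMul (s : Bool) (i : I) (S : Matrix (Fin (α i)) (Fin (α i)) R)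
    (w : MatrixVar → R) : MatrixVar → R :=
  (lineArray (size α) s).rowMul (Fintype.card E * size α) (offset α i) S w

variable [DecidableEq I] {i : I} (S : Matrix (Fin (α i)) (Fin (α i)) R) (w : MatrixVar → R)

lemma toMatrices_blockMul_true : toMatrices α h t (blockMul E true i S w) =
      sideMul true (Function.update 1 i S) (toMatrices α h t w) := by
  funext e
  ext r c
  have hc := VariableArray.mul_add_lt_of_lt (Fin.is_lt (Fintype.equivFin E e))
    (lt_size_of_mem_block (offset_add_mem_block c))
  rw [toMatrices, of_apply, coordVar_eq_entry _ _ _ true, sideMul]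
  by_cases hi : h e = i
  · subst hi
    rw [Function.update_self, Matrix.mul_apply]
    refine (VariableArray.rowMul_entry r hc).trans (Finset.sum_congr rfl fun q _ ↦ ?_)
    rw [toMatrices, of_apply, coordVar_eq_entry _ _ _ true]
    rfl
  · rw [Function.update_of_ne hi, Pi.one_apply, Matrix.one_mul, toMatrices, of_apply,
      coordVar_eq_entry _ _ _ true]
    exact VariableArray.rowMul_entry_of_ne (fun q ↦ offset_add_ne hi r q) _

lemma toMatrices_blockMul_false : toMatrices α h t (blockMul E false i S w) =
      sideMul false (Function.update 1 i S) (toMatrices α h t w) := by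
  funext e
  ext r c
  have hr := VariableArray.mul_add_lt_of_lt (Fin.is_lt (Fintype.equivFin E e))
    (lt_size_of_mem_block (offset_add_mem_block r))
  rw [toMatrices, of_apply, coordVar_eq_entry _ _ _ false, sideMul]
  by_cases hi : t e = i
  · subst hi
    rw [Function.update_self, Matrix.mul_apply]
    refine (VariableArray.rowMul_entry c hr).trans (Finset.sum_congr rfl fun q _ ↦ ?_)
    rw [toMatrices, of_apply, coordVar_eq_entry _ _ _ false, mul_comm]
    rfl
  · rw [Function.update_of_ne hi, Pi.one_apply, transpose_one, Matrix.mul_one, toMatrices,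
      of_apply, coordVar_eq_entry _ _ _ false]
    exact VariableArray.rowMul_entry_of_ne (fun q ↦ offset_add_ne hi c q) _

lemma toMatrices_blockMul (s : Bool) : toMatrices α h t (blockMul E s i S w) =
      sideMul s (Function.update 1 i S) (toMatrices α h t w) :=
  match s with
  | true => toMatrices_blockMul_true S w
  | false => toMatrices_blockMul_false S w

end Action

section Weights

variable [CommSemiring R]

lemma toMatrices_arrowWeight_none (c : R) (w : MatrixVar → R) (e : E) :
    toMatrices α h t (fun v ↦ c ^ arrowWeight α h t none v * w v) e = toMatrices α h t w e := by
  ext r q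
  simp only [toMatrices, of_apply, arrowWeight_none_coordVar, pow_zero, one_mul]

lemma toMatrices_arrowWeight_some [DecidableEq E] (c : R) (w : MatrixVar → R) (e e' : E) :
    toMatrices α h t (fun v ↦ c ^ arrowWeight α h t (some e) v * w v) e' =
      (if e' = e then c else 1) • toMatrices α h t w e' := by
  ext r q
  simp only [toMatrices, of_apply, arrowWeight_some_coordVar, Matrix.smul_apply, smul_eq_mul]
  split_ifs <;> simp only [pow_one, pow_zero]

lemma eval_congr_toMatrices {F : MvPolynomial MatrixVar R}
    (hF : IsWeightedHomogeneous (arrowWeight α h t none) F 0) {w w' : MatrixVar → R}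
    (hw : toMatrices α h t w = toMatrices α h t w') :
    eval w F = eval w' F := by
  have eval_eq (w : MatrixVar → R) :
      eval w F = eval (fun v ↦ 0 ^ arrowWeight α h t none v * w v) F := by
    refine Eq.trans ?_ (aeval_pow_mul_of_isWeightedHomogeneous hF (0 : R) w).symm
    rw [pow_zero, one_mul]
    rfl
  rw [eval_eq w, eval_eq w']
  congr 2
  funext v
  by_cases hv : v ∈ Set.range (coordVar α h t)
  · obtain ⟨y, rfl⟩ := hv
    exact congrArg _ (congrFun₂ (congrFun hw y.1) y.2.1 y.2.2)
  · rw [arrowWeight, if_neg hv, pow_one, zero_mul, zero_mul]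

end Weights

variable {K : Type*} [Field K] {k : Bool × I → ℕ} {δ : E → ℕ} {F : MvPolynomial MatrixVar K}

lemma eval_blockMul (hF : F ∈ (quiverBlocks α h t k δ).space K Set.univ Set.univ) (s : Bool) {i : I}
    {S : Matrix (Fin (α i)) (Fin (α i)) K} (hS : S.det ≠ 0) (w : MatrixVar → K) :
    eval (blockMul E s i S w) F = S.det ^ k (s, i) * eval w F :=
  have ⟨_, hbal, hinv⟩ := BlockSystem.mem_space.1 hF
  VariableArray.eval_rowMul_of_mem (hbal (s, i) (Set.mem_univ _)) (hinv (s, i) (Set.mem_univ _)) hS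
    w

lemma eval_eq_prod_det_pow_mul_of_sideMul
    (hF : F ∈ (quiverBlocks α h t k δ).space K Set.univ Set.univ) (s : Bool)
    {A : ∀ i, Matrix (Fin (α i)) (Fin (α i)) K} (hA : ∀ i, (A i).det ≠ 0) {w w' : MatrixVar → K}
    (hw : toMatrices α h t w' = sideMul s A (toMatrices α h t w)) :
    eval w' F = (∏ i, (A i).det ^ k (s, i)) * eval w F := by
  classical
  suffices key : ∀ T : Finset I, ∃ w'' : MatrixVar → K,
      toMatrices α h t w'' = sideMul s (fun i ↦ if i ∈ T then A i else 1) (toMatrices α h t w) ∧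
      eval w'' F = (∏ i ∈ T, (A i).det ^ k (s, i)) * eval w F by
    obtain ⟨w'', hw'', heval⟩ := key Finset.univ
    simp only [Finset.mem_univ, if_true] at hw''
    rw [← heval]
    exact eval_congr_toMatrices ((BlockSystem.mem_space.1 hF).1 none) (hw.trans hw''.symm)
  intro T
  induction T using Finset.induction_on with
  | empty =>
    refine ⟨w, ?_, by rw [Finset.prod_empty, one_mul]⟩
    simp only [Finset.notMem_empty, if_false]
    exact (sideMul_one s _).symm
  | insert i T hi ih =>
    obtain ⟨w'', hw'', heval⟩ := ih
    refine ⟨blockMul E s i (A i) w'', ?_, ?_⟩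
    · rw [toMatrices_blockMul, hw'', ← sideMul_mul]
      congr 1
      funext j
      rw [Pi.mul_apply]
      rcases eq_or_ne j i with rfl | hne
      · rw [Function.update_self, if_neg hi, if_pos (Finset.mem_insert_self _ T), Matrix.mul_one]
      · simp only [Function.update_of_ne hne, Pi.one_apply, Matrix.one_mul, Finset.mem_insert, hne,
          false_or]
    · rw [eval_blockMul hF s (hA i), heval, Finset.prod_insert hi, mul_assoc]

lemma eval_eq_prod_det_pow_mul (hF : F ∈ (quiverBlocks α h t k δ).space K Set.univ Set.univ)
    {A B : ∀ i, Matrix (Fin (α i)) (Fin (α i)) K} (hA : ∀ i, (A i).det ≠ 0)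
    (hB : ∀ i, (B i).det ≠ 0) {w w' : MatrixVar → K}
    (hw : ∀ e, toMatrices α h t w' e = A (h e) * toMatrices α h t w e * B (t e)) :
    eval w' F = (∏ i, (A i).det ^ k (true, i)) * (∏ i, (B i).det ^ k (false, i)) * eval w F := by
  have hright := eval_eq_prod_det_pow_mul_of_sideMul (h := h) (t := t) hF false
    (A := fun i ↦ (B i)ᵀ) (fun i ↦ by rw [det_transpose]; exact hB i) (toMatrices_ofMatrices _)
    (w := w)
  have hleft := eval_eq_prod_det_pow_mul_of_sideMul (h := h) (t := t) hF true hA (w' := w')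
    (w := ofMatrices (sideMul false (fun i ↦ (B i)ᵀ) (toMatrices α h t w))) (funext fun e ↦ by
      rw [toMatrices_ofMatrices, sideMul, sideMul, transpose_transpose, hw e, Matrix.mul_assoc])
  simp only [det_transpose] at hright
  rw [hleft, hright, mul_assoc]

end Points

section ArrowDegree

variable {K Q0 Q1 : Type} [Field K] {ta ha : Q1 → Q0} {α : Q0 → ℕ}

open scoped Classical in
/-- The multidegree of a coordinate, one degree for each arrow. -/
noncomputable def arrowDegree (y : Coord α ha ta) : Q1 → ℕ := Pi.single y.1 1

lemma eval_repCoords_smul [Fintype Q1] {δ : Q1 → ℕ} {f : MvPolynomial (Coord α ha ta) K}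
    (hf : IsWeightedHomogeneous arrowDegree f δ) (s : Q1 → K)
    (v : ∀ a, Matrix (Fin (α (ha a))) (Fin (α (ta a))) K) :
    eval (repCoords fun a ↦ s a • v a) f = (∏ a, s a ^ δ a) * eval (repCoords v) f := by
  let χ : Multiplicative (Q1 → ℕ) →* K :=
    { toFun := fun ε ↦ ∏ a, s a ^ Multiplicative.toAdd ε a
      map_one' := Finset.prod_eq_one fun a _ ↦ pow_zero _
      map_mul' := fun ε ε' ↦ by
        simp only [toAdd_mul, Pi.add_apply, pow_add, Finset.prod_mul_distrib] }
  refine Eq.trans ?_ (aeval_mul_of_isWeightedHomogeneous hf χ (repCoords v))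
  rw [aeval_eq_eval]
  congr 2
  funext y
  have hχ : χ (Multiplicative.ofAdd (arrowDegree y)) = s y.1 := by
    classical
    change ∏ a, s a ^ arrowDegree y a = s y.1
    rw [Finset.prod_eq_single y.1 (fun a _ hne ↦ by
        rw [arrowDegree, Pi.single_eq_of_ne hne, pow_zero])
      (fun h ↦ absurd (Finset.mem_univ _) h), arrowDegree, Pi.single_eq_same, pow_one]
  rw [hχ]
  rfl

lemma mem_quiverSemiInvariants {f : MvPolynomial (Coord α ha ta) K} :
    f ∈ quiverSemiInvariants K ta ha α ↔ ∀ (A : ∀ i, SpecialLinearGroup (Fin (α i)) K)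
      (v : ∀ a, Matrix (Fin (α (ha a))) (Fin (α (ta a))) K),
      eval (repCoords fun a ↦ (A (ha a)).val * v a * ((A (ta a))⁻¹).val) f =
        eval (repCoords v) f := by
  simp only [quiverSemiInvariants, Algebra.mem_iInf, AlgHom.mem_equalizer, aeval_eq_eval]

lemma eval_adjugate_mul_mul {f : MvPolynomial (Coord α ha ta) K}
    (hf : f ∈ quiverSemiInvariants K ta ha α) {S : ∀ i, Matrix (Fin (α i)) (Fin (α i)) K}
    (hS : ∀ i, (S i).det = 1) (v : ∀ a, Matrix (Fin (α (ha a))) (Fin (α (ta a))) K) :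
    eval (repCoords fun a ↦ adjugate (S (ha a)) * v a * S (ta a)) f = eval (repCoords v) f := by
  let A (i : Q0) : Matrix.SpecialLinearGroup (Fin (α i)) K := ⟨S i, hS i⟩
  have h := mem_quiverSemiInvariants.1 hf (fun i ↦ (A i)⁻¹) v
  simp only [inv_inv] at h
  exact h

variable (K ta ha α) in
/-- The semi-invariants which are homogeneous of a given degree in the matrix of each arrow. -/
noncomputable def semiInvariantsOfDegree (δ : Q1 → ℕ) :
    Submodule K (MvPolynomial (Coord α ha ta) K) :=
  Subalgebra.toSubmodule (quiverSemiInvariants K ta ha α) ⊓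
    weightedHomogeneousSubmodule K arrowDegree δ

open scoped Classical in
/-- The degree of a multidegree in all arrows starting, respectively ending, at a vertex. -/
noncomputable def arrowSum [Fintype Q1] (g : Q1 → Q0) (δ : Q1 → ℕ) (i : Q0) : ℕ :=
  ∑ a with g a = i, δ a

lemma prod_pow_arrowSum [Fintype Q0] [Fintype Q1] {R : Type*} [CommMonoid R] (g : Q1 → Q0)
    (δ : Q1 → ℕ) (c : Q0 → R) : ∏ i, c i ^ arrowSum g δ i = ∏ a, c (g a) ^ δ a := by
  classical
  rw [← Finset.prod_fiberwise Finset.univ g]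
  refine Finset.prod_congr rfl fun i _ ↦ ?_
  rw [arrowSum, ← Finset.prod_pow_eq_pow_sum]
  exact Finset.prod_congr (by congr) fun a hmem ↦ by rw [(Finset.mem_filter.1 hmem).2]

end ArrowDegree

section AdjugateMul

variable {K Q0 Q1 : Type} [Field K] [Fintype Q0] [Fintype Q1]

/-- The heads, respectively tails, of the quiver with a loop added at each vertex. -/
abbrev withLoops (g : Q1 → Q0) : Q1 ⊕ Q0 → Q0 := Sum.elim g id

variable (ta ha : Q1 → Q0) (α : Q0 → ℕ) {R : Type*}

/-- The matrices of the arrows of the original quiver. -/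
noncomputable def arrowMatrix (w : MatrixVar → R) (a : Q1) :
    Matrix (Fin (α (ha a))) (Fin (α (ta a))) R :=
  toMatrices α (withLoops ha) (withLoops ta) w (.inl a)

/-- The matrices of the added loops. -/
noncomputable def vertexMatrix (w : MatrixVar → R) (i : Q0) : Matrix (Fin (α i)) (Fin (α i)) R :=
  toMatrices α (withLoops ha) (withLoops ta) w (.inr i)

/-- A representation of the original quiver made from one of the quiver with loops. Base changes at
the heads and at the tails of the arrows are independent for the quiver with loops, and multiply
this representation by scalars, respectively change its bases. -/
noncomputable def adjugateMul [CommRing R] (w : MatrixVar → R) (a : Q1) :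
    Matrix (Fin (α (ha a))) (Fin (α (ta a))) R :=
  adjugate (vertexMatrix ta ha α w (ha a)) * arrowMatrix ta ha α w a

variable {ta ha α}

section

variable [CommRing R] {w w' : MatrixVar → R} {A : ∀ i, Matrix (Fin (α i)) (Fin (α i)) R}

lemma adjugateMul_smul {p : Q1 ⊕ Q0 → R}
    (hw : ∀ e, toMatrices α (withLoops ha) (withLoops ta) w' e =
      p e • toMatrices α (withLoops ha) (withLoops ta) w e) (a : Q1) :
    adjugateMul ta ha α w' a =
      (p (.inr (ha a)) ^ (α (ha a) - 1) * p (.inl a)) • adjugateMul ta ha α w a := by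
  have hvertex : vertexMatrix ta ha α w' (ha a) = p (.inr (ha a)) • vertexMatrix ta ha α w (ha a) :=
    hw _
  have harrow : arrowMatrix ta ha α w' a = p (.inl a) • arrowMatrix ta ha α w a := hw _
  rw [adjugateMul, adjugateMul, hvertex, harrow, adjugate_smul, Fintype.card_fin, Matrix.smul_mul,
    Matrix.mul_smul, smul_smul]

lemma adjugateMul_sideMul_true (hw : toMatrices α (withLoops ha) (withLoops ta) w' =
      sideMul true A (toMatrices α (withLoops ha) (withLoops ta) w)) (a : Q1) :
    adjugateMul ta ha α w' a = (A (ha a)).det • adjugateMul ta ha α w a := by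
  have hvertex : vertexMatrix ta ha α w' (ha a) = A (ha a) * vertexMatrix ta ha α w (ha a) :=
    congrFun hw _
  have harrow : arrowMatrix ta ha α w' a = A (ha a) * arrowMatrix ta ha α w a := congrFun hw _
  rw [adjugateMul, adjugateMul, hvertex, harrow, adjugate_mul_distrib, Matrix.mul_assoc,
    ← Matrix.mul_assoc (adjugate (A _)), adjugate_mul, Matrix.smul_mul, Matrix.one_mul,
    Matrix.mul_smul]

lemma adjugateMul_sideMul_false (hw : toMatrices α (withLoops ha) (withLoops ta) w' =
      sideMul false A (toMatrices α (withLoops ha) (withLoops ta) w)) (a : Q1) :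
    adjugateMul ta ha α w' a =
      adjugate (A (ha a))ᵀ * adjugateMul ta ha α w a * (A (ta a))ᵀ := by
  have hvertex : vertexMatrix ta ha α w' (ha a) = vertexMatrix ta ha α w (ha a) * (A (ha a))ᵀ :=
    congrFun hw _
  have harrow : arrowMatrix ta ha α w' a = arrowMatrix ta ha α w a * (A (ta a))ᵀ := congrFun hw _
  rw [adjugateMul, adjugateMul, hvertex, harrow, adjugate_mul_distrib]
  simp only [Matrix.mul_assoc]

end

variable (K ta ha α) in
/-- The substitution of the representation `adjugateMul` into a polynomial. -/
noncomputable def toInvariant : MvPolynomial (Coord α ha ta) K →ₐ[K] MvPolynomial MatrixVar K :=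
  aeval fun y ↦ adjugateMul ta ha α X y.1 y.2.1 y.2.2

lemma eval_toInvariant (w : MatrixVar → K) (f : MvPolynomial (Coord α ha ta) K) :
    eval w (toInvariant K ta ha α f) = eval (repCoords (adjugateMul ta ha α w)) f := by
  have hX (a : Q1) :
      (adjugateMul ta ha α X a).map (eval w) = adjugateMul ta ha α w a := by
    have hvertex :
        (vertexMatrix ta ha α X (ha a)).map (eval w) = vertexMatrix ta ha α w (ha a) := by
      ext; exact eval_X _
    have harrow : (arrowMatrix ta ha α X a).map (eval w) = arrowMatrix ta ha α w a := by
      ext; exact eval_X _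
    rw [adjugateMul, Matrix.map_mul, harrow, adjugateMul, ← hvertex,
      ← RingHom.mapMatrix_apply, RingHom.map_adjugate, RingHom.mapMatrix_apply]
  rw [toInvariant, ← aeval_eq_eval, comp_aeval_apply, aeval_eq_eval]
  exact congrArg (fun x ↦ eval x f) (funext fun y ↦ congrFun₂ (hX y.1) y.2.1 y.2.2)

/-- The multidegree of `toInvariant f` for `f` of multidegree `δ`. -/
noncomputable def loopDegree (α : Q0 → ℕ) (ha : Q1 → Q0) (δ : Q1 → ℕ) : Q1 ⊕ Q0 → ℕ :=
  Sum.elim δ fun i ↦ (α i - 1) * arrowSum ha δ i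

variable {δ : Q1 → ℕ} {f : MvPolynomial (Coord α ha ta) K} {w w' : MatrixVar → K}

lemma eval_toInvariant_smul (hf : f ∈ semiInvariantsOfDegree K ta ha α δ) {p : Q1 ⊕ Q0 → K}
    (hw : ∀ e, toMatrices α (withLoops ha) (withLoops ta) w' e =
      p e • toMatrices α (withLoops ha) (withLoops ta) w e) :
    eval w' (toInvariant K ta ha α f) =
      (∏ e, p e ^ loopDegree α ha δ e) * eval w (toInvariant K ta ha α f) := by
  rw [eval_toInvariant, eval_toInvariant, funext (adjugateMul_smul hw), eval_repCoords_smul hf.2]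
  congr 1
  simp only [mul_pow, Finset.prod_mul_distrib, Fintype.prod_sum_type, loopDegree, Sum.elim_inl,
    Sum.elim_inr, pow_mul]
  rw [prod_pow_arrowSum, mul_comm]

/-- The degree of `toInvariant f` in the variables in the rows or columns belonging to a vertex, for
`f` of multidegree `δ`. -/
noncomputable def blockDegree (α : Q0 → ℕ) (ta ha : Q1 → Q0) (δ : Q1 → ℕ) : Bool × Q0 → ℕ
  | (true, i) => α i * arrowSum ha δ i
  | (false, i) => arrowSum ta δ i + (α i - 1) * arrowSum ha δ i

lemma eval_toInvariant_sideMul (hf : f ∈ semiInvariantsOfDegree K ta ha α δ) (s : Bool)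
    {c : Q0 → K} {S : ∀ i, Matrix (Fin (α i)) (Fin (α i)) K} (hS : ∀ i, (S i).det = 1)
    (hw : toMatrices α (withLoops ha) (withLoops ta) w' =
      sideMul s (fun i ↦ c i • S i) (toMatrices α (withLoops ha) (withLoops ta) w)) :
    eval w' (toInvariant K ta ha α f) =
      (∏ i, c i ^ blockDegree α ta ha δ (s, i)) * eval w (toInvariant K ta ha α f) := by
  rw [eval_toInvariant, eval_toInvariant]
  cases s
  · have hsmul (a : Q1) : adjugateMul ta ha α w' a = (c (ta a) * c (ha a) ^ (α (ha a) - 1)) •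
        (adjugate (S (ha a))ᵀ * adjugateMul ta ha α w a * (S (ta a))ᵀ) := by
      rw [adjugateMul_sideMul_false hw, transpose_smul, transpose_smul, adjugate_smul,
        Fintype.card_fin, Matrix.mul_smul, Matrix.smul_mul, Matrix.smul_mul, smul_smul]
    rw [funext hsmul, eval_repCoords_smul hf.2, eval_adjugate_mul_mul hf.1
      (S := fun i ↦ (S i)ᵀ) fun i ↦ by rw [det_transpose, hS]]
    simp only [blockDegree, mul_pow, pow_add, Finset.prod_mul_distrib, pow_mul]
    rw [prod_pow_arrowSum, prod_pow_arrowSum]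
  · have hsmul (a : Q1) :
        adjugateMul ta ha α w' a = c (ha a) ^ α (ha a) • adjugateMul ta ha α w a := by
      rw [adjugateMul_sideMul_true hw, det_smul, Fintype.card_fin, hS, mul_one]
    rw [funext hsmul, eval_repCoords_smul hf.2]
    simp only [blockDegree, pow_mul]
    rw [prod_pow_arrowSum]

lemma eval_blockMul_toInvariant (hf : f ∈ semiInvariantsOfDegree K ta ha α δ) (s : Bool) (i : Q0)
    (b : K) {S : Matrix (Fin (α i)) (Fin (α i)) K} (hS : S.det = 1) (w : MatrixVar → K) :
    eval (blockMul (Q1 ⊕ Q0) s i (b • S) w) (toInvariant K ta ha α f) =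
      b ^ blockDegree α ta ha δ (s, i) * eval w (toInvariant K ta ha α f) := by
  classical
  rw [eval_toInvariant_sideMul hf s (w := w) (c := Function.update 1 i b)
    (S := Function.update 1 i S)]
  · congr 1
    rw [Finset.prod_eq_single i
      (fun j _ hj ↦ by rw [Function.update_of_ne hj, Pi.one_apply, one_pow])
      (fun h ↦ absurd (Finset.mem_univ i) h), Function.update_self]
  · intro j
    rcases eq_or_ne j i with rfl | hj
    · rw [Function.update_self, hS]
    · rw [Function.update_of_ne hj, Pi.one_apply, det_one]
  · rw [toMatrices_blockMul]
    congr 1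
    funext j
    rcases eq_or_ne j i with rfl | hj
    · simp only [Function.update_self]
    · simp only [Function.update_of_ne hj, Pi.one_apply, one_smul]

/-- The degree of `toInvariant f` in the variables in a single line belonging to a vertex. -/
noncomputable def lineDegree (α : Q0 → ℕ) (ta ha : Q1 → Q0) (δ : Q1 → ℕ) (b : Bool × Q0) : ℕ :=
  blockDegree α ta ha δ b / α b.2

variable (ta ha α δ) in
/-- The block system of the invariants corresponding to the semi-invariants of multidegree `δ`. -/
noncomputable abbrev invariantBlocks : BlockSystem MatrixVar (Bool × Q0) (Option (Q1 ⊕ Q0)) :=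
  quiverBlocks α (withLoops ha) (withLoops ta) (lineDegree α ta ha δ) (loopDegree α ha δ)

lemma isWeightedHomogeneous_toInvariant [Infinite K]
    (hf : f ∈ semiInvariantsOfDegree K ta ha α δ) (o : Option (Q1 ⊕ Q0)) :
    IsWeightedHomogeneous (arrowWeight α (withLoops ha) (withLoops ta) o) (toInvariant K ta ha α f)
      (arrowTarget (loopDegree α ha δ) o) := by
  classical
  refine isWeightedHomogeneous_of_eval_pow_mul_eq fun c _ w ↦ ?_
  cases o with
  | none =>
    rw [eval_toInvariant_smul hf (p := 1) (w := w) fun e ↦ by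
      rw [toMatrices_arrowWeight_none, Pi.one_apply, one_smul]]
    simp only [Pi.one_apply, one_pow, Finset.prod_const_one, arrowTarget, pow_zero]
  | some e =>
    rw [eval_toInvariant_smul hf (toMatrices_arrowWeight_some c w e),
      Finset.prod_eq_single e (fun e' _ h ↦ by rw [if_neg h, one_pow])
      (fun h ↦ absurd (Finset.mem_univ e) h), if_pos rfl, arrowTarget]

theorem toInvariant_mem [Infinite K] (hf : f ∈ semiInvariantsOfDegree K ta ha α δ) :
    toInvariant K ta ha α f ∈ (invariantBlocks ta ha α δ).space K Set.univ Set.univ := by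
  have hdet (s : Bool) (i : Q0) (S : Matrix (Fin (α i)) (Fin (α i)) K) (hS : S.det = 1)
      (w : MatrixVar → K) :
      eval (blockMul (Q1 ⊕ Q0) s i S w) (toInvariant K ta ha α f) =
        eval w (toInvariant K ta ha α f) := by
    simpa only [one_smul, one_pow, one_mul] using eval_blockMul_toInvariant hf s i 1 hS w
  refine BlockSystem.mem_space.2 ⟨isWeightedHomogeneous_toInvariant hf, ?_, ?_⟩ <;>
    rintro ⟨s, i⟩ -
  · exact VariableArray.mem_balanced_of_eval_rowMul (hdet s i) fun b _ ↦
      eval_blockMul_toInvariant hf s i b det_one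
  · exact VariableArray.mem_shearInvariants_of_eval_rowMul (hdet s i)

end AdjugateMul

lemma map_ofMatrices {I E R S : Type*} [Fintype I] [Fintype E] {α : I → ℕ} {h t : E → I}
    [Semiring R] [Semiring S] (φ : R →+* S) (x : ∀ e, Matrix (Fin (α (h e))) (Fin (α (t e))) R)
    (u : MatrixVar) : φ (ofMatrices x u) = ofMatrices (fun e ↦ (x e).map φ) u := by
  rw [ofMatrices, ofMatrices, Function.apply_extend φ]
  exact congrFun (congrArg (Function.extend _ _) (funext fun _ ↦ map_zero φ)) u

lemma isWeightedHomogeneous_one_apply {n σ M R : Type*} [DecidableEq n] [AddCommMonoid M]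
    [CommSemiring R] {w : σ → M} (i j : n) :
    IsWeightedHomogeneous w ((1 : Matrix n n (MvPolynomial σ R)) i j) 0 := by
  rw [Matrix.one_apply]
  split_ifs
  · exact isWeightedHomogeneous_one R w
  · exact isWeightedHomogeneous_zero R w 0

section OfInvariant

variable {K Q0 Q1 : Type} [Field K] [Fintype Q0] [Fintype Q1] {ta ha : Q1 → Q0} {α : Q0 → ℕ}

/-- The point with given matrices of the arrows and of the added loops. -/
noncomputable def ofParts {R : Type*} [Zero R]
    (v : ∀ a, Matrix (Fin (α (ha a))) (Fin (α (ta a))) R)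
    (x : ∀ i, Matrix (Fin (α i)) (Fin (α i)) R) : MatrixVar → R :=
  ofMatrices (h := withLoops ha) (t := withLoops ta) (Sum.rec v x)

section

variable {R : Type*} [Semiring R] (v : ∀ a, Matrix (Fin (α (ha a))) (Fin (α (ta a))) R)
  (x : ∀ i, Matrix (Fin (α i)) (Fin (α i)) R)

lemma ofParts_coordVar_inl (a : Q1) (r : Fin (α (ha a))) (c : Fin (α (ta a))) :
    ofParts v x (coordVar α (withLoops ha) (withLoops ta) ⟨.inl a, r, c⟩) = v a r c := by
  change toMatrices α (withLoops ha) (withLoops ta) (ofParts v x) (.inl a) r c = v a r c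
  rw [ofParts, toMatrices_ofMatrices]

lemma ofParts_coordVar_inr (i : Q0) (r c : Fin (α i)) :
    ofParts v x (coordVar α (withLoops ha) (withLoops ta) ⟨.inr i, r, c⟩) = x i r c := by
  change toMatrices α (withLoops ha) (withLoops ta) (ofParts v x) (.inr i) r c = x i r c
  rw [ofParts, toMatrices_ofMatrices]

lemma map_ofParts {S : Type*} [Semiring S] (φ : R →+* S) (u : MatrixVar) :
    φ (ofParts v x u) = ofParts (fun a ↦ (v a).map φ) (fun i ↦ (x i).map φ) u := by
  refine (map_ofMatrices φ _ u).trans (congrFun (congrArg ofMatrices (funext fun e ↦ ?_)) u)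
  cases e <;> rfl

end

variable (K ta ha α) in
/-- The restriction of a polynomial to the points at which the matrices of the added loops are
identity matrices. -/
noncomputable def ofInvariant : MvPolynomial MatrixVar K →ₐ[K] MvPolynomial (Coord α ha ta) K :=
  aeval (ofParts (fun a ↦ of fun r c ↦ X ⟨a, r, c⟩) 1)

lemma eval_ofInvariant (F : MvPolynomial MatrixVar K)
    (v : ∀ a, Matrix (Fin (α (ha a))) (Fin (α (ta a))) K) :
    eval (repCoords v) (ofInvariant K ta ha α F) = eval (ofParts v 1) F := by
  rw [ofInvariant, ← aeval_eq_eval, comp_aeval_apply, aeval_eq_eval]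
  congr 2
  funext u
  refine (map_ofParts _ _ (eval (repCoords v)) u).trans ?_
  congr 1
  · funext a
    ext r c
    exact eval_X _
  · exact funext fun i ↦ Matrix.map_one _ (map_zero _) (map_one _)

lemma ofInvariant_toInvariant [Infinite K] (f : MvPolynomial (Coord α ha ta) K) :
    ofInvariant K ta ha α (toInvariant K ta ha α f) = f := by
  refine MvPolynomial.funext fun x ↦ ?_
  let v (a : Q1) : Matrix (Fin (α (ha a))) (Fin (α (ta a))) K := of fun r c ↦ x ⟨a, r, c⟩
  have hv : adjugateMul ta ha α (ofParts v 1) = v := by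
    funext a
    rw [adjugateMul, vertexMatrix, arrowMatrix, ofParts, toMatrices_ofMatrices]
    change adjugate 1 * v a = v a
    rw [adjugate_one, Matrix.one_mul]
  change eval (repCoords v) _ = eval (repCoords v) f
  rw [eval_ofInvariant, eval_toInvariant, hv]

variable {δ : Q1 → ℕ} {F : MvPolynomial MatrixVar K}

lemma isWeightedHomogeneous_ofInvariant
    (hF : F ∈ (invariantBlocks ta ha α δ).space K Set.univ Set.univ) :
    IsWeightedHomogeneous arrowDegree (ofInvariant K ta ha α F) δ := by
  classical
  refine isWeightedHomogeneous_pi_iff.2 fun a ↦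
    isWeightedHomogeneous_algHom (fun u ↦ ?_) ((BlockSystem.mem_space.1 hF).1 (some (.inl a)))
  rw [ofInvariant, aeval_X]
  have hweight : (invariantBlocks ta ha α δ).weight (some (.inl a)) u =
    arrowWeight α (withLoops ha) (withLoops ta) (some (.inl a)) u := rfl
  rw [hweight]
  by_cases hu : u ∈ Set.range (coordVar α (withLoops ha) (withLoops ta))
  · obtain ⟨⟨b | i, r, c⟩, rfl⟩ := hu
    · rw [arrowWeight_some_coordVar]
      refine (congrArg (IsWeightedHomogeneous _ · _) (ofParts_coordVar_inl _ _ b r c)).mpr ?_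
      have hdegree : (if (Sum.inl b : Q1 ⊕ Q0) = .inl a then 1 else 0) =
          arrowDegree (⟨b, r, c⟩ : Coord α ha ta) a := by
        simp only [arrowDegree, Pi.single_apply, Sum.inl.injEq, eq_comm]
      rw [hdegree]
      exact isWeightedHomogeneous_X K _ _
    · rw [arrowWeight_some_coordVar, if_neg Sum.inr_ne_inl]
      refine (congrArg (IsWeightedHomogeneous _ · _) (ofParts_coordVar_inr _ _ i r c)).mpr ?_
      exact isWeightedHomogeneous_one_apply r c
  · rw [ofParts, ofMatrices, Function.extend_apply' _ _ _ hu]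
    exact isWeightedHomogeneous_zero K _ _

lemma eval_ofInvariant_mul (hF : F ∈ (invariantBlocks ta ha α δ).space K Set.univ Set.univ)
    {A B : ∀ i, Matrix (Fin (α i)) (Fin (α i)) K} (hAB : ∀ i, A i * B i = 1)
    (v : ∀ a, Matrix (Fin (α (ha a))) (Fin (α (ta a))) K) :
    eval (repCoords fun a ↦ A (ha a) * v a * B (ta a)) (ofInvariant K ta ha α F) =
      (∏ i, (A i).det ^ lineDegree α ta ha δ (true, i)) *
        (∏ i, (B i).det ^ lineDegree α ta ha δ (false, i)) *
        eval (repCoords v) (ofInvariant K ta ha α F) := by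
  have hdet (i : Q0) : (A i).det * (B i).det = 1 := by rw [← det_mul, hAB, det_one]
  rw [eval_ofInvariant, eval_ofInvariant]
  refine eval_eq_prod_det_pow_mul hF (fun i ↦ left_ne_zero_of_mul_eq_one (hdet i))
    (fun i ↦ right_ne_zero_of_mul_eq_one (hdet i)) fun e ↦ ?_
  rw [ofParts, ofParts, toMatrices_ofMatrices, toMatrices_ofMatrices]
  cases e with
  | inl a => rfl
  | inr i => exact ((congrArg (· * B i) (Matrix.mul_one (A i))).trans (hAB i)).symm

theorem ofInvariant_mem (hF : F ∈ (invariantBlocks ta ha α δ).space K Set.univ Set.univ) :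
    ofInvariant K ta ha α F ∈ semiInvariantsOfDegree K ta ha α δ := by
  refine ⟨mem_quiverSemiInvariants.2 fun A v ↦ ?_, isWeightedHomogeneous_ofInvariant hF⟩
  rw [eval_ofInvariant_mul hF (A := fun i ↦ (A i).val) (B := fun i ↦ ((A i)⁻¹).val) fun i ↦
    congrArg Subtype.val (mul_inv_cancel (A i))]
  simp only [Matrix.SpecialLinearGroup.det_coe, one_pow, Finset.prod_const_one, one_mul]

lemma eval_eq_zero_of_ofInvariant_eq_zero
    (hF : F ∈ (invariantBlocks ta ha α δ).space K Set.univ Set.univ)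
    (h : ofInvariant K ta ha α F = 0) {w : MatrixVar → K}
    (hw : ∀ i, (vertexMatrix ta ha α w i).det ≠ 0) : eval w F = 0 := by
  let V := vertexMatrix ta ha α w
  let v (a : Q1) := (V (ha a))⁻¹ * arrowMatrix ta ha α w a
  have hzero : eval (ofParts v 1) F = 0 := by rw [← eval_ofInvariant, h, map_zero]
  rw [eval_eq_prod_det_pow_mul hF hw (B := 1) (w := ofParts v 1)
    (fun i ↦ by rw [Pi.one_apply, det_one]; exact one_ne_zero) fun e ↦ ?_, hzero, mul_zero]
  rw [ofParts, toMatrices_ofMatrices, Pi.one_apply, Matrix.mul_one]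
  cases e with
  | inl a => exact (mul_nonsing_inv_cancel_left (V (ha a)) _ (hw _).isUnit).symm
  | inr i => exact (Matrix.mul_one (V i)).symm

lemma eq_zero_of_ofInvariant_eq_zero [Infinite K]
    (hF : F ∈ (invariantBlocks ta ha α δ).space K Set.univ Set.univ)
    (h : ofInvariant K ta ha α F = 0) : F = 0 := by
  have eval_det (w : MatrixVar → K) (i : Q0) :
      eval w (vertexMatrix ta ha α X i).det = (vertexMatrix ta ha α w i).det := by
    rw [RingHom.map_det]
    congr 1
    ext
    exact eval_X _
  have hne : ∏ i, (vertexMatrix ta ha α (X (R := K)) i).det ≠ 0 := by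
    refine Finset.prod_ne_zero_iff.2 fun i _ hi ↦ zero_ne_one (α := K) ?_
    have hone : vertexMatrix ta ha α
        (ofParts 0 (1 : ∀ i, Matrix (Fin (α i)) (Fin (α i)) K)) i = 1 :=
      congrFun (toMatrices_ofMatrices _) (Sum.inr i)
    rw [← det_one (n := Fin (α i)) (R := K), ← hone, ← eval_det, hi, map_zero]
  refine (mul_eq_zero_iff_right hne).1 (MvPolynomial.funext fun w ↦ ?_)
  rw [map_mul, map_prod, map_zero]
  simp only [eval_det]
  by_cases hw : ∀ i, (vertexMatrix ta ha α w i).det ≠ 0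
  · rw [eval_eq_zero_of_ofInvariant_eq_zero hF h hw, zero_mul]
  · push Not at hw
    obtain ⟨i, hi⟩ := hw
    rw [Finset.prod_eq_zero (Finset.mem_univ i) hi, mul_zero]

theorem finiteDimensional_semiInvariantsOfDegree_and_finrank_eq [Infinite K] (δ : Q1 → ℕ) :
    FiniteDimensional K (semiInvariantsOfDegree K ta ha α δ) ∧
      Module.finrank K (semiInvariantsOfDegree K ta ha α δ) =
        ((invariantBlocks ta ha α δ).exponents Set.univ Set.univ).card := by
  have hfinite := ((invariantBlocks ta ha α δ).finiteDimensional_space_and_finrank_le (K := K)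
    (Set.Subset.refl Set.univ)).1
  let φ : semiInvariantsOfDegree K ta ha α δ →ₗ[K]
      (invariantBlocks ta ha α δ).space K Set.univ Set.univ :=
    (toInvariant K ta ha α).toLinearMap.restrict fun f hf ↦ toInvariant_mem hf
  let ψ : (invariantBlocks ta ha α δ).space K Set.univ Set.univ →ₗ[K]
      semiInvariantsOfDegree K ta ha α δ :=
    (ofInvariant K ta ha α).toLinearMap.restrict fun F hF ↦ ofInvariant_mem hF
  have hφ : Function.Injective φ := fun f g hfg ↦ Subtype.ext
    (Function.LeftInverse.injective ofInvariant_toInvariant (congrArg Subtype.val hfg))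
  have hψ : Function.Injective ψ := (injective_iff_map_eq_zero ψ).2 fun F hF ↦
    Subtype.ext (eq_zero_of_ofInvariant_eq_zero F.2 (congrArg Subtype.val hF))
  refine ⟨Module.Finite.of_injective φ hφ, ?_⟩
  rw [← BlockSystem.finrank_space_univ (K := K)]
  have := Module.Finite.of_injective φ hφ
  exact (LinearMap.finrank_le_finrank_of_injective hφ).antisymm
    (LinearMap.finrank_le_finrank_of_injective hψ)

end OfInvariant

section Components

variable {K σ M : Type*} [Field K] [AddCommMonoid M]

lemma finrank_eq_sum_finrank_inf_weightedHomogeneousSubmodule (w : σ → M)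
    {V : Submodule K (MvPolynomial σ K)} {D : Finset M}
    (hV : ∀ f ∈ V, ∀ m, weightedHomogeneousComponent w m f ∈ V)
    (hD : ∀ f ∈ V, ∀ m ∉ D, weightedHomogeneousComponent w m f = 0)
    (hfinite : ∀ m, FiniteDimensional K ↥(V ⊓ weightedHomogeneousSubmodule K w m)) :
    Module.finrank K V =
      ∑ m ∈ D, Module.finrank K ↥(V ⊓ weightedHomogeneousSubmodule K w m) := by
  classical
  let φ : V →ₗ[K] ∀ m : D, ↥(V ⊓ weightedHomogeneousSubmodule K w (m : M)) :=
    LinearMap.pi fun m ↦ (weightedHomogeneousComponent w (m : M)).restrict fun f hf ↦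
      ⟨hV f hf m, weightedHomogeneousComponent_isWeightedHomogeneous _ f⟩
  have hsum (f : V) : ∑ m : D, (φ f m : MvPolynomial σ K) = f := by
    refine Eq.trans ?_ (sum_weightedHomogeneousComponent w (f : MvPolynomial σ K))
    rw [finsum_eq_sum_of_support_subset (s := D) _ fun m hm ↦
      by_contra fun hmem ↦ hm (hD f f.2 m hmem)]
    exact Finset.sum_coe_sort D fun m ↦ weightedHomogeneousComponent w m (f : MvPolynomial σ K)
  have hφ : Function.Bijective φ := by
    refine ⟨fun f g hfg ↦ Subtype.ext (by rw [← hsum f, hfg, hsum g]), fun g ↦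
      ⟨⟨∑ m, (g m : MvPolynomial σ K), V.sum_mem fun m _ ↦ (g m).2.1⟩,
        funext fun m ↦ Subtype.ext ?_⟩⟩
    change weightedHomogeneousComponent w (m : M) (∑ m, (g m : MvPolynomial σ K)) = g m
    rw [map_sum, Finset.sum_eq_single m]
    · rw [weightedHomogeneousComponent_of_mem (g m).2.2, if_pos rfl]
    · exact fun m' _ hne ↦ by
        rw [weightedHomogeneousComponent_of_mem (g m').2.2, if_neg fun h ↦ hne (Subtype.ext h.symm)]
    · exact fun h ↦ absurd (Finset.mem_univ m) h
  rw [(LinearEquiv.ofBijective φ hφ).finrank_eq, Module.finrank_pi_fintype]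
  exact Finset.sum_coe_sort D fun m ↦ Module.finrank K ↥(V ⊓ weightedHomogeneousSubmodule K w m)

end Components

variable {K Q0 Q1 : Type} [Field K] [Fintype Q1] {ta ha : Q1 → Q0} {α : Q0 → ℕ} {δ : Q1 → ℕ}

section ArrowDegreeComponents

variable {f : MvPolynomial (Coord α ha ta) K} {d : ℕ}

lemma sum_weight_arrowDegree (μ : Coord α ha ta →₀ ℕ) :
    ∑ a, Finsupp.weight arrowDegree μ a = μ.degree := by
  classical
  simp only [Finsupp.weight_apply, Finsupp.sum, Finset.sum_apply, Pi.smul_apply, smul_eq_mul]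
  rw [Finset.sum_comm, Finsupp.degree_apply]
  refine Finset.sum_congr rfl fun y _ ↦ ?_
  simp only [← Finset.mul_sum, arrowDegree, Finset.sum_pi_single', Finset.mem_univ, if_true,
    mul_one]

lemma isHomogeneous_of_isWeightedHomogeneous_arrowDegree
    (hf : IsWeightedHomogeneous arrowDegree f δ) : IsHomogeneous f (∑ a, δ a) := by
  intro μ hμ
  rw [← hf hμ, sum_weight_arrowDegree, Finsupp.degree_eq_weight_one]
  rfl

lemma weightedHomogeneousComponent_arrowDegree_eq_zero (hf : IsHomogeneous f d)
    (hδ : ∑ a, δ a ≠ d) : weightedHomogeneousComponent arrowDegree δ f = 0 := by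
  classical
  refine weightedHomogeneousComponent_eq_zero' δ f fun μ hμ hweight ↦ hδ ?_
  rw [← hweight, sum_weight_arrowDegree, Finsupp.degree_eq_weight_one]
  exact hf (mem_support_iff.1 hμ)

open scoped Classical in
theorem finrank_inf_homogeneousSubmodule_eq_sum {V : Submodule K (MvPolynomial (Coord α ha ta) K)}
    (hV : ∀ f ∈ V, ∀ δ, weightedHomogeneousComponent arrowDegree δ f ∈ V)
    (hfinite : ∀ δ, FiniteDimensional K ↥(V ⊓ weightedHomogeneousSubmodule K arrowDegree δ))
    (d : ℕ) :
    Module.finrank K ↥(V ⊓ homogeneousSubmodule (Coord α ha ta) K d) =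
      ∑ δ ∈ Finset.piAntidiag Finset.univ d,
        Module.finrank K ↥(V ⊓ weightedHomogeneousSubmodule K arrowDegree δ) := by
  have hcomponent (f) (hf : IsHomogeneous f d) (δ : Q1 → ℕ) :
      IsHomogeneous (weightedHomogeneousComponent (arrowDegree (α := α) (ha := ha) (ta := ta))
        δ f : MvPolynomial _ K) d := by
    by_cases hδ : ∑ a, δ a = d
    · exact hδ ▸ isHomogeneous_of_isWeightedHomogeneous_arrowDegree
        (weightedHomogeneousComponent_isWeightedHomogeneous δ f)
    · rw [weightedHomogeneousComponent_arrowDegree_eq_zero hf hδ]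
      exact isHomogeneous_zero _ _ d
  rw [finrank_eq_sum_finrank_inf_weightedHomogeneousSubmodule arrowDegree
    (V := V ⊓ homogeneousSubmodule _ K d) (D := Finset.piAntidiag Finset.univ d) (fun f hf δ ↦
      ⟨hV f hf.1 δ, hcomponent f hf.2 δ⟩)]
  · refine Finset.sum_congr rfl fun δ hδ ↦ ?_
    have hle : weightedHomogeneousSubmodule K arrowDegree δ ≤
        homogeneousSubmodule (Coord α ha ta) K d := fun f hf ↦
      (Finset.mem_piAntidiag.1 hδ).1 ▸ isHomogeneous_of_isWeightedHomogeneous_arrowDegree hf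
    rw [inf_assoc, inf_eq_right.2 hle]
  · exact fun f hf δ hδ ↦ weightedHomogeneousComponent_arrowDegree_eq_zero hf.2 fun hsum ↦
      hδ (Finset.mem_piAntidiag.2 ⟨hsum, fun a _ ↦ Finset.mem_univ a⟩)
  · intro δ
    have := hfinite δ
    exact Submodule.finiteDimensional_of_le (inf_le_inf_right _ inf_le_left)

end ArrowDegreeComponents

section BaseChange

omit [Fintype Q1]

variable {L R : ∀ i, Matrix (Fin (α i)) (Fin (α i)) K} {f : MvPolynomial (Coord α ha ta) K}

variable (ta ha α L R) in
/-- The substitution of the matrices `L (ha a) * v a * R (ta a)` for the matrices `v a`. -/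
noncomputable def baseChange :
    MvPolynomial (Coord α ha ta) K →ₐ[K] MvPolynomial (Coord α ha ta) K :=
  aeval fun y ↦ ∑ c, ∑ r, C (L (ha y.1) y.2.1 r * R (ta y.1) c y.2.2) * X ⟨y.1, r, c⟩

lemma eval_baseChange (f : MvPolynomial (Coord α ha ta) K)
    (v : ∀ a, Matrix (Fin (α (ha a))) (Fin (α (ta a))) K) :
    eval (repCoords v) (baseChange ta ha α L R f) =
      eval (repCoords fun a ↦ L (ha a) * v a * R (ta a)) f := by
  rw [baseChange, ← aeval_eq_eval, comp_aeval_apply, aeval_eq_eval]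
  congr 2
  funext y
  simp only [map_sum, map_mul, aeval_C, aeval_X, repCoords, Matrix.mul_apply, Finset.sum_mul,
    Algebra.algebraMap_self, RingHom.id_apply, mul_right_comm]

lemma baseChange_eq_self_iff [Infinite K] : baseChange ta ha α L R f = f ↔
    ∀ v, eval (repCoords fun a ↦ L (ha a) * v a * R (ta a)) f = eval (repCoords v) f := by
  simp only [← eval_baseChange]
  exact ⟨fun h v ↦ by rw [h], fun h ↦
    MvPolynomial.funext fun x ↦ h fun a ↦ of fun r c ↦ x ⟨a, r, c⟩⟩

lemma weightedHomogeneousComponent_baseChange (f : MvPolynomial (Coord α ha ta) K) (δ : Q1 → ℕ) :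
    weightedHomogeneousComponent arrowDegree δ (baseChange ta ha α L R f) =
      baseChange ta ha α L R (weightedHomogeneousComponent arrowDegree δ f) := by
  refine weightedHomogeneousComponent_algHom (fun y ↦ ?_) f δ
  rw [baseChange, aeval_X]
  exact IsWeightedHomogeneous.sum _ _ _ fun c _ ↦ IsWeightedHomogeneous.sum _ _ _ fun r _ ↦
    (isWeightedHomogeneous_X K arrowDegree (⟨y.1, r, c⟩ : Coord α ha ta)).C_mul _

lemma eval_weightedHomogeneousComponent_mul_mul [Infinite K]
    (hf : ∀ v, eval (repCoords fun a ↦ L (ha a) * v a * R (ta a)) f = eval (repCoords v) f)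
    (δ : Q1 → ℕ) (v : ∀ a, Matrix (Fin (α (ha a))) (Fin (α (ta a))) K) :
    eval (repCoords fun a ↦ L (ha a) * v a * R (ta a))
        (weightedHomogeneousComponent arrowDegree δ f) =
      eval (repCoords v) (weightedHomogeneousComponent arrowDegree δ f) := by
  rw [← eval_baseChange, ← weightedHomogeneousComponent_baseChange,
    baseChange_eq_self_iff.2 hf]

lemma mem_quiverInvariants : f ∈ quiverInvariants K ta ha α ↔
    ∀ (A : ∀ i, Matrix.GeneralLinearGroup (Fin (α i)) K)
      (v : ∀ a, Matrix (Fin (α (ha a))) (Fin (α (ta a))) K),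
      eval (repCoords fun a ↦ (A (ha a)).val * v a * ((A (ta a))⁻¹).val) f =
        eval (repCoords v) f := by
  simp only [quiverInvariants, Algebra.mem_iInf, AlgHom.mem_equalizer, aeval_eq_eval]

lemma quiverInvariants_le_quiverSemiInvariants :
    quiverInvariants K ta ha α ≤ quiverSemiInvariants K ta ha α := fun _ hf ↦
  mem_quiverSemiInvariants.2 fun A ↦ mem_quiverInvariants.1 hf fun i ↦
    ⟨(A i).val, ((A i)⁻¹).val, congrArg Subtype.val (mul_inv_cancel (A i)),
      congrArg Subtype.val (inv_mul_cancel (A i))⟩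

lemma quiverInvariants_inf_weightedHomogeneousSubmodule_le (δ : Q1 → ℕ) :
    Subalgebra.toSubmodule (quiverInvariants K ta ha α) ⊓
      weightedHomogeneousSubmodule K arrowDegree δ ≤ semiInvariantsOfDegree K ta ha α δ :=
  inf_le_inf_right _ quiverInvariants_le_quiverSemiInvariants

lemma weightedHomogeneousComponent_mem_quiverSemiInvariants [Infinite K]
    (hf : f ∈ quiverSemiInvariants K ta ha α) (δ : Q1 → ℕ) :
    weightedHomogeneousComponent arrowDegree δ f ∈ quiverSemiInvariants K ta ha α := by
  rw [mem_quiverSemiInvariants] at hf ⊢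
  exact fun A v ↦ eval_weightedHomogeneousComponent_mul_mul (L := fun i ↦ (A i).val)
    (R := fun i ↦ ((A i)⁻¹).val) (hf A) δ v

lemma weightedHomogeneousComponent_mem_quiverInvariants [Infinite K]
    (hf : f ∈ quiverInvariants K ta ha α) (δ : Q1 → ℕ) :
    weightedHomogeneousComponent arrowDegree δ f ∈ quiverInvariants K ta ha α := by
  rw [mem_quiverInvariants] at hf ⊢
  exact fun A v ↦ eval_weightedHomogeneousComponent_mul_mul (L := fun i ↦ (A i).val)
    (R := fun i ↦ ((A i)⁻¹).val) (hf A) δ v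

end BaseChange

section GeneralLinear

variable [Infinite K] {f : MvPolynomial (Coord α ha ta) K}

variable [Fintype Q0]

lemma eval_mul_mul_of_mem_semiInvariantsOfDegree (hf : f ∈ semiInvariantsOfDegree K ta ha α δ)
    {A B : ∀ i, Matrix (Fin (α i)) (Fin (α i)) K} (hAB : ∀ i, A i * B i = 1)
    (v : ∀ a, Matrix (Fin (α (ha a))) (Fin (α (ta a))) K) :
    eval (repCoords fun a ↦ A (ha a) * v a * B (ta a)) f =
      (∏ i, (A i).det ^ lineDegree α ta ha δ (true, i)) *
        (∏ i, (B i).det ^ lineDegree α ta ha δ (false, i)) * eval (repCoords v) f := by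
  simpa only [ofInvariant_toInvariant] using eval_ofInvariant_mul (toInvariant_mem hf) hAB v

omit [Fintype Q0] in
lemma mem_quiverInvariants_of_lineDegree_eq [Finite Q0]
    (hf : f ∈ semiInvariantsOfDegree K ta ha α δ)
    (hδ : ∀ i, lineDegree α ta ha δ (true, i) = lineDegree α ta ha δ (false, i)) :
    f ∈ quiverInvariants K ta ha α := by
  have := Fintype.ofFinite Q0
  refine mem_quiverInvariants.2 fun A v ↦ ?_
  have hinv (i : Q0) : (A i).val * ((A i)⁻¹).val = 1 := (A i).mul_inv
  rw [eval_mul_mul_of_mem_semiInvariantsOfDegree hf hinv, ← Finset.prod_mul_distrib,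
    Finset.prod_eq_one fun i _ ↦ ?_, one_mul]
  rw [hδ, ← mul_pow, ← det_mul, hinv, det_one, one_pow]

omit [Infinite K] in
lemma exists_generalLinearGroup_prod_det_pow_eq {i : Q0} (hi : 0 < α i) {c : K} (hc : c ≠ 0) :
    ∃ A : ∀ j, Matrix.GeneralLinearGroup (Fin (α j)) K,
      ∀ k : Q0 → ℕ, ∏ j, (A j).val.det ^ k j = c ^ k i := by
  classical
  let D : Matrix (Fin (α i)) (Fin (α i)) K := diagonal (Function.update 1 ⟨0, hi⟩ c)
  have hD : D.det = c := det_diagonal_update _ _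
  refine ⟨Function.update 1 i (.mkOfDetNeZero D (hD.trans_ne hc)), fun k ↦ ?_⟩
  rw [Finset.prod_eq_single i
    (fun j _ hj ↦ by rw [Function.update_of_ne hj, Pi.one_apply, Units.val_one, det_one, one_pow])
    (fun h ↦ absurd (Finset.mem_univ i) h), Function.update_self]
  exact congrArg (· ^ k i) hD

omit [Fintype Q0] in
lemma lineDegree_eq_of_mem_quiverInvariants [Finite Q0]
    (hf : f ∈ semiInvariantsOfDegree K ta ha α δ) (hinv : f ∈ quiverInvariants K ta ha α)
    (hne : f ≠ 0) (i : Q0) :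
    lineDegree α ta ha δ (true, i) = lineDegree α ta ha δ (false, i) := by
  have := Fintype.ofFinite Q0
  rcases Nat.eq_zero_or_pos (α i) with hi | hi
  · rw [lineDegree, lineDegree, hi, Nat.div_zero, Nat.div_zero]
  obtain ⟨x, hx⟩ : ∃ x, eval x f ≠ 0 := by
    by_contra! h
    exact hne (MvPolynomial.funext fun x ↦ by rw [h x, map_zero])
  refine eq_of_forall_pow_eq_pow (R := K) fun c hc ↦ ?_
  obtain ⟨A, hA⟩ := exists_generalLinearGroup_prod_det_pow_eq hi hc
  have hA_inv (k : Q0 → ℕ) : ∏ j, ((A j)⁻¹).val.det ^ k j = (c ^ k i)⁻¹ := by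
    simp only [← hA, coe_units_inv, det_nonsing_inv, Ring.inverse_eq_inv', inv_pow,
      Finset.prod_inv_distrib]
  have hfixed := mem_quiverInvariants.1 hinv A fun a ↦ of fun r c ↦ x ⟨a, r, c⟩
  rw [eval_mul_mul_of_mem_semiInvariantsOfDegree hf fun j ↦ (A j).mul_inv,
    hA fun j ↦ lineDegree α ta ha δ (true, j), hA_inv fun j ↦ lineDegree α ta ha δ (false, j)]
    at hfixed
  exact (mul_inv_eq_one₀ (pow_ne_zero _ hc)).1 ((mul_eq_right₀ hx).1 hfixed)

open scoped Classical in
theorem finrank_quiverSemiInvariants_inf_homogeneousSubmodule (d : ℕ) :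
    Module.finrank K ↥(Subalgebra.toSubmodule (quiverSemiInvariants K ta ha α) ⊓
        homogeneousSubmodule (Coord α ha ta) K d) =
      ∑ δ ∈ Finset.piAntidiag Finset.univ d,
        ((invariantBlocks ta ha α δ).exponents Set.univ Set.univ).card := by
  rw [finrank_inf_homogeneousSubmodule_eq_sum
    (fun f hf δ ↦ weightedHomogeneousComponent_mem_quiverSemiInvariants hf δ)
    (fun δ ↦ (finiteDimensional_semiInvariantsOfDegree_and_finrank_eq δ).1)]
  exact Finset.sum_congr rfl fun δ _ ↦
    (finiteDimensional_semiInvariantsOfDegree_and_finrank_eq δ).2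

open scoped Classical in
lemma finrank_quiverInvariants_inf_weightedHomogeneousSubmodule (δ : Q1 → ℕ) :
    Module.finrank K ↥(Subalgebra.toSubmodule (quiverInvariants K ta ha α) ⊓
        weightedHomogeneousSubmodule K arrowDegree δ) =
      if ∀ i, lineDegree α ta ha δ (true, i) = lineDegree α ta ha δ (false, i) then
        ((invariantBlocks ta ha α δ).exponents Set.univ Set.univ).card else 0 := by
  have hle := quiverInvariants_inf_weightedHomogeneousSubmodule_le (K := K) (ta := ta) (ha := ha)
    (α := α) δ
  split_ifs with hδ
  · rw [← (finiteDimensional_semiInvariantsOfDegree_and_finrank_eq (K := K) δ).2,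
      hle.antisymm fun f hf ↦ ⟨mem_quiverInvariants_of_lineDegree_eq hf hδ, hf.2⟩]
  · have hbot : Subalgebra.toSubmodule (quiverInvariants K ta ha α) ⊓
        weightedHomogeneousSubmodule K arrowDegree δ = ⊥ :=
      (Submodule.eq_bot_iff _).2 fun f hf ↦ by_contra fun hne ↦
        hδ (lineDegree_eq_of_mem_quiverInvariants (hle hf) hf.1 hne)
    rw [hbot, finrank_bot]

open scoped Classical in
theorem finrank_quiverInvariants_inf_homogeneousSubmodule (d : ℕ) :
    Module.finrank K ↥(Subalgebra.toSubmodule (quiverInvariants K ta ha α) ⊓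
        homogeneousSubmodule (Coord α ha ta) K d) =
      ∑ δ ∈ Finset.piAntidiag Finset.univ d,
        if ∀ i, lineDegree α ta ha δ (true, i) = lineDegree α ta ha δ (false, i) then
          ((invariantBlocks ta ha α δ).exponents Set.univ Set.univ).card else 0 := by
  rw [finrank_inf_homogeneousSubmodule_eq_sum
    (fun f hf δ ↦ weightedHomogeneousComponent_mem_quiverInvariants hf δ) fun δ ↦ ?_]
  · exact Finset.sum_congr rfl fun δ _ ↦
      finrank_quiverInvariants_inf_weightedHomogeneousSubmodule δ
  · have := (finiteDimensional_semiInvariantsOfDegree_and_finrank_eq (K := K) (ta := ta) (ha := ha)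
      (α := α) δ).1
    exact Submodule.finiteDimensional_of_le (quiverInvariants_inf_weightedHomogeneousSubmodule_le δ)

end GeneralLinear

end QuiverInvariants

open QuiverInvariants in
theorem stmt_14_general (K L : Type) [Field K] [Infinite K] [Field L] [Infinite L]
    {Q0 Q1 : Type} [Finite Q0] [Finite Q1] (ta ha : Q1 → Q0) (α : Q0 → ℕ) (d : ℕ) :
    Module.finrank K ↥(Subalgebra.toSubmodule (quiverSemiInvariants K ta ha α) ⊓
          homogeneousSubmodule ((a : Q1) × (Fin (α (ha a)) × Fin (α (ta a)))) K d)
        = Module.finrank L ↥(Subalgebra.toSubmodule (quiverSemiInvariants L ta ha α) ⊓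
          homogeneousSubmodule ((a : Q1) × (Fin (α (ha a)) × Fin (α (ta a)))) L d) ∧
      Module.finrank K ↥(Subalgebra.toSubmodule (quiverInvariants K ta ha α) ⊓
          homogeneousSubmodule ((a : Q1) × (Fin (α (ha a)) × Fin (α (ta a)))) K d)
        = Module.finrank L ↥(Subalgebra.toSubmodule (quiverInvariants L ta ha α) ⊓
          homogeneousSubmodule ((a : Q1) × (Fin (α (ha a)) × Fin (α (ta a)))) L d) := by
  cases nonempty_fintype Q0
  cases nonempty_fintype Q1
  exact ⟨(finrank_quiverSemiInvariants_inf_homogeneousSubmodule d).trans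
      (finrank_quiverSemiInvariants_inf_homogeneousSubmodule d).symm,
    (finrank_quiverInvariants_inf_homogeneousSubmodule d).trans
      (finrank_quiverInvariants_inf_homogeneousSubmodule d).symm⟩

/-- The Hilbert series of `SI(Q,α)` and `I(Q,α)` are independent of the
underlying algebraically closed field: for every degree `d`, the dimensions of the degree-`d`
homogeneous components over `K` and over `L` agree. -/
theorem stmt_14 (K L : Type) [Field K] [IsAlgClosed K] [Field L] [IsAlgClosed L]
    {Q0 Q1 : Type} [Fintype Q0] [Fintype Q1] (ta ha : Q1 → Q0) (α : Q0 → ℕ) (d : ℕ) :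
    Module.finrank K ↥(Subalgebra.toSubmodule (quiverSemiInvariants K ta ha α) ⊓
          homogeneousSubmodule ((a : Q1) × (Fin (α (ha a)) × Fin (α (ta a)))) K d)
        = Module.finrank L ↥(Subalgebra.toSubmodule (quiverSemiInvariants L ta ha α) ⊓
          homogeneousSubmodule ((a : Q1) × (Fin (α (ha a)) × Fin (α (ta a)))) L d) ∧
      Module.finrank K ↥(Subalgebra.toSubmodule (quiverInvariants K ta ha α) ⊓
          homogeneousSubmodule ((a : Q1) × (Fin (α (ha a)) × Fin (α (ta a)))) K d)
        = Module.finrank L ↥(Subalgebra.toSubmodule (quiverInvariants L ta ha α) ⊓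
          homogeneousSubmodule ((a : Q1) × (Fin (α (ha a)) × Fin (α (ta a)))) L d) := by
  have : Infinite K := IsAlgClosed.instInfinite
  have : Infinite L := IsAlgClosed.instInfinite
  exact stmt_14_general K L ta ha α d
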